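/- Let μ ∈ M¹₊(Ω) with reduced measure μ*, and let E ⊂ Ω be a Borel set. Then the reduced measure of the restriction μ⌞E (defined by (μ⌞E)(A) = μ(E ∩ A) for Borel A ⊂ Ω) equals the restriction of μ* to E: (μ⌞E)* = μ*⌞E. -/

import Mathlib

open MeasureTheory Set Filter Topology
open scoped ENNReal NNReal

noncomputable section

/-- Euclidean space `ℝ^N`. -/
abbrev Euc (N : ℕ) : Type := EuclideanSpace ℝ (Fin N)

/-- `ρ(x) = dist(x, ∂Ω)`, realized as the distance from `x` to the complement of `Ω`. -/
def rho {N : ℕ} (Ω : Set (Euc N)) (x : Euc N) : ℝ := Metric.infDist x Ωᶜ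

/-- The Laplacian (in the space variable) of `f : ℝ^N → ℝ`. -/
def lap {N : ℕ} (f : Euc N → ℝ) (x : Euc N) : ℝ :=
  ∑ i : Fin N, fderiv ℝ (fun y => fderiv ℝ f y (EuclideanSpace.single i 1)) x
    (EuclideanSpace.single i 1)

/-- The parabolic cylinder `Q_T = Ω × (0,T)`. -/
def QT {N : ℕ} (Ω : Set (Euc N)) (T : ℝ) : Set (Euc N × ℝ) := Ω ×ˢ Ioo 0 T

/-- `∂_t ζ + Δ ζ` for a function `ζ(x,t)` (curried). -/
def heatAdj {N : ℕ} (ζ : Euc N → ℝ → ℝ) (p : Euc N × ℝ) : ℝ :=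
  deriv (ζ p.1) p.2 + lap (fun y => ζ y p.2) p.1

/-- `C^{2,1}` regularity: `ζ`, `∂_t ζ`, `∇_x ζ` and `D²_x ζ` exist and are continuous. -/
def C21 {N : ℕ} (ζ : Euc N → ℝ → ℝ) : Prop :=
  Continuous (fun p : Euc N × ℝ => ζ p.1 p.2) ∧
  (∀ (x : Euc N) (t : ℝ), DifferentiableAt ℝ (ζ x) t) ∧
  Continuous (fun p : Euc N × ℝ => deriv (ζ p.1) p.2) ∧
  (∀ (t : ℝ) (x : Euc N), DifferentiableAt ℝ (fun y => ζ y t) x) ∧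
  Continuous (fun p : Euc N × ℝ => fderiv ℝ (fun y => ζ y p.2) p.1) ∧
  (∀ (t : ℝ) (x : Euc N), DifferentiableAt ℝ (fun y => fderiv ℝ (fun z => ζ z t) y) x) ∧
  Continuous (fun p : Euc N × ℝ => fderiv ℝ (fun y => fderiv ℝ (fun z => ζ z p.2) y) p.1)

/-- Membership in `C^{2,1}_{ℓ,0}(Q̄_T)` : `C^{2,1}` regularity together with
vanishing on `∂Ω × [0,T] ∪ Ω̄ × {T}`. -/
def TestZero {N : ℕ} (Ω : Set (Euc N)) (T : ℝ) (ζ : Euc N → ℝ → ℝ) : Prop :=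
  C21 ζ ∧ (∀ x ∈ frontier Ω, ∀ t ∈ Icc (0:ℝ) T, ζ x t = 0) ∧
  (∀ x ∈ closure Ω, ζ x T = 0)

/-- `g : ℝ → ℝ` continuous, nondecreasing and vanishing on `(-∞,0]`. -/
def GoodG (g : ℝ → ℝ) : Prop := Continuous g ∧ Monotone g ∧ ∀ r : ℝ, r ≤ 0 → g r = 0

/-- `μ ∈ M¹₊(Ω)` : a positive Radon measure on `Ω` with `∫_Ω ρ dμ < ∞`. -/
def MemM1 {N : ℕ} (Ω : Set (Euc N)) (μ : Measure (Euc N)) : Prop :=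
  μ Ωᶜ = 0 ∧ (∀ K : Set (Euc N), K ⊆ Ω → IsCompact K → μ K < ⊤) ∧
  (∫⁻ x, ENNReal.ofReal (rho Ω x) ∂μ) < ⊤

/-- A positive Radon measure on the (open) set `U`. -/
def RadonOn {N : ℕ} (U : Set (Euc N)) (ν : Measure (Euc N)) : Prop :=
  ν Uᶜ = 0 ∧ ∀ K : Set (Euc N), K ⊆ U → IsCompact K → ν K < ⊤

/-- Weak solution of `(P_μ)` : `∂_t u - Δu + g(u) = 0` in `Q_T`, `u = 0` on
`∂Ω × (0,T)`, `u(·,0) = μ`. -/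
def WeakSol {N : ℕ} (Ω : Set (Euc N)) (T : ℝ) (g : ℝ → ℝ) (μ : Measure (Euc N))
    (u : Euc N × ℝ → ℝ) : Prop :=
  IntegrableOn u (QT Ω T) ∧
  IntegrableOn (fun p => g (u p) * rho Ω p.1) (QT Ω T) ∧
  ∀ ζ : Euc N → ℝ → ℝ, TestZero Ω T ζ →
    (∫ p in QT Ω T,
      (-(u p) * deriv (ζ p.1) p.2 - u p * lap (fun y => ζ y p.2) p.1 + ζ p.1 p.2 * g (u p)))
      = ∫ x, ζ x 0 ∂μ

/-- Weak subsolution of `(P_μ)`. -/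
def WeakSubSol {N : ℕ} (Ω : Set (Euc N)) (T : ℝ) (g : ℝ → ℝ) (μ : Measure (Euc N))
    (u : Euc N × ℝ → ℝ) : Prop :=
  IntegrableOn u (QT Ω T) ∧
  IntegrableOn (fun p => g (u p) * rho Ω p.1) (QT Ω T) ∧
  ∀ ζ : Euc N → ℝ → ℝ, TestZero Ω T ζ → (∀ x t, 0 ≤ ζ x t) →
    (∫ p in QT Ω T,
      (-(u p) * deriv (ζ p.1) p.2 - u p * lap (fun y => ζ y p.2) p.1 + ζ p.1 p.2 * g (u p)))
      ≤ ∫ x, ζ x 0 ∂μ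

/-- `μ` is a good measure relative to `g` : `(P_μ)` admits a weak solution. -/
def GoodMeasure {N : ℕ} (Ω : Set (Euc N)) (T : ℝ) (g : ℝ → ℝ) (μ : Measure (Euc N)) : Prop :=
  ∃ u, WeakSol Ω T g μ u

/-- Essential limit of `F(t)` as `t → 0⁺` equals `L`. -/
def EssLimInit (F : ℝ → ℝ) (L : ℝ) : Prop :=
  Tendsto F ((𝓝[>] (0:ℝ)) ⊓ (ae (volume : Measure ℝ))) (𝓝 L)

/-- Essential limit of `F(t)` as `t → 0⁺` is `+∞`. -/
def EssLimInitTop (F : ℝ → ℝ) : Prop :=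
  Tendsto F ((𝓝[>] (0:ℝ)) ⊓ (ae (volume : Measure ℝ))) atTop

/-- `ν` is the initial trace of `u` on `U ⊆ Ω` : for every `φ ∈ C_c(U)`,
`ess lim_{t→0} ∫_Ω u(·,t) φ dx = ∫ φ dν`. -/
def InitTraceOn {N : ℕ} (Ω U : Set (Euc N)) (u : Euc N × ℝ → ℝ) (ν : Measure (Euc N)) : Prop :=
  ∀ φ : Euc N → ℝ, Continuous φ → HasCompactSupport φ → tsupport φ ⊆ U →
    EssLimInit (fun t => ∫ x in Ω, u (x, t) * φ x) (∫ x, φ x ∂ν)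

/-- `μstar` is the reduced measure of `μ` : the largest good measure `≤ μ`. -/
def IsReducedMeasure {N : ℕ} (Ω : Set (Euc N)) (T : ℝ) (g : ℝ → ℝ)
    (μ μstar : Measure (Euc N)) : Prop :=
  MemM1 Ω μstar ∧ μstar ≤ μ ∧ GoodMeasure Ω T g μstar ∧
  ∀ ν : Measure (Euc N), MemM1 Ω ν → GoodMeasure Ω T g ν → ν ≤ μ → ν ≤ μstar

/-- The `N`-dimensional Hausdorff measure on `ℝ^N`. -/
def hausN {N : ℕ} : Measure (Euc N) := MeasureTheory.Measure.hausdorffMeasure (N : ℝ)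

/-!
The measure `ν` is good and `ν ≤ μ`, so `ν ≤ μ*`; being concentrated on `E`, it is at most `μ*⌞E`.
The converse rests on the fact that a finite measure `κ ≤ λ` concentrated on a compact subset of
`Ω` is good as soon as `λ` is: for `κ = μ*⌞(E ∩ {ρ ≥ 1 / (m + 1)})` this gives `κ ≤ ν`, and then
`m → ∞`.

To solve the problem with initial measure `κ`, penalise on the whole space: let `u_n` solve
`∂_t u - Δu + b_n(x, u) = 0`, where `b_n` is the largest `n`-Lipschitz minorant of `g` inside `Ω`
and `n s⁺` outside. By Kato's inequality `0 ≤ u_{n + 1} ≤ u_n`, and the penalisation forces the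
limit to vanish outside `Ω`. The absorption terms converge in `L¹`: away from the support of `κ` at
time `0` the heat potential of `κ` is bounded, and near it, for small times, comparison with the
solution issued from `λ` provides a majorant. Finally, cutoffs in space and time carry the weak
equation from test functions of compact support to those vanishing on the lateral boundary and at
time `T`.
-/

open scoped ContDiff

/-! ### Line derivatives and integration by parts -/

section LineDeriv

variable {E : Type*} [NormedAddCommGroup E] [NormedSpace ℝ E] {f g : E → ℝ} {a b : ℝ} {x v : E}

lemma hasLineDerivAt_add (hf : HasLineDerivAt ℝ f a x v) (hg : HasLineDerivAt ℝ g b x v) :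
    HasLineDerivAt ℝ (fun y => f y + g y) (a + b) x v :=
  HasDerivAt.add (hf : HasDerivAt _ _ _) (hg : HasDerivAt _ _ _)

lemma hasLineDerivAt_mul (hf : HasLineDerivAt ℝ f a x v) (hg : HasLineDerivAt ℝ g b x v) :
    HasLineDerivAt ℝ (fun y => f y * g y) (a * g x + f x * b) x v := by
  have hmul := HasDerivAt.mul (hf : HasDerivAt _ _ _) (hg : HasDerivAt _ _ _)
  simp only [zero_smul, add_zero] at hmul
  exact hmul

lemma hasLineDerivAt_comp {j : ℝ → ℝ} {j' : ℝ} (hj : HasDerivAt j j' (f x))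
    (hf : HasLineDerivAt ℝ f a x v) : HasLineDerivAt ℝ (fun y => j (f y)) (j' * a) x v := by
  have hj₀ : HasDerivAt j j' (f (x + (0 : ℝ) • v)) := by simpa using hj
  exact HasDerivAt.comp (h₂ := j) (0 : ℝ) hj₀ hf

lemma hasLineDerivAt_comp_add_right (y : E) (hf : HasLineDerivAt ℝ f a (x + y) v) :
    HasLineDerivAt ℝ (fun z => f (z + y)) a x v := by
  unfold HasLineDerivAt at hf ⊢
  simpa only [add_right_comm] using hf

lemma lineDeriv_eq_zero_of_notMem_tsupport (hf : HasLineDerivAt ℝ f a x v)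
    (hx : x ∉ tsupport f) : a = 0 := by
  have hzero : f =ᶠ[𝓝 x] fun _ => 0 := notMem_tsupport_iff_eventuallyEq.1 hx
  have hconst : HasLineDerivAt ℝ (fun _ : E => (0 : ℝ)) 0 x v := hasDerivAt_const _ _
  exact (hf.congr_of_eventuallyEq hzero.symm).unique hconst

lemma integral_mul_eq_neg_of_hasLineDerivAt [FiniteDimensional ℝ E] [MeasurableSpace E]
    [BorelSpace E] {μ : Measure E} [μ.IsAddHaarMeasure] {f' g' : E → ℝ}
    (hf : Continuous f) (hg : Continuous g) (hf' : Continuous f') (hg' : Continuous g')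
    (hgc : HasCompactSupport g) (hgc' : HasCompactSupport g')
    (hff' : ∀ y, HasLineDerivAt ℝ f (f' y) y v) (hgg' : ∀ y, HasLineDerivAt ℝ g (g' y) y v) :
    ∫ y, f y * g' y ∂μ = -∫ y, f' y * g y ∂μ :=
  integral_bilinear_hasLineDerivAt_right_eq_neg_left_of_integrable
    (B := ContinuousLinearMap.mul ℝ ℝ)
    ((hf'.mul hg).integrable_of_hasCompactSupport hgc.mul_left)
    ((hf.mul hg').integrable_of_hasCompactSupport hgc'.mul_left)
    ((hf.mul hg).integrable_of_hasCompactSupport hgc.mul_left)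
    (fun y _ => hff' y) (fun y _ => hgg' y)

end LineDeriv

/-! ### Jets for the backward heat operator -/

/-- Space-time `ℝ^N × ℝ`, with points `(x, t)`. -/
abbrev SpaceTime (N : ℕ) : Type := Euc N × ℝ

/-- The unit vector of space-time in the time direction. -/
def timeDir (N : ℕ) : SpaceTime N := (0, 1)

/-- The unit vector of space-time in the `i`-th spatial direction. -/
def spaceDir {N : ℕ} (i : Fin N) : SpaceTime N := (EuclideanSpace.single i 1, 0)

/-- Continuous derivatives `∂_t φ`, `∂_i φ` and `∂_i² φ` of a function `φ` on space-time: what is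
needed to apply the backward heat operator to `φ`. The derivatives are data, taken along lines, so
that those of products and compositions hold by definition and no mixed derivative is needed. -/
structure HeatJet {N : ℕ} (φ : SpaceTime N → ℝ) where
  dt : SpaceTime N → ℝ
  d1 : Fin N → SpaceTime N → ℝ
  d2 : Fin N → SpaceTime N → ℝ
  cont : Continuous φ
  cont_dt : Continuous dt
  cont_d1 : ∀ i, Continuous (d1 i)
  cont_d2 : ∀ i, Continuous (d2 i)
  line_dt : ∀ p, HasLineDerivAt ℝ φ (dt p) p (timeDir N)
  line_d1 : ∀ i p, HasLineDerivAt ℝ φ (d1 i p) p (spaceDir i)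
  line_d2 : ∀ i p, HasLineDerivAt ℝ (d1 i) (d2 i p) p (spaceDir i)

section Slices

variable {N : ℕ} {f : SpaceTime N → ℝ} {a : ℝ} {x : Euc N} {t : ℝ} {i : Fin N}

lemma hasLineDerivAt_timeDir_iff :
    HasLineDerivAt ℝ f a (x, t) (timeDir N) ↔ HasDerivAt (fun s => f (x, s)) a t := by
  have hline : (fun s : ℝ => f ((x, t) + s • timeDir N)) = fun s => f (x, t + s) := by
    funext s; simp [timeDir]
  rw [HasLineDerivAt, hline]
  constructor
  · intro h
    have hshift : HasDerivAt (fun s => f (x, t + s)) a (t - t) := by simpa using h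
    simpa using HasDerivAt.comp_sub_const t t hshift
  · intro h
    exact HasDerivAt.comp_const_add (f := fun s => f (x, s)) t 0 (by simpa using h)

lemma hasLineDerivAt_slice (h : HasLineDerivAt ℝ f a (x, t) (spaceDir i)) :
    HasLineDerivAt ℝ (fun y => f (y, t)) a x (EuclideanSpace.single i 1) := by
  unfold HasLineDerivAt spaceDir at *
  simpa using h

lemma hasLineDerivAt_spaceDir {L : Euc N →L[ℝ] ℝ} (h : HasFDerivAt (fun y => f (y, t)) L x) :
    HasLineDerivAt ℝ f (L (EuclideanSpace.single i 1)) (x, t) (spaceDir i) := by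
  have hline := h.hasLineDerivAt (EuclideanSpace.single i 1)
  unfold HasLineDerivAt spaceDir at *
  simpa using hline

lemma hasFDerivAt_slice {F : Type*} [NormedAddCommGroup F] [NormedSpace ℝ F]
    {Φ : SpaceTime N → F} (hΦ : Differentiable ℝ Φ) (p : SpaceTime N) :
    HasFDerivAt (fun y => Φ (y, p.2))
      ((fderiv ℝ Φ p).comp (ContinuousLinearMap.inl ℝ (Euc N) ℝ)) p.1 :=
  HasFDerivAt.comp (f := fun y : Euc N => (y, p.2)) p.1 (hΦ p).hasFDerivAt
    (hasFDerivAt_prodMk_left p.1 p.2)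

lemma hasCompactSupport_slice (hf : HasCompactSupport f) (t : ℝ) :
    HasCompactSupport (fun x => f (x, t)) := by
  refine HasCompactSupport.intro (hf.isCompact.image continuous_fst) fun x hx => ?_
  by_contra hne
  exact hx ⟨(x, t), subset_tsupport _ hne, rfl⟩

end Slices

section Smooth

variable {E F : Type*} [NormedAddCommGroup E] [NormedSpace ℝ E]
  [NormedAddCommGroup F] [NormedSpace ℝ F]

lemma contDiff_fderiv_apply {f : E → F} (hf : ContDiff ℝ ∞ f) (v : E) :
    ContDiff ℝ ∞ (fun x => fderiv ℝ f x v) :=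
  (hf.fderiv_right (m := ∞) (by simp)).clm_apply contDiff_const

lemma continuous_fderiv_apply {f : E → F} (hf : ContDiff ℝ ∞ f) (v : E) :
    Continuous (fun x => fderiv ℝ f x v) :=
  (contDiff_fderiv_apply hf v).continuous

end Smooth

namespace HeatJet

variable {N : ℕ} {φ ψ : SpaceTime N → ℝ}

/-- The spatial Laplacian `Δφ` read off a jet of `φ`. -/
def laplacian (h : HeatJet φ) (p : SpaceTime N) : ℝ := ∑ i, h.d2 i p

/-- The backward heat operator `∂_t φ + Δφ` read off a jet of `φ`. -/
def adjHeat (h : HeatJet φ) (p : SpaceTime N) : ℝ := h.dt p + h.laplacian p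

lemma continuous_laplacian (h : HeatJet φ) : Continuous h.laplacian := by
  unfold laplacian
  exact continuous_finsetSum _ fun i _ => h.cont_d2 i

lemma continuous_adjHeat (h : HeatJet φ) : Continuous h.adjHeat :=
  h.cont_dt.add h.continuous_laplacian

lemma adjHeat_unique (h k : HeatJet φ) : h.adjHeat = k.adjHeat := by
  have hd1 : h.d1 = k.d1 := by
    funext i p
    exact (h.line_d1 i p).unique (k.line_d1 i p)
  have hd2 : h.d2 = k.d2 := by
    funext i p
    exact (h.line_d2 i p).unique (hd1 ▸ k.line_d2 i p)
  funext p
  simp only [adjHeat, laplacian, hd2, (h.line_dt p).unique (k.line_dt p)]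

/-- The Leibniz rule: a jet of a product. -/
def mul (h : HeatJet φ) (k : HeatJet ψ) : HeatJet (fun p => φ p * ψ p) where
  dt p := h.dt p * ψ p + φ p * k.dt p
  d1 i p := h.d1 i p * ψ p + φ p * k.d1 i p
  d2 i p := (h.d2 i p * ψ p + h.d1 i p * k.d1 i p) + (h.d1 i p * k.d1 i p + φ p * k.d2 i p)
  cont := h.cont.mul k.cont
  cont_dt := (h.cont_dt.mul k.cont).add (h.cont.mul k.cont_dt)
  cont_d1 i := ((h.cont_d1 i).mul k.cont).add (h.cont.mul (k.cont_d1 i))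
  cont_d2 i := (((h.cont_d2 i).mul k.cont).add ((h.cont_d1 i).mul (k.cont_d1 i))).add
    (((h.cont_d1 i).mul (k.cont_d1 i)).add (h.cont.mul (k.cont_d2 i)))
  line_dt p := hasLineDerivAt_mul (h.line_dt p) (k.line_dt p)
  line_d1 i p := hasLineDerivAt_mul (h.line_d1 i p) (k.line_d1 i p)
  line_d2 i p := hasLineDerivAt_add (hasLineDerivAt_mul (h.line_d2 i p) (k.line_d1 i p))
    (hasLineDerivAt_mul (h.line_d1 i p) (k.line_d2 i p))

/-- The chain rule: a jet of `j ∘ φ` for a `C²` function `j` of one variable. -/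
def comp (h : HeatJet φ) {j j' j'' : ℝ → ℝ} (hj : ∀ s, HasDerivAt j (j' s) s)
    (hj' : ∀ s, HasDerivAt j' (j'' s) s) (hj'' : Continuous j'') :
    HeatJet (fun p => j (φ p)) :=
  have cj : Continuous j := continuous_iff_continuousAt.2 fun s => (hj s).continuousAt
  have cj' : Continuous j' := continuous_iff_continuousAt.2 fun s => (hj' s).continuousAt
  { dt := fun p => j' (φ p) * h.dt p
    d1 := fun i p => j' (φ p) * h.d1 i p
    d2 := fun i p => (j'' (φ p) * h.d1 i p) * h.d1 i p + j' (φ p) * h.d2 i p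
    cont := cj.comp h.cont
    cont_dt := (cj'.comp h.cont).mul h.cont_dt
    cont_d1 := fun i => (cj'.comp h.cont).mul (h.cont_d1 i)
    cont_d2 := fun i => (((hj''.comp h.cont).mul (h.cont_d1 i)).mul (h.cont_d1 i)).add
      ((cj'.comp h.cont).mul (h.cont_d2 i))
    line_dt := fun p => hasLineDerivAt_comp (hj _) (h.line_dt p)
    line_d1 := fun i p => hasLineDerivAt_comp (hj _) (h.line_d1 i p)
    line_d2 := fun i p => hasLineDerivAt_mul (hasLineDerivAt_comp (hj' _) (h.line_d1 i p))
      (h.line_d2 i p) }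

/-- A jet of the translate `p ↦ φ (p + q)`. -/
def translate (h : HeatJet φ) (q : SpaceTime N) : HeatJet (fun p => φ (p + q)) where
  dt p := h.dt (p + q)
  d1 i p := h.d1 i (p + q)
  d2 i p := h.d2 i (p + q)
  cont := h.cont.comp (by fun_prop)
  cont_dt := h.cont_dt.comp (by fun_prop)
  cont_d1 i := (h.cont_d1 i).comp (by fun_prop)
  cont_d2 i := (h.cont_d2 i).comp (by fun_prop)
  line_dt p := hasLineDerivAt_comp_add_right q (h.line_dt (p + q))
  line_d1 i p := hasLineDerivAt_comp_add_right q (h.line_d1 i (p + q))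
  line_d2 i p := hasLineDerivAt_comp_add_right q (h.line_d2 i (p + q))

/-- The jet of a smooth function. -/
def ofContDiff (hφ : ContDiff ℝ ∞ φ) : HeatJet φ where
  dt p := fderiv ℝ φ p (timeDir N)
  d1 i p := fderiv ℝ φ p (spaceDir i)
  d2 i p := fderiv ℝ (fun q => fderiv ℝ φ q (spaceDir i)) p (spaceDir i)
  cont := hφ.continuous
  cont_dt := continuous_fderiv_apply hφ _
  cont_d1 i := continuous_fderiv_apply hφ _
  cont_d2 i := continuous_fderiv_apply (contDiff_fderiv_apply hφ _) _
  line_dt p := (hφ.differentiable (by simp) p).hasFDerivAt.hasLineDerivAt _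
  line_d1 i p := (hφ.differentiable (by simp) p).hasFDerivAt.hasLineDerivAt _
  line_d2 i p :=
    ((contDiff_fderiv_apply hφ _).differentiable (by simp) p).hasFDerivAt.hasLineDerivAt _

/-- The jet of a function of class `C^{2,1}`. -/
def ofC21 {ζ : Euc N → ℝ → ℝ} (h : C21 ζ) : HeatJet (fun p : SpaceTime N => ζ p.1 p.2) where
  dt p := deriv (ζ p.1) p.2
  d1 i p := fderiv ℝ (fun y => ζ y p.2) p.1 (EuclideanSpace.single i 1)
  d2 i p := fderiv ℝ (fun y => fderiv ℝ (fun z => ζ z p.2) y (EuclideanSpace.single i 1)) p.1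
    (EuclideanSpace.single i 1)
  cont := h.1
  cont_dt := h.2.2.1
  cont_d1 i := h.2.2.2.2.1.clm_apply continuous_const
  cont_d2 i := by
    have hd2 : (fun p : SpaceTime N => fderiv ℝ (fun y => fderiv ℝ (fun z => ζ z p.2) y
        (EuclideanSpace.single i 1)) p.1 (EuclideanSpace.single i 1)) =
        fun p : SpaceTime N => fderiv ℝ (fun y => fderiv ℝ (fun z => ζ z p.2) y) p.1
          (EuclideanSpace.single i 1) (EuclideanSpace.single i 1) := by
      funext p
      rw [((h.2.2.2.2.2.1 p.2 p.1).hasFDerivAt.clm_apply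
        (hasFDerivAt_const (EuclideanSpace.single i (1 : ℝ)) p.1)).fderiv]
      simp
    rw [hd2]
    exact (h.2.2.2.2.2.2.clm_apply continuous_const).clm_apply continuous_const
  line_dt p := hasLineDerivAt_timeDir_iff.2 (h.2.1 p.1 p.2).hasDerivAt
  line_d1 i p := hasLineDerivAt_spaceDir (h.2.2.2.1 p.2 p.1).hasFDerivAt
  line_d2 i p := hasLineDerivAt_spaceDir
    (f := fun q : SpaceTime N => fderiv ℝ (fun y => ζ y q.2) q.1 (EuclideanSpace.single i 1))
    ((h.2.2.2.2.2.1 p.2 p.1).clm_apply (differentiableAt_const _)).hasFDerivAt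

lemma adjHeat_ofC21 {ζ : Euc N → ℝ → ℝ} (h : C21 ζ) : (ofC21 h).adjHeat = heatAdj ζ := rfl

/-- The jet of a smooth function of the space variable alone. -/
def ofSpace {χ : Euc N → ℝ} (hχ : ContDiff ℝ ∞ χ) : HeatJet (fun p : SpaceTime N => χ p.1) where
  dt _ := 0
  d1 i p := fderiv ℝ χ p.1 (EuclideanSpace.single i 1)
  d2 i p := fderiv ℝ (fun q => fderiv ℝ χ q (EuclideanSpace.single i 1)) p.1
    (EuclideanSpace.single i 1)
  cont := hχ.continuous.comp continuous_fst
  cont_dt := continuous_const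
  cont_d1 i := (continuous_fderiv_apply hχ _).comp continuous_fst
  cont_d2 i := (continuous_fderiv_apply (contDiff_fderiv_apply hχ _) _).comp continuous_fst
  line_dt p := hasLineDerivAt_timeDir_iff.2 (hasDerivAt_const p.2 (χ p.1))
  line_d1 i p := hasLineDerivAt_spaceDir (hχ.differentiable (by simp) p.1).hasFDerivAt
  line_d2 i p := hasLineDerivAt_spaceDir
    (f := fun q : SpaceTime N => fderiv ℝ χ q.1 (EuclideanSpace.single i 1))
    ((contDiff_fderiv_apply hχ _).differentiable (by simp) p.1).hasFDerivAt

/-- The jet of a smooth function of the time variable alone. -/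
def ofTime {θ : ℝ → ℝ} (hθ : ContDiff ℝ ∞ θ) : HeatJet (fun p : SpaceTime N => θ p.2) where
  dt p := deriv θ p.2
  d1 _ _ := 0
  d2 _ _ := 0
  cont := hθ.continuous.comp continuous_snd
  cont_dt := (hθ.continuous_deriv (by simp)).comp continuous_snd
  cont_d1 _ := continuous_const
  cont_d2 _ := continuous_const
  line_dt p := hasLineDerivAt_timeDir_iff.2 (hθ.differentiable (by simp) p.2).hasDerivAt
  line_d1 _ p := hasLineDerivAt_spaceDir (f := fun q : SpaceTime N => θ q.2) (L := 0)
    (hasFDerivAt_const (θ p.2) _)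
  line_d2 _ p := hasLineDerivAt_spaceDir (f := fun _ : SpaceTime N => (0 : ℝ)) (L := 0)
    (hasFDerivAt_const (0 : ℝ) p.1)

/-- The jet of `(x, t) ↦ χ x * θ t`. -/
def tensor {χ : Euc N → ℝ} {θ : ℝ → ℝ} (hχ : ContDiff ℝ ∞ χ) (hθ : ContDiff ℝ ∞ θ) :
    HeatJet (fun p : SpaceTime N => χ p.1 * θ p.2) :=
  (ofSpace hχ).mul (ofTime hθ)

lemma adjHeat_tensor {χ : Euc N → ℝ} {θ : ℝ → ℝ} (hχ : ContDiff ℝ ∞ χ) (hθ : ContDiff ℝ ∞ θ)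
    (p : SpaceTime N) : (tensor hχ hθ).adjHeat p = χ p.1 * deriv θ p.2 + lap χ p.1 * θ p.2 := by
  simp [tensor, adjHeat, laplacian, mul, ofSpace, ofTime, lap, Finset.sum_mul]

lemma adjHeat_mul_ofTime (h : HeatJet φ) {θ : ℝ → ℝ} (hθ : ContDiff ℝ ∞ θ) (p : SpaceTime N) :
    (h.mul (ofTime hθ)).adjHeat p = h.adjHeat p * θ p.2 + φ p * deriv θ p.2 := by
  simp only [adjHeat, laplacian, mul, ofTime, mul_zero, add_zero, add_mul, Finset.sum_mul]
  ring

variable {p : SpaceTime N}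

lemma dt_eq_zero (h : HeatJet φ) (hp : p ∉ tsupport φ) : h.dt p = 0 :=
  lineDeriv_eq_zero_of_notMem_tsupport (h.line_dt p) hp

lemma d1_eq_zero (h : HeatJet φ) (hp : p ∉ tsupport φ) (i : Fin N) : h.d1 i p = 0 :=
  lineDeriv_eq_zero_of_notMem_tsupport (h.line_d1 i p) hp

lemma tsupport_d1_subset (h : HeatJet φ) (i : Fin N) : tsupport (h.d1 i) ⊆ tsupport φ :=
  closure_minimal (fun _ hp => by_contra fun hc => hp (h.d1_eq_zero hc i)) (isClosed_tsupport _)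

lemma d2_eq_zero (h : HeatJet φ) (hp : p ∉ tsupport φ) (i : Fin N) : h.d2 i p = 0 :=
  lineDeriv_eq_zero_of_notMem_tsupport (h.line_d2 i p) fun hc => hp (h.tsupport_d1_subset i hc)

lemma laplacian_eq_zero (h : HeatJet φ) (hp : p ∉ tsupport φ) : h.laplacian p = 0 :=
  Finset.sum_eq_zero fun i _ => h.d2_eq_zero hp i

lemma adjHeat_eq_zero (h : HeatJet φ) (hp : p ∉ tsupport φ) : h.adjHeat p = 0 := by
  simp [adjHeat, h.dt_eq_zero hp, h.laplacian_eq_zero hp]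

section CompactSupport

variable (h : HeatJet φ) (hφ : HasCompactSupport φ)
include hφ

lemma hasCompactSupport_dt : HasCompactSupport h.dt :=
  HasCompactSupport.intro hφ fun _ => h.dt_eq_zero

lemma hasCompactSupport_d1 (i : Fin N) : HasCompactSupport (h.d1 i) :=
  HasCompactSupport.intro hφ fun _ hp => h.d1_eq_zero hp i

lemma hasCompactSupport_d2 (i : Fin N) : HasCompactSupport (h.d2 i) :=
  HasCompactSupport.intro hφ fun _ hp => h.d2_eq_zero hp i

lemma hasCompactSupport_laplacian : HasCompactSupport h.laplacian :=
  HasCompactSupport.intro hφ fun _ => h.laplacian_eq_zero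

lemma hasCompactSupport_adjHeat : HasCompactSupport h.adjHeat :=
  HasCompactSupport.intro hφ fun _ => h.adjHeat_eq_zero

instance isAddHaarMeasure_volume : (volume : Measure (SpaceTime N)).IsAddHaarMeasure :=
  inferInstanceAs (((volume : Measure (Euc N)).prod (volume : Measure ℝ)).IsAddHaarMeasure)

lemma integral_mul_dt (k : HeatJet ψ) : ∫ p, ψ p * h.dt p = -∫ p, φ p * k.dt p := by
  rw [integral_mul_eq_neg_of_hasLineDerivAt k.cont h.cont k.cont_dt h.cont_dt hφ
    (h.hasCompactSupport_dt hφ) k.line_dt h.line_dt]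
  simp only [mul_comm]

lemma integral_mul_d2 (k : HeatJet ψ) (i : Fin N) :
    ∫ p, ψ p * h.d2 i p = ∫ p, φ p * k.d2 i p := by
  rw [integral_mul_eq_neg_of_hasLineDerivAt k.cont (h.cont_d1 i) (k.cont_d1 i) (h.cont_d2 i)
      (h.hasCompactSupport_d1 hφ i) (h.hasCompactSupport_d2 hφ i) (k.line_d1 i) (h.line_d2 i),
    integral_mul_eq_neg_of_hasLineDerivAt (k.cont_d1 i) h.cont (k.cont_d2 i) (h.cont_d1 i)
      hφ (h.hasCompactSupport_d1 hφ i) (k.line_d2 i) (h.line_d1 i), neg_neg]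
  simp only [mul_comm]

lemma integral_mul_adjHeat (k : HeatJet ψ) :
    ∫ p, ψ p * h.adjHeat p = ∫ p, φ p * (k.laplacian p - k.dt p) := by
  have hψdt : Integrable (fun p => ψ p * h.dt p) :=
    (k.cont.mul h.cont_dt).integrable_of_hasCompactSupport (h.hasCompactSupport_dt hφ).mul_left
  have hψd2 (i) : Integrable (fun p => ψ p * h.d2 i p) :=
    (k.cont.mul (h.cont_d2 i)).integrable_of_hasCompactSupport
      (h.hasCompactSupport_d2 hφ i).mul_left
  have hφdt : Integrable (fun p => φ p * k.dt p) :=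
    (h.cont.mul k.cont_dt).integrable_of_hasCompactSupport hφ.mul_right
  have hφd2 (i) : Integrable (fun p => φ p * k.d2 i p) :=
    (h.cont.mul (k.cont_d2 i)).integrable_of_hasCompactSupport hφ.mul_right
  simp only [adjHeat, laplacian, mul_add, mul_sub, Finset.mul_sum]
  rw [integral_add hψdt (integrable_finsetSum _ fun i _ => hψd2 i),
    integral_sub (integrable_finsetSum _ fun i _ => hφd2 i) hφdt,
    integral_finsetSum _ fun i _ => hψd2 i, integral_finsetSum _ fun i _ => hφd2 i,
    h.integral_mul_dt hφ k]
  simp only [h.integral_mul_d2 hφ k]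
  ring

end CompactSupport

end HeatJet

lemma c21_of_contDiff {N : ℕ} {φ : SpaceTime N → ℝ} (hφ : ContDiff ℝ ∞ φ) :
    C21 (fun x t => φ (x, t)) := by
  let Φ : SpaceTime N → (Euc N →L[ℝ] ℝ) := fun p =>
    (fderiv ℝ φ p).comp (ContinuousLinearMap.inl ℝ (Euc N) ℝ)
  have hΦ : ContDiff ℝ ∞ Φ := (hφ.fderiv_right (m := ∞) (by simp)).clm_comp contDiff_const
  have hdx (p : SpaceTime N) : HasFDerivAt (fun y => φ (y, p.2)) (Φ p) p.1 :=
    hasFDerivAt_slice (hφ.differentiable (by simp)) p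
  have hdxx (p : SpaceTime N) := hasFDerivAt_slice (hΦ.differentiable (by simp)) p
  have hdt (x : Euc N) (t : ℝ) : HasDerivAt (fun s => φ (x, s)) _ t :=
    hasLineDerivAt_timeDir_iff.1 ((HeatJet.ofContDiff hφ).line_dt (x, t))
  have hgrad (t : ℝ) : (fun y => fderiv ℝ (fun z => φ (z, t)) y) = fun y => Φ (y, t) :=
    funext fun y => (hdx (y, t)).fderiv
  refine ⟨hφ.continuous, fun x t => (hdt x t).differentiableAt, ?_,
    fun t x => (hdx (x, t)).differentiableAt, ?_, fun t x => ?_, ?_⟩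
  · exact (HeatJet.ofContDiff hφ).cont_dt.congr fun p => (hdt p.1 p.2).deriv.symm
  · exact hΦ.continuous.congr fun p => (hdx p).fderiv.symm
  · rw [hgrad]
    exact (hdxx (x, t)).differentiableAt
  · have hhess : (fun p : SpaceTime N => fderiv ℝ (fun y => fderiv ℝ (fun z => φ (z, p.2)) y) p.1) =
        fun p => (fderiv ℝ Φ p).comp (ContinuousLinearMap.inl ℝ (Euc N) ℝ) := by
      funext p
      rw [hgrad]
      exact (hdxx p).fderiv
    rw [hhess]
    exact (hΦ.continuous_fderiv (by simp)).clm_comp continuous_const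

/-! ### The heat kernel -/

section HeatKernel

variable {N : ℕ}

/-- The heat kernel of `ℝ^N`; the formula has this meaning for `0 < t` only. -/
def heatKernel (x : Euc N) (t : ℝ) : ℝ :=
  (4 * Real.pi * t) ^ (-(N : ℝ) / 2) * Real.exp (-(1 / (4 * t)) * ‖x‖ ^ 2)

/-- The logarithmic time derivative of the heat kernel. -/
def heatKernelLogDt (x : Euc N) (t : ℝ) : ℝ := ‖x‖ ^ 2 / (4 * t ^ 2) - N / (2 * t)

variable {φ : SpaceTime N → ℝ} {t : ℝ}

lemma heatKernel_nonneg (x : Euc N) (ht : 0 ≤ t) : 0 ≤ heatKernel x t := by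
  unfold heatKernel
  positivity

lemma integral_heatKernel (ht : 0 < t) : ∫ x : Euc N, heatKernel x t = 1 := by
  unfold heatKernel
  rw [integral_const_mul, GaussianFourier.integral_rexp_neg_mul_sq_norm (by positivity),
    show Real.pi / (1 / (4 * t)) = 4 * Real.pi * t by field_simp,
    ← Real.rpow_add (by positivity), finrank_euclideanSpace_fin, neg_div, neg_add_cancel,
    Real.rpow_zero]

lemma integrable_heatKernel (ht : 0 < t) : Integrable (fun x : Euc N => heatKernel x t) := by
  by_contra hint
  exact one_ne_zero ((integral_heatKernel (N := N) ht).symm.trans (integral_undef hint))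

lemma continuous_heatKernel : Continuous (fun x : Euc N => heatKernel x t) := by
  unfold heatKernel
  fun_prop

lemma continuousOn_heatKernel :
    ContinuousOn (fun p : SpaceTime N => heatKernel p.1 p.2) {p | 0 < p.2} := by
  intro p (hp : 0 < p.2)
  have hexponent : ContinuousAt (fun q : SpaceTime N => -(1 / (4 * q.2)) * ‖q.1‖ ^ 2) p :=
    (ContinuousAt.div (by fun_prop) (by fun_prop) (by positivity)).neg.mul (by fun_prop)
  refine ContinuousAt.continuousWithinAt (ContinuousAt.mul ?_ hexponent.rexp)
  exact ContinuousAt.rpow_const (by fun_prop) (Or.inl (by positivity))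

lemma continuousOn_heatKernelLogDt :
    ContinuousOn (fun p : SpaceTime N => heatKernelLogDt p.1 p.2) {p | 0 < p.2} := by
  intro p (hp : 0 < p.2)
  exact ContinuousAt.continuousWithinAt (ContinuousAt.sub
    (ContinuousAt.div (by fun_prop) (by fun_prop) (by positivity))
    (ContinuousAt.div (by fun_prop) (by fun_prop) (by positivity)))

lemma measurable_heatKernel : Measurable (fun p : SpaceTime N => heatKernel p.1 p.2) := by
  unfold heatKernel
  fun_prop

lemma hasDerivAt_heatKernel (x : Euc N) (ht : 0 < t) :
    HasDerivAt (fun s => heatKernel x s) (heatKernelLogDt x t * heatKernel x t) t := by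
  have hbase : HasDerivAt (fun s : ℝ => 4 * Real.pi * s) (4 * Real.pi * 1) t :=
    (hasDerivAt_id t).const_mul _
  have hpow := hbase.rpow_const (p := -(N : ℝ) / 2) (Or.inl (by positivity))
  have hexponent : HasDerivAt (fun s : ℝ => -(1 / (4 * s)) * ‖x‖ ^ 2)
      (1 / (4 * t ^ 2) * ‖x‖ ^ 2) t := by
    have hinv : HasDerivAt (fun s : ℝ => -(1 / 4) * s⁻¹ * ‖x‖ ^ 2)
        (-(1 / 4) * (-(t ^ 2)⁻¹) * ‖x‖ ^ 2) t :=
      ((hasDerivAt_inv ht.ne').const_mul _).mul_const _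
    convert hinv using 1
    · funext s
      rw [one_div, mul_inv]
      ring
    · rw [one_div, mul_inv]
      ring
  unfold heatKernel heatKernelLogDt
  refine (hpow.mul hexponent.exp).congr_deriv ?_
  rw [Real.rpow_sub_one (by positivity)]
  field_simp
  ring

lemma norm_add_smul_single_sq (x : Euc N) (i : Fin N) (s : ℝ) :
    ‖x + s • (EuclideanSpace.single i (1 : ℝ) : Euc N)‖ ^ 2 = ‖x‖ ^ 2 + 2 * s * x i + s ^ 2 := by
  rw [norm_add_sq_real, inner_smul_right, EuclideanSpace.inner_single_right, norm_smul]
  simp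
  ring

lemma hasLineDerivAt_heatKernel (x : Euc N) (ht : 0 < t) (i : Fin N) :
    HasLineDerivAt ℝ (fun x : Euc N => heatKernel x t) (-(x i) / (2 * t) * heatKernel x t) x
      (EuclideanSpace.single i 1) := by
  unfold HasLineDerivAt heatKernel
  simp only [norm_add_smul_single_sq]
  have hexponent : HasDerivAt (fun s : ℝ => -(1 / (4 * t)) * (‖x‖ ^ 2 + 2 * s * x i + s ^ 2))
      (-(1 / (4 * t)) * (2 * x i)) 0 := by
    have hlin := (((hasDerivAt_id (0 : ℝ)).const_mul 2).mul_const (x i)).const_add (‖x‖ ^ 2)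
    exact ((hlin.add (hasDerivAt_pow 2 (0 : ℝ))).congr_deriv (by simp)).const_mul _
  refine (hexponent.exp.const_mul _).congr_deriv ?_
  simp only [mul_zero, zero_mul, add_zero, ne_eq, OfNat.ofNat_ne_zero, not_false_eq_true,
    zero_pow]
  field_simp
  ring

lemma hasLineDerivAt_heatKernel_d1 (x : Euc N) (ht : 0 < t) (i : Fin N) :
    HasLineDerivAt ℝ (fun x : Euc N => -(x i) / (2 * t) * heatKernel x t)
      (((x i) ^ 2 / (4 * t ^ 2) - 1 / (2 * t)) * heatKernel x t) x
      (EuclideanSpace.single i 1) := by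
  have hcoord : HasLineDerivAt ℝ (fun x : Euc N => -(x i) / (2 * t)) (-1 / (2 * t)) x
      (EuclideanSpace.single i 1) := by
    unfold HasLineDerivAt
    simpa using (((hasDerivAt_id (0 : ℝ)).const_add (x i)).neg.div_const (2 * t))
  refine HasDerivAt.congr_deriv (hasLineDerivAt_mul hcoord (hasLineDerivAt_heatKernel x ht i)) ?_
  field_simp
  ring

lemma sum_heatKernel_d2 (x : Euc N) (ht : 0 < t) :
    ∑ i, ((x i) ^ 2 / (4 * t ^ 2) - 1 / (2 * t)) * heatKernel x t =
      heatKernelLogDt x t * heatKernel x t := by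
  rw [← Finset.sum_mul, Finset.sum_sub_distrib, ← Finset.sum_div, heatKernelLogDt,
    EuclideanSpace.norm_sq_eq]
  simp only [Real.norm_eq_abs, sq_abs, Finset.sum_const, Finset.card_univ, Fintype.card_fin,
    nsmul_eq_mul]
  field_simp

section CompactSupport

variable (h : HeatJet φ) (hφ : HasCompactSupport φ)
include hφ

lemma integrable_slice_mul {f : Euc N → ℝ} (hf : Continuous f) (hφc : Continuous φ) (t : ℝ) :
    Integrable (fun x => f x * φ (x, t)) :=
  (hf.mul (hφc.comp (by fun_prop))).integrable_of_hasCompactSupport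
    (hasCompactSupport_slice hφ t).mul_left

lemma integral_heatKernel_mul_d2 (ht : 0 < t) (i : Fin N) :
    ∫ x, heatKernel x t * h.d2 i (x, t) =
      ∫ x, ((x i) ^ 2 / (4 * t ^ 2) - 1 / (2 * t)) * heatKernel x t * φ (x, t) := by
  have hslice : Continuous (fun x : Euc N => (x, t)) := by fun_prop
  have hd1 : Continuous (fun x : Euc N => -(x i) / (2 * t) * heatKernel x t) :=
    Continuous.mul (by fun_prop) continuous_heatKernel
  have hd2 : Continuous
      (fun x : Euc N => ((x i) ^ 2 / (4 * t ^ 2) - 1 / (2 * t)) * heatKernel x t) :=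
    Continuous.mul (by fun_prop) continuous_heatKernel
  have hφd1 := hasCompactSupport_slice (h.hasCompactSupport_d1 hφ i) t
  have hφd2 := hasCompactSupport_slice (h.hasCompactSupport_d2 hφ i) t
  have hibp₁ : ∫ x, heatKernel x t * h.d2 i (x, t) =
      -∫ x, -(x i) / (2 * t) * heatKernel x t * h.d1 i (x, t) :=
    integral_mul_eq_neg_of_hasLineDerivAt continuous_heatKernel ((h.cont_d1 i).comp hslice) hd1
      ((h.cont_d2 i).comp hslice) hφd1 hφd2 (fun x => hasLineDerivAt_heatKernel x ht i)
      (fun x => hasLineDerivAt_slice (h.line_d2 i (x, t)))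
  have hibp₂ := integral_mul_eq_neg_of_hasLineDerivAt (μ := volume) hd1 (h.cont.comp hslice) hd2
    ((h.cont_d1 i).comp hslice) (hasCompactSupport_slice hφ t) hφd1
    (fun x => hasLineDerivAt_heatKernel_d1 x ht i)
    (fun x => hasLineDerivAt_slice (h.line_d1 i (x, t)))
  exact hibp₁.trans (neg_eq_iff_eq_neg.2 hibp₂)

lemma integral_heatKernel_mul_laplacian (ht : 0 < t) :
    ∫ x, heatKernel x t * h.laplacian (x, t) =
      ∫ x, heatKernelLogDt x t * heatKernel x t * φ (x, t) := by
  have hd2 (i : Fin N) : Continuous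
      (fun x : Euc N => ((x i) ^ 2 / (4 * t ^ 2) - 1 / (2 * t)) * heatKernel x t) :=
    Continuous.mul (by fun_prop) continuous_heatKernel
  simp only [HeatJet.laplacian, Finset.mul_sum]
  rw [integral_finsetSum _ fun i _ => integrable_slice_mul (h.hasCompactSupport_d2 hφ i)
    continuous_heatKernel (h.cont_d2 i) t]
  simp only [integral_heatKernel_mul_d2 h hφ ht]
  rw [← integral_finsetSum _ fun i _ => integrable_slice_mul hφ (hd2 i) h.cont t]
  simp only [← sum_heatKernel_d2 _ ht, Finset.sum_mul]

lemma exists_bound_deriv_heatKernel_mul (ht : 0 < t) :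
    ∃ bound : Euc N → ℝ, Integrable bound ∧ ∀ x, ∀ s ∈ Ioo (t / 2) (2 * t),
      ‖heatKernelLogDt x s * heatKernel x s * φ (x, s) + heatKernel x s * h.dt (x, s)‖ ≤
        bound x := by
  have hK : IsCompact (Prod.fst '' tsupport φ) := hφ.isCompact.image continuous_fst
  have hcont : ContinuousOn (fun p : SpaceTime N => heatKernelLogDt p.1 p.2 * heatKernel p.1 p.2 *
      φ p + heatKernel p.1 p.2 * h.dt p) {p | 0 < p.2} :=
    ((continuousOn_heatKernelLogDt.mul continuousOn_heatKernel).mul h.cont.continuousOn).add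
      (continuousOn_heatKernel.mul h.cont_dt.continuousOn)
  obtain ⟨C, hC⟩ := (hK.prod (isCompact_Icc (a := t / 2) (b := 2 * t))).exists_bound_of_continuousOn
    (hcont.mono fun p hp => (half_pos ht).trans_le hp.2.1)
  refine ⟨(Prod.fst '' tsupport φ).indicator fun _ => C,
    (integrable_indicator_iff hK.measurableSet).2 (integrableOn_const hK.measure_lt_top.ne),
    fun x s hs => ?_⟩
  by_cases hx : x ∈ Prod.fst '' tsupport φ
  · rw [indicator_of_mem hx]
    exact hC (x, s) ⟨hx, hs.1.le, hs.2.le⟩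
  · have hxs : (x, s) ∉ tsupport φ := fun hmem => hx ⟨(x, s), hmem, rfl⟩
    rw [indicator_of_notMem hx, image_eq_zero_of_notMem_tsupport hxs, h.dt_eq_zero hxs]
    simp

lemma hasDerivAt_integral_heatKernel_mul (ht : 0 < t) :
    HasDerivAt (fun s => ∫ x, heatKernel x s * φ (x, s))
      (∫ x, heatKernel x t * h.adjHeat (x, t)) t := by
  have hslice (s : ℝ) : Continuous (fun x : Euc N => (x, s)) := by fun_prop
  have hkernelDt : Continuous (fun x : Euc N => heatKernelLogDt x t * heatKernel x t) :=
    Continuous.mul (by unfold heatKernelLogDt; fun_prop) continuous_heatKernel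
  obtain ⟨bound, hbound, hle⟩ := exists_bound_deriv_heatKernel_mul h hφ ht
  have hderiv := (hasDerivAt_integral_of_dominated_loc_of_deriv_le
    (F := fun s x => heatKernel x s * φ (x, s)) (s := Ioo (t / 2) (2 * t)) (bound := bound)
    (Ioo_mem_nhds (by linarith) (by linarith))
    (Eventually.of_forall fun s =>
      (continuous_heatKernel.mul (h.cont.comp (hslice s))).aestronglyMeasurable)
    (integrable_slice_mul hφ continuous_heatKernel h.cont t)
    ((hkernelDt.mul (h.cont.comp (hslice t))).add
      (continuous_heatKernel.mul (h.cont_dt.comp (hslice t)))).aestronglyMeasurable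
    (Eventually.of_forall hle) hbound
    (Eventually.of_forall fun x s hs =>
      (hasDerivAt_heatKernel x ((half_pos ht).trans hs.1)).mul
        (hasLineDerivAt_timeDir_iff.1 (h.line_dt (x, s))))).2
  have hdt := integrable_slice_mul (h.hasCompactSupport_dt hφ)
    (continuous_heatKernel (t := t)) h.cont_dt t
  have hlap := integrable_slice_mul (h.hasCompactSupport_laplacian hφ)
    (continuous_heatKernel (t := t)) h.continuous_laplacian t
  refine hderiv.congr_deriv ?_
  rw [integral_add (integrable_slice_mul hφ hkernelDt h.cont t) hdt,
    ← integral_heatKernel_mul_laplacian h hφ ht, ← integral_add hlap hdt]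
  simp only [HeatJet.adjHeat, mul_add, add_comm]

end CompactSupport

lemma heatKernel_sqrt_smul (z : Euc N) (ht : 0 < t) :
    heatKernel (√t • z) t = (√t ^ N)⁻¹ * heatKernel z 1 := by
  have hpow : t ^ (-(N : ℝ) / 2) = (√t ^ N)⁻¹ := by
    rw [Real.sqrt_eq_rpow, ← Real.rpow_natCast, ← Real.rpow_mul ht.le, ← Real.rpow_neg ht.le]
    congr 1
    ring
  have hexponent : -(1 / (4 * t)) * (t * ‖z‖ ^ 2) = -(1 / (4 * 1)) * ‖z‖ ^ 2 := by field_simp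
  unfold heatKernel
  rw [Real.mul_rpow (by positivity) ht.le, norm_smul, mul_pow,
    Real.norm_of_nonneg (Real.sqrt_nonneg _), Real.sq_sqrt ht.le, hpow, hexponent]
  ring_nf

lemma integral_heatKernel_mul_eq_rescaled (f : Euc N → ℝ) (ht : 0 < t) :
    ∫ x, heatKernel x t * f x = ∫ z : Euc N, heatKernel z 1 * f (√t • z) := by
  have hsqrt : 0 < √t ^ N := by positivity
  have hsubst := Measure.integral_comp_smul (volume : Measure (Euc N))
    (fun x => heatKernel x t * f x) √t
  simp only [heatKernel_sqrt_smul _ ht, finrank_euclideanSpace, Fintype.card_fin, smul_eq_mul]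
    at hsubst
  rw [abs_of_pos (by positivity)] at hsubst
  simp only [mul_assoc] at hsubst
  rw [integral_const_mul] at hsubst
  exact (mul_left_cancel₀ (inv_ne_zero hsqrt.ne') hsubst).symm

lemma tendsto_integral_heatKernel_mul (hφc : Continuous φ) (hφ : HasCompactSupport φ) :
    Tendsto (fun s => ∫ x, heatKernel x s * φ (x, s)) (𝓝[>] 0) (𝓝 (φ 0)) := by
  obtain ⟨C, hC⟩ := hφ.exists_bound_of_continuous hφc
  have hkernel : Integrable (fun z : Euc N => heatKernel z 1) := integrable_heatKernel one_pos
  have hlim : Tendsto (fun s : ℝ => ∫ z : Euc N, heatKernel z 1 * φ (√s • z, s)) (𝓝[>] 0)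
      (𝓝 (∫ z : Euc N, heatKernel z 1 * φ 0)) := by
    refine tendsto_integral_filter_of_dominated_convergence (fun z => heatKernel z 1 * C)
      (Eventually.of_forall fun s => Continuous.aestronglyMeasurable ?_)
      (Eventually.of_forall fun s => Eventually.of_forall fun z => ?_)
      (hkernel.mul_const C) (Eventually.of_forall fun z => ?_)
    · exact continuous_heatKernel.mul (hφc.comp (by fun_prop))
    · rw [norm_mul, Real.norm_of_nonneg (heatKernel_nonneg _ zero_le_one)]
      exact mul_le_mul_of_nonneg_left (hC _) (heatKernel_nonneg _ zero_le_one)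
    · have hcont : Continuous (fun s : ℝ => heatKernel z 1 * φ (√s • z, s)) :=
        continuous_const.mul (hφc.comp (by fun_prop))
      have hzero := hcont.tendsto 0
      simp only [Real.sqrt_zero, zero_smul] at hzero
      exact hzero.mono_left nhdsWithin_le_nhds
  rw [integral_mul_const, integral_heatKernel one_pos, one_mul] at hlim
  refine hlim.congr' ?_
  filter_upwards [self_mem_nhdsWithin] with s hs
  exact (integral_heatKernel_mul_eq_rescaled (fun x => φ (x, s)) hs).symm

end HeatKernel

/-! ### The damped heat kernel and its potentials -/

section DampedKernel

variable {N : ℕ} {φ : SpaceTime N → ℝ}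

/-- The fundamental solution `e^{-Lt} heatKernel x t` of `∂_t - Δ + L`, cut off to `0 < t < T`. -/
def dampedKernel (L T : ℝ) (p : SpaceTime N) : ℝ :=
  if 0 < p.2 ∧ p.2 < T then Real.exp (-(L * p.2)) * heatKernel p.1 p.2 else 0

/-- The total mass of `dampedKernel L T`. -/
def dampedMass (L T : ℝ) : ℝ := ∫ t in Ioo 0 T, Real.exp (-(L * t))

lemma dampedKernel_nonneg (L T : ℝ) (p : SpaceTime N) : 0 ≤ dampedKernel L T p := by
  unfold dampedKernel
  split_ifs with hp
  · exact mul_nonneg (Real.exp_nonneg _) (heatKernel_nonneg _ hp.1.le)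
  · exact le_rfl

lemma measurable_dampedKernel (L T : ℝ) : Measurable (dampedKernel L T : SpaceTime N → ℝ) := by
  unfold dampedKernel
  refine Measurable.ite ?_ (Measurable.mul (by fun_prop) measurable_heatKernel) measurable_const
  exact (measurableSet_lt measurable_const measurable_snd).inter
    (measurableSet_lt measurable_snd measurable_const)

lemma dampedMass_nonneg (L T : ℝ) : 0 ≤ dampedMass L T := integral_nonneg fun _ => Real.exp_nonneg _

lemma hasDerivAt_exp_neg_mul (L t : ℝ) :
    HasDerivAt (fun t => Real.exp (-(L * t))) (-L * Real.exp (-(L * t))) t := by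
  refine ((hasDerivAt_id t).const_mul L).neg.exp.congr_deriv ?_
  simp [mul_comm]

lemma mul_dampedMass_lt_one {L T : ℝ} (hT : 0 < T) : L * dampedMass L T < 1 := by
  have hftc : ∫ t in (0 : ℝ)..T, L * Real.exp (-(L * t)) =
      -Real.exp (-(L * T)) - -Real.exp (-(L * 0)) :=
    intervalIntegral.integral_eq_sub_of_hasDerivAt
      (fun t _ => (hasDerivAt_exp_neg_mul L t).neg.congr_deriv (by ring))
      ((by fun_prop : Continuous fun t => L * Real.exp (-(L * t))).intervalIntegrable _ _)
  rw [dampedMass, ← integral_const_mul, ← integral_Ioc_eq_integral_Ioo,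
    ← intervalIntegral.integral_of_le hT.le, hftc, mul_zero, neg_zero, Real.exp_zero]
  linarith [Real.exp_pos (-(L * T))]

lemma lintegral_dampedKernel_slice (L T t : ℝ) :
    ∫⁻ x : Euc N, ENNReal.ofReal (dampedKernel L T (x, t)) =
      (Ioo 0 T).indicator (fun t => ENNReal.ofReal (Real.exp (-(L * t)))) t := by
  by_cases ht : t ∈ Ioo 0 T
  · have ht' : 0 < t ∧ t < T := ht
    simp only [indicator_of_mem ht, dampedKernel, ht', and_self, if_true]
    rw [← ofReal_integral_eq_lintegral_ofReal ((integrable_heatKernel ht'.1).const_mul _)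
      (Eventually.of_forall fun x => mul_nonneg (Real.exp_nonneg _) (heatKernel_nonneg _ ht'.1.le)),
      integral_const_mul, integral_heatKernel ht'.1, mul_one]
  · have ht' : ¬(0 < t ∧ t < T) := ht
    simp [dampedKernel, ht']

lemma lintegral_dampedKernel (L T : ℝ) :
    ∫⁻ p : SpaceTime N, ENNReal.ofReal (dampedKernel L T p) = ENNReal.ofReal (dampedMass L T) := by
  rw [Measure.volume_eq_prod,
    lintegral_prod_symm _ (measurable_dampedKernel L T).ennreal_ofReal.aemeasurable]
  simp only [lintegral_dampedKernel_slice]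
  rw [lintegral_indicator measurableSet_Ioo, dampedMass, ofReal_integral_eq_lintegral_ofReal]
  · exact (by fun_prop : Continuous fun t => Real.exp (-(L * t))).integrableOn_Icc.mono_set
      Ioo_subset_Icc_self
  · exact Eventually.of_forall fun t => Real.exp_nonneg _

lemma integrable_dampedKernel (L T : ℝ) : Integrable (dampedKernel L T : SpaceTime N → ℝ) := by
  refine ⟨(measurable_dampedKernel L T).aestronglyMeasurable, ?_⟩
  rw [hasFiniteIntegral_iff_ofReal (Eventually.of_forall (dampedKernel_nonneg L T)),
    lintegral_dampedKernel]
  exact ENNReal.ofReal_lt_top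

section Duality

variable (h : HeatJet φ) (hφ : HasCompactSupport φ) (L T : ℝ)
include hφ

lemma continuous_adjHeat_sub_mul_bounded :
    Continuous (fun p => h.adjHeat p - L * φ p) ∧ ∃ C, ∀ p, ‖h.adjHeat p - L * φ p‖ ≤ C := by
  have hcont : Continuous (fun p => h.adjHeat p - L * φ p) :=
    h.continuous_adjHeat.sub (continuous_const.mul h.cont)
  have hcs : HasCompactSupport (fun p => h.adjHeat p - L * φ p) :=
    HasCompactSupport.intro hφ fun p hp => by
      simp [h.adjHeat_eq_zero hp, image_eq_zero_of_notMem_tsupport hp]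
  exact ⟨hcont, hcs.exists_bound_of_continuous hcont⟩

lemma hasDerivAt_exp_mul_integral_heatKernel_mul {t : ℝ} (ht : 0 < t) :
    HasDerivAt (fun t => Real.exp (-(L * t)) * ∫ x, heatKernel x t * φ (x, t))
      (Real.exp (-(L * t)) * ∫ x, heatKernel x t * (h.adjHeat (x, t) - L * φ (x, t))) t := by
  have hheat := integrable_slice_mul (h.hasCompactSupport_adjHeat hφ)
    (continuous_heatKernel (t := t)) h.continuous_adjHeat t
  have hval := integrable_slice_mul hφ (continuous_heatKernel (t := t)) h.cont t
  refine ((hasDerivAt_exp_neg_mul L t).mul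
    (hasDerivAt_integral_heatKernel_mul h hφ ht)).congr_deriv ?_
  simp only [mul_sub, mul_left_comm _ L]
  rw [integral_sub hheat (hval.const_mul _), integral_const_mul]
  ring

variable {T} (hT : ∀ p ∈ tsupport φ, p.2 < T)
include hT

lemma integral_exp_mul_integral_heatKernel_mul
    (hint : IntegrableOn (fun t => Real.exp (-(L * t)) *
      ∫ x, heatKernel x t * (h.adjHeat (x, t) - L * φ (x, t))) (Ioi 0)) :
    ∫ t in Ioi 0, Real.exp (-(L * t)) *
      ∫ x, heatKernel x t * (h.adjHeat (x, t) - L * φ (x, t)) = -φ 0 := by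
  set G : ℝ → ℝ := fun t =>
    if t ≤ 0 then φ 0 else Real.exp (-(L * t)) * ∫ x, heatKernel x t * φ (x, t) with hG
  have hG_pos {t : ℝ} (ht : 0 < t) :
      G t = Real.exp (-(L * t)) * ∫ x, heatKernel x t * φ (x, t) := if_neg (not_le.2 ht)
  have hderiv (t : ℝ) (ht : t ∈ Ioi (0 : ℝ)) :=
    (hasDerivAt_exp_mul_integral_heatKernel_mul h hφ L ht).congr_of_eventuallyEq
      (f₁ := G) (by filter_upwards [Ioi_mem_nhds ht] with s hs using hG_pos hs)
  have hlim : Tendsto G atTop (𝓝 0) := by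
    refine tendsto_const_nhds.congr' ?_
    filter_upwards [eventually_gt_atTop 0, eventually_ge_atTop T] with t ht₀ htT
    have hout (x : Euc N) : (x, t) ∉ tsupport φ := fun hmem => (hT _ hmem).not_ge htT
    simp [hG_pos ht₀, image_eq_zero_of_notMem_tsupport (hout _)]
  have hcont : ContinuousWithinAt G (Ici 0) 0 := by
    rw [← continuousWithinAt_Ioi_iff_Ici, ContinuousWithinAt, show G 0 = φ 0 by simp [hG]]
    have hexp : Tendsto (fun t : ℝ => Real.exp (-(L * t))) (𝓝[>] 0) (𝓝 1) := by
      have hcont : Continuous fun t : ℝ => Real.exp (-(L * t)) := by fun_prop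
      simpa using (hcont.tendsto 0).mono_left nhdsWithin_le_nhds
    refine (one_mul (φ 0) ▸ hexp.mul (tendsto_integral_heatKernel_mul h.cont hφ)).congr' ?_
    filter_upwards [self_mem_nhdsWithin] with t ht using (hG_pos ht).symm
  rw [integral_Ioi_of_hasDerivAt_of_tendsto hcont hderiv hint hlim]
  simp [hG]

lemma integral_dampedKernel_mul :
    ∫ p, dampedKernel L T p * (h.adjHeat p - L * φ p) = -φ 0 := by
  obtain ⟨hcont, C, hC⟩ := continuous_adjHeat_sub_mul_bounded h hφ L
  have hint : Integrable (fun p : SpaceTime N => dampedKernel L T p * (h.adjHeat p - L * φ p)) :=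
    (integrable_dampedKernel L T).mul_bdd (c := C) hcont.aestronglyMeasurable
      (Eventually.of_forall hC)
  have hslice : ∀ t ∈ Ioi (0 : ℝ),
      ∫ x, dampedKernel L T (x, t) * (h.adjHeat (x, t) - L * φ (x, t)) =
        Real.exp (-(L * t)) * ∫ x, heatKernel x t * (h.adjHeat (x, t) - L * φ (x, t)) := by
    intro t (ht : 0 < t)
    by_cases htT : t < T
    · simp only [dampedKernel, ht, htT, and_self, if_true, mul_assoc, integral_const_mul]
    · have hout (x : Euc N) : (x, t) ∉ tsupport φ := fun hmem => htT (hT _ hmem)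
      simp [dampedKernel, htT, h.adjHeat_eq_zero (hout _),
        image_eq_zero_of_notMem_tsupport (hout _)]
  have hslice₀ : ∀ t ∉ Ioi (0 : ℝ),
      ∫ x, dampedKernel L T (x, t) * (h.adjHeat (x, t) - L * φ (x, t)) = 0 := by
    intro t ht
    simp [dampedKernel, show ¬0 < t from ht]
  rw [Measure.volume_eq_prod] at hint
  rw [← integral_exp_mul_integral_heatKernel_mul h hφ L hT
      ((hint.integral_prod_right.integrableOn (s := Ioi 0)).congr_fun hslice measurableSet_Ioi),
    Measure.volume_eq_prod, integral_prod_symm _ hint,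
    ← setIntegral_eq_integral_of_forall_compl_eq_zero hslice₀]
  exact setIntegral_congr_fun measurableSet_Ioi hslice

lemma integral_dampedKernel_sub_mul {q : SpaceTime N} (hq : 0 ≤ q.2) :
    ∫ p, dampedKernel L T (p - q) * (h.adjHeat p - L * φ p) = -φ q := by
  have hφq : HasCompactSupport (fun p => φ (p + q)) := hφ.comp_homeomorph (Homeomorph.addRight q)
  have hTq : ∀ p ∈ tsupport (fun p => φ (p + q)), p.2 < T := fun p hp => by
    have hlt : p.2 + q.2 < T :=
      hT _ (tsupport_comp_subset_preimage (f := fun p => p + q) φ (by fun_prop) hp)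
    linarith
  rw [← zero_add q, ← integral_dampedKernel_mul (h.translate q) hφq L hTq, zero_add,
    ← integral_sub_right_eq_self
      (fun p => dampedKernel L T p * ((h.translate q).adjHeat p - L * φ (p + q))) q]
  simp [HeatJet.translate, HeatJet.adjHeat, HeatJet.laplacian]

end Duality

/-- The potential `p ↦ ∫ dampedKernel L T (p - q) dm(q)` of a space-time measure `m`. -/
def dampedPotential (L T : ℝ) (m : Measure (SpaceTime N)) (p : SpaceTime N) : ℝ≥0∞ :=
  ∫⁻ q, ENNReal.ofReal (dampedKernel L T (p - q)) ∂m

lemma measurable_dampedKernel_sub (L T : ℝ) :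
    Measurable fun z : SpaceTime N × SpaceTime N => dampedKernel L T (z.1 - z.2) :=
  (measurable_dampedKernel L T).comp (measurable_fst.sub measurable_snd)

lemma measurable_dampedPotential (L T : ℝ) (m : Measure (SpaceTime N)) [SFinite m] :
    Measurable (dampedPotential L T m) :=
  (measurable_dampedKernel_sub L T).ennreal_ofReal.lintegral_prod_right'

lemma lintegral_dampedPotential (L T : ℝ) (m : Measure (SpaceTime N)) [SFinite m] :
    ∫⁻ p, dampedPotential L T m p = ENNReal.ofReal (dampedMass L T) * m univ := by
  have htranslate (q : SpaceTime N) :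
      ∫⁻ p, ENNReal.ofReal (dampedKernel L T (p - q)) = ENNReal.ofReal (dampedMass L T) := by
    rw [lintegral_sub_right_eq_self (fun p => ENNReal.ofReal (dampedKernel L T p)) q,
      lintegral_dampedKernel]
  unfold dampedPotential
  rw [lintegral_lintegral_swap (measurable_dampedKernel_sub L T).ennreal_ofReal.aemeasurable]
  simp only [htranslate, lintegral_const]

lemma ae_nonneg_of_measure_neg_eq_zero {m : Measure (SpaceTime N)} (hm : m {q | q.2 < 0} = 0) :
    ∀ᵐ q ∂m, 0 ≤ q.2 := by
  simpa only [ae_iff, not_le] using hm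

lemma dampedPotential_eq_zero (L T : ℝ) {m : Measure (SpaceTime N)} (hm : m {q | q.2 < 0} = 0)
    {p : SpaceTime N} (hp : p.2 ≤ 0) : dampedPotential L T m p = 0 := by
  have hmeas : Measurable fun q : SpaceTime N => ENNReal.ofReal (dampedKernel L T (p - q)) :=
    ((measurable_dampedKernel L T).comp (by fun_prop : Measurable fun q => p - q)).ennreal_ofReal
  unfold dampedPotential
  rw [lintegral_eq_zero_iff hmeas]
  filter_upwards [ae_nonneg_of_measure_neg_eq_zero hm] with q hq
  have hnot : ¬0 < p.2 - q.2 := by linarith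
  simp only [dampedKernel, Prod.snd_sub, hnot, false_and, if_false, ENNReal.ofReal_zero,
    Pi.zero_apply]

lemma toReal_dampedPotential (L T : ℝ) (m : Measure (SpaceTime N)) (p : SpaceTime N) :
    (dampedPotential L T m p).toReal = ∫ q, dampedKernel L T (p - q) ∂m := by
  rw [integral_eq_lintegral_of_nonneg_ae (Eventually.of_forall fun _ => dampedKernel_nonneg L T _)
    ((measurable_dampedKernel L T).comp (by fun_prop)).aestronglyMeasurable, dampedPotential]

lemma integrable_dampedKernel_sub (L T : ℝ) (m : Measure (SpaceTime N)) [IsFiniteMeasure m] :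
    Integrable (fun z : SpaceTime N × SpaceTime N => dampedKernel L T (z.1 - z.2))
      (volume.prod m) := by
  have hmeas := measurable_dampedKernel_sub (N := N) L T
  have hmass := lintegral_dampedPotential L T m
  unfold dampedPotential at hmass
  refine ⟨hmeas.aestronglyMeasurable, ?_⟩
  rw [hasFiniteIntegral_iff_ofReal (Eventually.of_forall fun _ => dampedKernel_nonneg L T _),
    lintegral_prod _ hmeas.ennreal_ofReal.aemeasurable, hmass]
  exact ENNReal.mul_lt_top ENNReal.ofReal_lt_top (measure_lt_top _ _)

lemma integral_dampedPotential_mul (h : HeatJet φ) (hφ : HasCompactSupport φ) (L : ℝ) {T : ℝ}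
    (hT : ∀ p ∈ tsupport φ, p.2 < T) {m : Measure (SpaceTime N)} [IsFiniteMeasure m]
    (hm : m {q | q.2 < 0} = 0) :
    ∫ p, (dampedPotential L T m p).toReal * (h.adjHeat p - L * φ p) = -∫ q, φ q ∂m := by
  obtain ⟨hcont, C, hC⟩ := continuous_adjHeat_sub_mul_bounded h hφ L
  have hint : Integrable (fun z : SpaceTime N × SpaceTime N =>
      dampedKernel L T (z.1 - z.2) * (h.adjHeat z.1 - L * φ z.1)) (volume.prod m) :=
    (integrable_dampedKernel_sub L T m).mul_bdd (c := C)
      (hcont.comp continuous_fst).aestronglyMeasurable (Eventually.of_forall fun z => hC z.1)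
  have hfubini := integral_integral_swap
    (f := fun p q : SpaceTime N => dampedKernel L T (p - q) * (h.adjHeat p - L * φ p)) hint
  simp only [integral_mul_const, ← toReal_dampedPotential] at hfubini
  rw [hfubini, ← integral_neg]
  refine integral_congr_ae ?_
  filter_upwards [ae_nonneg_of_measure_neg_eq_zero hm] with q hq
  exact integral_dampedKernel_sub_mul h hφ L hT hq

end DampedKernel

/-! ### Solutions with absorption on the whole space -/

section AbsorptionSol

variable {N : ℕ}

/-- `u` is a weak solution, for the strip `0 < t < T`, of `∂_t u - Δu + f = 0` on the whole space
with initial measure `κ`. In applications the absorption term is `f p = b p (u p)`. -/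
structure IsAbsorptionSol (T : ℝ) (κ : Measure (Euc N)) (u f : SpaceTime N → ℝ) : Prop where
  nonneg : ∀ p, 0 ≤ u p
  integrable : Integrable u
  eq_zero : ∀ p : SpaceTime N, ¬(0 < p.2 ∧ p.2 < T) → u p = 0
  integrable_absorption : Integrable f
  weak : ∀ (φ : SpaceTime N → ℝ) (h : HeatJet φ), HasCompactSupport φ →
    (∀ p ∈ tsupport φ, p.2 < T) →
    -(∫ p, u p * h.adjHeat p) + (∫ p, φ p * f p) = ∫ x, φ (x, 0) ∂κ

/-- The initial measure `κ` placed in the hyperplane `t = 0` of space-time. -/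
def initialLift (κ : Measure (Euc N)) : Measure (SpaceTime N) := κ.map fun x => (x, 0)

instance isFiniteMeasure_initialLift (κ : Measure (Euc N)) [IsFiniteMeasure κ] :
    IsFiniteMeasure (initialLift κ) :=
  inferInstanceAs (IsFiniteMeasure (κ.map fun x => (x, 0)))

lemma measurable_prodMk_zero : Measurable (fun x : Euc N => ((x, 0) : SpaceTime N)) := by fun_prop

lemma initialLift_univ (κ : Measure (Euc N)) : initialLift κ univ = κ univ := by
  rw [initialLift, Measure.map_apply measurable_prodMk_zero MeasurableSet.univ, preimage_univ]

lemma initialLift_neg_eq_zero (κ : Measure (Euc N)) : initialLift κ {q | q.2 < 0} = 0 := by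
  rw [initialLift, Measure.map_apply measurable_prodMk_zero
    (measurableSet_lt measurable_snd measurable_const)]
  simp

lemma integral_initialLift (κ : Measure (Euc N)) {φ : SpaceTime N → ℝ} (hφ : Continuous φ) :
    ∫ q, φ q ∂(initialLift κ) = ∫ x, φ (x, 0) ∂κ := by
  rw [initialLift, integral_map measurable_prodMk_zero.aemeasurable hφ.aestronglyMeasurable]

instance sFinite_initialLift_add_withDensity (κ : Measure (Euc N)) [IsFiniteMeasure κ]
    (F : SpaceTime N → ℝ≥0∞) :
    SFinite (initialLift κ + (volume : Measure (SpaceTime N)).withDensity F) := by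
  have : SFinite ((volume : Measure (SpaceTime N)).withDensity F) := inferInstance
  infer_instance

lemma initialLift_add_withDensity_neg_eq_zero (κ : Measure (Euc N)) {F : SpaceTime N → ℝ≥0∞}
    (hF : ∀ p : SpaceTime N, p.2 ≤ 0 → F p = 0) :
    (initialLift κ + volume.withDensity F) {q | q.2 < 0} = 0 := by
  have hneg : MeasurableSet {q : SpaceTime N | q.2 < 0} :=
    measurableSet_lt measurable_snd measurable_const
  rw [Measure.add_apply, initialLift_neg_eq_zero, zero_add, withDensity_apply _ hneg,
    setLIntegral_congr_fun (g := fun _ => 0) hneg fun p hp => hF p (le_of_lt hp), lintegral_zero]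

lemma integrable_mul_of_hasCompactSupport {X : Type*} [TopologicalSpace X] [MeasurableSpace X]
    [OpensMeasurableSpace X] {μ : Measure X} {φ u : X → ℝ} (hφc : Continuous φ)
    (hφ : HasCompactSupport φ) (hu : Integrable u μ) : Integrable (fun p => u p * φ p) μ := by
  obtain ⟨C, hC⟩ := hφ.exists_bound_of_continuous hφc
  exact hu.mul_bdd (c := C) hφc.aestronglyMeasurable (Eventually.of_forall hC)

section FixedPoint

variable {L T : ℝ} {κ : Measure (Euc N)} [IsFiniteMeasure κ] {U F : SpaceTime N → ℝ≥0∞}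
  (hF : Measurable F) (hF_fin : ∫⁻ p, F p ≠ ⊤) (hF₀ : ∀ p : SpaceTime N, p.2 ≤ 0 → F p = 0)
  (hU : ∀ p, U p = {p : SpaceTime N | p.2 < T}.indicator
    (dampedPotential L T (initialLift κ + volume.withDensity F)) p)
include hF hF_fin hF₀ hU

lemma integral_toReal_mul_of_fixedPoint {φ : SpaceTime N → ℝ} (h : HeatJet φ)
    (hφ : HasCompactSupport φ) (hT : ∀ p ∈ tsupport φ, p.2 < T) :
    ∫ p, (U p).toReal * (h.adjHeat p - L * φ p) =
      -(∫ x, φ (x, 0) ∂κ + ∫ p, (F p).toReal * φ p) := by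
  have : IsFiniteMeasure (volume.withDensity F) := isFiniteMeasure_withDensity hF_fin
  obtain ⟨C, hC⟩ := hφ.exists_bound_of_continuous h.cont
  have hint (m : Measure (SpaceTime N)) [IsFiniteMeasure m] : Integrable φ m :=
    Integrable.of_bound h.cont.aestronglyMeasurable C (Eventually.of_forall hC)
  have hpot := integral_dampedPotential_mul h hφ L hT
    (initialLift_add_withDensity_neg_eq_zero κ hF₀)
  rw [integral_add_measure (hint _) (hint _), integral_initialLift κ h.cont,
    integral_withDensity_eq_integral_toReal_smul hF (ae_lt_top hF hF_fin)] at hpot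
  simp only [smul_eq_mul] at hpot
  rw [← hpot]
  congr 1 with p
  by_cases hp : p ∈ tsupport φ
  · rw [hU, indicator_of_mem (show p ∈ {p : SpaceTime N | p.2 < T} from hT p hp)]
  · simp [h.adjHeat_eq_zero hp, image_eq_zero_of_notMem_tsupport hp]

lemma isAbsorptionSol_of_fixedPoint {f : SpaceTime N → ℝ} (hUm : Measurable U)
    (hU_fin : ∫⁻ p, U p ≠ ⊤) (hf : Integrable f)
    (hfF : ∀ p, (F p).toReal = L * (U p).toReal - f p) :
    IsAbsorptionSol T κ (fun p => (U p).toReal) f := by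
  have hUi : Integrable fun p => (U p).toReal :=
    integrable_toReal_of_lintegral_ne_top hUm.aemeasurable hU_fin
  refine ⟨fun _ => ENNReal.toReal_nonneg, hUi, fun p hp => ?_, hf, fun φ h hφ hT => ?_⟩
  · rw [hU]
    by_cases hpT : p ∈ {p : SpaceTime N | p.2 < T}
    · rw [indicator_of_mem hpT, dampedPotential_eq_zero L T
        (initialLift_add_withDensity_neg_eq_zero κ hF₀) (not_lt.1 fun h₀ => hp ⟨h₀, hpT⟩),
        ENNReal.toReal_zero]
    · rw [indicator_of_notMem hpT, ENNReal.toReal_zero]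
  · have hUheat := integrable_mul_of_hasCompactSupport h.continuous_adjHeat
      (h.hasCompactSupport_adjHeat hφ) hUi
    have hUφ := (integrable_mul_of_hasCompactSupport h.cont hφ hUi).const_mul L
    have hfφ := integrable_mul_of_hasCompactSupport h.cont hφ hf
    have hweak := integral_toReal_mul_of_fixedPoint hF hF_fin hF₀ hU h hφ hT
    simp only [hfF, mul_sub, sub_mul, mul_left_comm _ L, mul_assoc L] at hweak
    rw [integral_sub hUheat hUφ, integral_sub hUφ hfφ] at hweak
    simp only [mul_comm (φ _)]
    linarith

end FixedPoint

/-- The solution on the whole space of the heat equation, without absorption, with initial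
measure `κ`, cut off to `0 < t < T`. -/
def freeSol (T : ℝ) (κ : Measure (Euc N)) (p : SpaceTime N) : ℝ :=
  ({p : SpaceTime N | p.2 < T}.indicator (dampedPotential 0 T (initialLift κ)) p).toReal

lemma measurableSet_time_lt (T : ℝ) : MeasurableSet {p : SpaceTime N | p.2 < T} :=
  measurableSet_lt measurable_snd measurable_const

lemma isAbsorptionSol_freeSol (T : ℝ) (κ : Measure (Euc N)) [IsFiniteMeasure κ] :
    IsAbsorptionSol T κ (freeSol T κ) (fun _ => 0) := by
  refine isAbsorptionSol_of_fixedPoint (L := 0) (F := fun _ => 0) measurable_const (by simp)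
    (by simp) (by simp)
    ((measurable_dampedPotential 0 T _).indicator (measurableSet_time_lt T)) ?_
    (integrable_zero _ _ _) (by simp)
  refine ne_top_of_le_ne_top ?_ (lintegral_mono (indicator_le_self _ _))
  rw [lintegral_dampedPotential]
  exact ENNReal.mul_ne_top ENNReal.ofReal_ne_top (measure_ne_top _ _)

/-- `b` is a nonnegative absorption term, `b p s` being the absorption at the space-time point `p`
and the value `s` of the solution, with one-sided Lipschitz constant `L`. -/
structure IsAbsorption (L : ℝ) (b : SpaceTime N → ℝ → ℝ) : Prop where
  measurable : Measurable (Function.uncurry b)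
  nonneg : ∀ p s, 0 ≤ b p s
  map_zero : ∀ p, b p 0 = 0
  continuous : ∀ p, Continuous (b p)
  monotone_sub : ∀ p, Monotone fun s => L * s - b p s

/-- The source `L u - b(·, u)` of the damped equation equivalent to the equation with absorption
`b`. -/
def picardSource (L : ℝ) (b : SpaceTime N → ℝ → ℝ) (U : SpaceTime N → ℝ≥0∞)
    (p : SpaceTime N) : ℝ≥0∞ :=
  ENNReal.ofReal (L * (U p).toReal - b p (U p).toReal)

/-- The solution on `t < T` of the damped equation with the source given by `U`. -/
def picardStep (L T : ℝ) (κ : Measure (Euc N)) (b : SpaceTime N → ℝ → ℝ)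
    (U : SpaceTime N → ℝ≥0∞) : SpaceTime N → ℝ≥0∞ :=
  {p : SpaceTime N | p.2 < T}.indicator
    (dampedPotential L T (initialLift κ + volume.withDensity (picardSource L b U)))

/-- The Picard iterates started from zero. -/
def picardSeq (L T : ℝ) (κ : Measure (Euc N)) (b : SpaceTime N → ℝ → ℝ) :
    ℕ → SpaceTime N → ℝ≥0∞
  | 0 => 0
  | k + 1 => picardStep L T κ b (picardSeq L T κ b k)

section Picard

variable {L T : ℝ} {κ : Measure (Euc N)} [IsFiniteMeasure κ] {b : SpaceTime N → ℝ → ℝ}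
  {U V : SpaceTime N → ℝ≥0∞} {p : SpaceTime N}

lemma dampedPotential_add_withDensity (L T : ℝ) (m : Measure (SpaceTime N))
    {F : SpaceTime N → ℝ≥0∞} (hF : Measurable F) (p : SpaceTime N) :
    dampedPotential L T (m + volume.withDensity F) p =
      dampedPotential L T m p + ∫⁻ q, F q * ENNReal.ofReal (dampedKernel L T (p - q)) := by
  have hmeas : Measurable fun q : SpaceTime N => ENNReal.ofReal (dampedKernel L T (p - q)) :=
    ((measurable_dampedKernel L T).comp (by fun_prop : Measurable fun q => p - q)).ennreal_ofReal
  simp only [dampedPotential]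
  rw [lintegral_add_measure, lintegral_withDensity_eq_lintegral_mul _ hF hmeas]
  rfl

namespace IsAbsorption

variable (hb : IsAbsorption L b)
include hb

lemma le_mul {s : ℝ} (hs : 0 ≤ s) : b p s ≤ L * s := by
  have hmono := hb.monotone_sub p hs
  simp only [hb.map_zero] at hmono
  linarith

lemma measurable_comp {u : SpaceTime N → ℝ} (hu : Measurable u) : Measurable fun p => b p (u p) :=
  hb.measurable.comp (measurable_id.prodMk hu)

lemma integrable_comp {u : SpaceTime N → ℝ} (hu : Measurable u) (hu₀ : ∀ p, 0 ≤ u p)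
    (hui : Integrable u) : Integrable fun p => b p (u p) := by
  refine (hui.const_mul L).mono' (hb.measurable_comp hu).aestronglyMeasurable
    (Eventually.of_forall fun p => ?_)
  rw [Real.norm_of_nonneg (hb.nonneg _ _)]
  exact hb.le_mul (hu₀ p)

lemma measurable_picardSource (hU : Measurable U) : Measurable (picardSource L b U) :=
  ((hU.ennreal_toReal.const_mul L).sub (hb.measurable_comp hU.ennreal_toReal)).ennreal_ofReal

lemma picardSource_eq_zero (hp : U p = 0) : picardSource L b U p = 0 := by
  simp [picardSource, hp, hb.map_zero]

lemma picardSource_le (hL : 0 ≤ L) (U : SpaceTime N → ℝ≥0∞) (p : SpaceTime N) :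
    picardSource L b U p ≤ ENNReal.ofReal L * U p :=
  calc
    picardSource L b U p ≤ ENNReal.ofReal (L * (U p).toReal) :=
      ENNReal.ofReal_le_ofReal (sub_le_self _ (hb.nonneg p _))
    _ = ENNReal.ofReal L * ENNReal.ofReal (U p).toReal := ENNReal.ofReal_mul hL
    _ ≤ ENNReal.ofReal L * U p := by gcongr; exact ENNReal.ofReal_toReal_le

lemma picardSource_mono (hUV : U p ≤ V p) (hV : V p < ⊤) :
    picardSource L b U p ≤ picardSource L b V p :=
  ENNReal.ofReal_le_ofReal (hb.monotone_sub p (ENNReal.toReal_mono hV.ne hUV))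

lemma lintegral_picardSource_le (hL : 0 ≤ L) (hU : Measurable U) :
    ∫⁻ p, picardSource L b U p ≤ ENNReal.ofReal L * ∫⁻ p, U p :=
  (lintegral_mono (hb.picardSource_le hL U)).trans_eq (lintegral_const_mul _ hU)

omit [IsFiniteMeasure κ] in
lemma picardSeq_eq_zero (k : ℕ) (hp : p.2 ≤ 0) : picardSeq L T κ b k p = 0 := by
  induction k generalizing p with
  | zero => rfl
  | succ k ih =>
    exact indicator_apply_eq_zero.2 fun _ => dampedPotential_eq_zero L T
      (initialLift_add_withDensity_neg_eq_zero κ fun q hq => hb.picardSource_eq_zero (ih hq)) hp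

end IsAbsorption

lemma measurable_picardSeq (L T : ℝ) (b : SpaceTime N → ℝ → ℝ) (k : ℕ) :
    Measurable (picardSeq L T κ b k) := by
  cases k with
  | zero => exact measurable_const
  | succ k => exact (measurable_dampedPotential L T _).indicator (measurableSet_time_lt T)

variable (κ) in
/-- A bound for the mass of the Picard iterates: the fixed point `M` of
`M = dampedMass L T * (κ univ + L * M)`. -/
def picardMass (L T : ℝ) : ℝ := dampedMass L T * (κ univ).toReal / (1 - L * dampedMass L T)

namespace IsAbsorption

variable (hb : IsAbsorption L b)
include hb

lemma lintegral_picardSeq_le (hL : 0 ≤ L) (hT : 0 < T) (k : ℕ) :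
    ∫⁻ p, picardSeq L T κ b k p ≤ ENNReal.ofReal (picardMass κ L T) := by
  have hgap : 0 < 1 - L * dampedMass L T := sub_pos.2 (mul_dampedMass_lt_one hT)
  have hM : 0 ≤ picardMass κ L T :=
    div_nonneg (mul_nonneg (dampedMass_nonneg L T) ENNReal.toReal_nonneg) hgap.le
  have hM_eq : dampedMass L T * ((κ univ).toReal + L * picardMass κ L T) = picardMass κ L T := by
    have hmul : picardMass κ L T * (1 - L * dampedMass L T) = dampedMass L T * (κ univ).toReal :=
      div_mul_cancel₀ _ hgap.ne'
    linarith
  induction k with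
  | zero => simp [picardSeq]
  | succ k ih =>
    calc
      ∫⁻ p, picardSeq L T κ b (k + 1) p
        ≤ ∫⁻ p, dampedPotential L T
            (initialLift κ + volume.withDensity (picardSource L b (picardSeq L T κ b k))) p :=
        lintegral_mono (indicator_le_self _ _)
      _ = ENNReal.ofReal (dampedMass L T) *
            (κ univ + ∫⁻ p, picardSource L b (picardSeq L T κ b k) p) := by
        rw [lintegral_dampedPotential, Measure.add_apply, initialLift_univ,
          withDensity_apply _ MeasurableSet.univ, setLIntegral_univ]
      _ ≤ ENNReal.ofReal (dampedMass L T) *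
            (κ univ + ENNReal.ofReal L * ENNReal.ofReal (picardMass κ L T)) := by
        gcongr
        exact (hb.lintegral_picardSource_le hL (measurable_picardSeq L T b k)).trans (by gcongr)
      _ = ENNReal.ofReal (picardMass κ L T) := by
        rw [← ENNReal.ofReal_toReal (measure_ne_top κ univ), ← ENNReal.ofReal_mul hL,
          ← ENNReal.ofReal_add ENNReal.toReal_nonneg (mul_nonneg hL hM),
          ← ENNReal.ofReal_mul (dampedMass_nonneg L T), hM_eq]

lemma monotone_picardSeq (hL : 0 ≤ L) (hT : 0 < T) : Monotone (picardSeq L T κ b) := by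
  refine monotone_nat_of_le_succ fun k => ?_
  induction k with
  | zero => exact fun _ => bot_le
  | succ k ih =>
    intro p
    refine indicator_le_indicator'
      (f := dampedPotential L T
        (initialLift κ + volume.withDensity (picardSource L b (picardSeq L T κ b k)))) fun _ => ?_
    refine lintegral_mono' (add_le_add le_rfl (withDensity_mono ?_)) le_rfl
    filter_upwards [ae_lt_top (measurable_picardSeq (κ := κ) L T b (k + 1))
      (ne_top_of_le_ne_top ENNReal.ofReal_ne_top (hb.lintegral_picardSeq_le hL hT (k + 1)))]
      with q hq using hb.picardSource_mono (ih q) hq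

lemma lintegral_iSup_picardSeq_ne_top (hL : 0 ≤ L) (hT : 0 < T) :
    ∫⁻ p, ⨆ k, picardSeq L T κ b k p ≠ ⊤ := by
  rw [lintegral_iSup (measurable_picardSeq L T b) (hb.monotone_picardSeq hL hT)]
  exact ne_top_of_le_ne_top ENNReal.ofReal_ne_top (iSup_le (hb.lintegral_picardSeq_le hL hT))

lemma tendsto_picardSource {U : ℕ → SpaceTime N → ℝ≥0∞}
    (hUV : Tendsto (fun k => U k p) atTop (𝓝 (V p))) (hV : V p < ⊤) :
    Tendsto (fun k => picardSource L b (U k) p) atTop (𝓝 (picardSource L b V p)) := by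
  have hreal := (ENNReal.tendsto_toReal hV.ne).comp hUV
  exact ENNReal.tendsto_ofReal
    ((hreal.const_mul L).sub (((hb.continuous p).tendsto _).comp hreal))

lemma iSup_picardSeq_eq_picardStep (hL : 0 ≤ L) (hT : 0 < T) (p : SpaceTime N) :
    ⨆ k, picardSeq L T κ b k p = picardStep L T κ b (fun q => ⨆ k, picardSeq L T κ b k q) p := by
  have hmono := hb.monotone_picardSeq (κ := κ) hL hT
  have hlim (q) : Tendsto (fun k => picardSeq L T κ b k q) atTop (𝓝 (⨆ k, picardSeq L T κ b k q)) :=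
    tendsto_atTop_iSup fun _ _ hij => hmono hij q
  have hmeas : Measurable fun q => ⨆ k, picardSeq L T κ b k q :=
    Measurable.iSup (measurable_picardSeq L T b)
  have hfin := ae_lt_top hmeas (hb.lintegral_iSup_picardSeq_ne_top (κ := κ) hL hT)
  refine tendsto_nhds_unique ((tendsto_add_atTop_iff_nat 1).2 (hlim p)) ?_
  by_cases hp : p ∈ {p : SpaceTime N | p.2 < T}
  · simp only [picardSeq, picardStep, indicator_of_mem hp, dampedPotential_add_withDensity L T _
      (hb.measurable_picardSource (measurable_picardSeq L T b _)),
      dampedPotential_add_withDensity L T _ (hb.measurable_picardSource hmeas)]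
    have hkernel : Measurable fun q : SpaceTime N => ENNReal.ofReal (dampedKernel L T (p - q)) :=
      ((measurable_dampedKernel L T).comp (by fun_prop : Measurable fun q => p - q)).ennreal_ofReal
    refine tendsto_const_nhds.add (lintegral_tendsto_of_tendsto_of_monotone (fun k =>
      ((hb.measurable_picardSource (measurable_picardSeq L T b k)).mul hkernel).aemeasurable) ?_ ?_)
    · filter_upwards [hfin] with q hq i j hij
      exact mul_le_mul_left (hb.picardSource_mono (hmono hij q)
        ((le_iSup (fun k => picardSeq L T κ b k q) j).trans_lt hq)) _
    · filter_upwards [hfin] with q hq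
      exact ENNReal.Tendsto.mul_const (hb.tendsto_picardSource (hlim q) hq)
        (Or.inr ENNReal.ofReal_ne_top)
  · simp only [picardSeq, picardStep, indicator_of_notMem hp]
    exact tendsto_const_nhds

lemma exists_isAbsorptionSol (hL : 0 ≤ L) (hT : 0 < T) (κ : Measure (Euc N)) [IsFiniteMeasure κ] :
    ∃ u, IsAbsorptionSol T κ u (fun p => b p (u p)) := by
  set W : SpaceTime N → ℝ≥0∞ := fun p => ⨆ k, picardSeq L T κ b k p
  have hW : Measurable W := Measurable.iSup (measurable_picardSeq L T b)
  have hW_fin : ∫⁻ p, W p ≠ ⊤ := hb.lintegral_iSup_picardSeq_ne_top hL hT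
  have hsource_fin : ∫⁻ p, picardSource L b W p ≠ ⊤ :=
    ne_top_of_le_ne_top (ENNReal.mul_ne_top ENNReal.ofReal_ne_top hW_fin)
      (hb.lintegral_picardSource_le hL hW)
  refine ⟨fun p => (W p).toReal, isAbsorptionSol_of_fixedPoint (hb.measurable_picardSource hW)
    hsource_fin (fun p hp => hb.picardSource_eq_zero ?_) (hb.iSup_picardSeq_eq_picardStep hL hT)
    hW hW_fin ?_ fun p => ?_⟩
  · simp only [W, hb.picardSeq_eq_zero _ hp, iSup_const]
  · exact hb.integrable_comp hW.ennreal_toReal (fun _ => ENNReal.toReal_nonneg)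
      (integrable_toReal_of_lintegral_ne_top hW.aemeasurable hW_fin)
  · exact ENNReal.toReal_ofReal (sub_nonneg.2 (hb.le_mul ENNReal.toReal_nonneg))

end IsAbsorption

end Picard

end AbsorptionSol

/-! ### Mollification -/

section L1Convergence

variable {X : Type*} [MeasurableSpace X] {μ : Measure X} {f : X → ℝ} {F : ℕ → X → ℝ}

lemma tendsto_integral_abs_sub (hf : Integrable f μ) (hF : ∀ n, Integrable (F n) μ)
    (hle : ∀ n, ∫ x, |F n x| ∂μ ≤ ∫ x, |f x| ∂μ)
    (hlim : ∀ᵐ x ∂μ, Tendsto (fun n => F n x) atTop (𝓝 (f x))) :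
    Tendsto (fun n => ∫ x, |F n x - f x| ∂μ) atTop (𝓝 0) := by
  -- The defect in the triangle inequality is dominated by `2 * |f|`.
  have hdefect : Tendsto (fun n => ∫ x, (|f x| + |F n x| - |F n x - f x|) ∂μ) atTop
      (𝓝 (∫ x, 2 * |f x| ∂μ)) := by
    refine tendsto_integral_of_dominated_convergence (fun x => 2 * |f x|) (fun n =>
      ((hf.abs.add (hF n).abs).sub ((hF n).sub hf).abs).aestronglyMeasurable)
      (hf.abs.const_mul 2) (fun n => Eventually.of_forall fun x => ?_) ?_
    · rw [Real.norm_eq_abs, abs_le]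
      have hsub := abs_sub (F n x) (f x)
      have hsub' := abs_sub_abs_le_abs_sub (F n x) (f x)
      constructor <;> linarith [abs_nonneg (f x)]
    · filter_upwards [hlim] with x hx
      simpa [two_mul] using ((tendsto_const_nhds (x := |f x|)).add hx.abs).sub
        (hx.sub_const (f x)).abs
  have hgap := (tendsto_const_nhds (x := 2 * ∫ x, |f x| ∂μ)).sub hdefect
  rw [integral_const_mul, sub_self] at hgap
  refine squeeze_zero (fun n => integral_nonneg fun _ => abs_nonneg _) (fun n => ?_) hgap
  have hsplit : ∫ x, (|f x| + |F n x| - |F n x - f x|) ∂μ =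
      (∫ x, |f x| ∂μ) + (∫ x, |F n x| ∂μ) - (∫ x, |F n x - f x| ∂μ) := by
    have hdiff : Integrable (fun x => |F n x - f x|) μ := ((hF n).sub hf).abs
    have hsum : Integrable (fun x => |f x| + |F n x|) μ := hf.abs.add (hF n).abs
    rw [integral_sub hsum hdiff, integral_add hf.abs (hF n).abs]
  linarith [hle n]

lemma tendsto_integral_mul_of_tendsto_integral_abs_sub {c : X → ℝ} {c' : ℕ → X → ℝ} {C : ℝ}
    (hf : Integrable f μ) (hF : ∀ n, Integrable (F n) μ)
    (hlim : Tendsto (fun n => ∫ x, |F n x - f x| ∂μ) atTop (𝓝 0))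
    (hc : ∀ n, AEStronglyMeasurable (c' n) μ) (hC : ∀ n x, |c' n x| ≤ C)
    (hc_lim : ∀ᵐ x ∂μ, Tendsto (fun n => c' n x) atTop (𝓝 (c x))) :
    Tendsto (fun n => ∫ x, c' n x * F n x ∂μ) atTop (𝓝 (∫ x, c x * f x ∂μ)) := by
  have hcf (n) {k : X → ℝ} (hk : Integrable k μ) : Integrable (fun x => c' n x * k x) μ :=
    hk.bdd_mul (hc n) (Eventually.of_forall (hC n))
  have hcf_lim : Tendsto (fun n => ∫ x, c' n x * f x ∂μ) atTop (𝓝 (∫ x, c x * f x ∂μ)) := by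
    refine tendsto_integral_of_dominated_convergence (fun x => C * |f x|)
      (fun n => (hcf n hf).aestronglyMeasurable) (hf.abs.const_mul C)
      (fun n => Eventually.of_forall fun x => ?_) ?_
    · rw [Real.norm_eq_abs, abs_mul]
      exact mul_le_mul_of_nonneg_right (hC n x) (abs_nonneg _)
    · filter_upwards [hc_lim] with x hx using hx.mul_const _
  have hdiff : Tendsto (fun n => ∫ x, c' n x * (F n x - f x) ∂μ) atTop (𝓝 0) := by
    refine squeeze_zero_norm (fun n => ?_) (by simpa using hlim.const_mul C)
    rw [← integral_const_mul]
    refine norm_integral_le_of_norm_le (((hF n).sub hf).abs.const_mul C)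
      (Eventually.of_forall fun x => ?_)
    rw [norm_mul]
    exact mul_le_mul_of_nonneg_right (hC n x) (norm_nonneg _)
  have hsum := hdiff.add hcf_lim
  rw [zero_add] at hsum
  refine hsum.congr fun n => ?_
  have hFf : Integrable (fun x => F n x - f x) μ := (hF n).sub hf
  rw [← integral_add (hcf n hFf) (hcf n hf)]
  simp only [mul_sub, sub_add_cancel]

end L1Convergence

section Mollify

lemma integrable_comp_sub_mul {E : Type*} [NormedAddCommGroup E] [MeasureSpace E] [BorelSpace E]
    {ρ f : E → ℝ} (hρ : Continuous ρ) (hρc : HasCompactSupport ρ) (hf : Integrable f) (p : E) :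
    Integrable fun q => ρ (p - q) * f q := by
  obtain ⟨C, hC⟩ := hρc.exists_bound_of_continuous hρ
  exact hf.bdd_mul (c := C) (hρ.comp (continuous_sub_left p)).aestronglyMeasurable
    (Eventually.of_forall fun q => hC _)

variable {E : Type*} [NormedAddCommGroup E] [NormedSpace ℝ E] [FiniteDimensional ℝ E]
  [MeasureSpace E] [BorelSpace E] [(volume : Measure E).IsAddHaarMeasure] {ρ f : E → ℝ}

open scoped Convolution in
/-- The convolution of a real function with the real kernel `ρ`. -/
def mollify (ρ f : E → ℝ) : E → ℝ := ρ ⋆[ContinuousLinearMap.lsmul ℝ ℝ, volume] f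

lemma mollify_apply (ρ f : E → ℝ) (p : E) : mollify ρ f p = ∫ q, ρ (p - q) * f q :=
  convolution_lsmul_swap

lemma contDiff_mollify (hρ : ContDiff ℝ ∞ ρ) (hρc : HasCompactSupport ρ) (hf : Integrable f) :
    ContDiff ℝ ∞ (mollify ρ f) :=
  hρc.contDiff_convolution_left (n := (⊤ : ℕ∞)) _ hρ hf.locallyIntegrable

lemma hasLineDerivAt_mollify (hρ : ContDiff ℝ ∞ ρ) (hρc : HasCompactSupport ρ)
    (hf : Integrable f) (p v : E) :
    HasLineDerivAt ℝ (mollify ρ f) (mollify (fun q => fderiv ℝ ρ q v) f p) p v := by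
  have hderiv : HasFDerivAt (mollify ρ f) _ p := hρc.hasFDerivAt_convolution_left
    (ContinuousLinearMap.lsmul ℝ ℝ) (hρ.of_le (by exact_mod_cast le_top)) hf.locallyIntegrable p
  convert hderiv.hasLineDerivAt v using 1
  have hint := ((hρc.fderiv (𝕜 := ℝ)).convolutionExists_left
    ((ContinuousLinearMap.lsmul ℝ ℝ).precompL E) (hρ.continuous_fderiv (by simp))
    hf.locallyIntegrable p).integrable_swap
  rw [mollify_apply, convolution_eq_swap, ContinuousLinearMap.integral_apply hint]
  simp

variable [HasContDiffBump E]

/-- A sequence of smooth bumps at the origin whose supports shrink to a point. -/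
def shrinkingBump (E : Type*) [NormedAddCommGroup E] (n : ℕ) : ContDiffBump (0 : E) where
  rIn := 1 / (2 * ((n : ℝ) + 1))
  rOut := 1 / ((n : ℝ) + 1)
  rIn_pos := by positivity
  rIn_lt_rOut := by
    apply one_div_lt_one_div_of_lt <;> nlinarith [(Nat.cast_nonneg n : (0 : ℝ) ≤ n)]

variable (E) in
/-- The standard sequence of mollifiers, of unit mass and supported in the ball of radius
`1 / (n + 1)`. -/
def stdMollifier (n : ℕ) : E → ℝ := (shrinkingBump E n).normed volume

omit [FiniteDimensional ℝ E] [BorelSpace E] [(volume : Measure E).IsAddHaarMeasure] in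
lemma contDiff_stdMollifier (n : ℕ) : ContDiff ℝ ∞ (stdMollifier E n) :=
  (shrinkingBump E n).contDiff_normed

lemma hasCompactSupport_stdMollifier (n : ℕ) : HasCompactSupport (stdMollifier E n) :=
  (shrinkingBump E n).hasCompactSupport_normed

omit [FiniteDimensional ℝ E] [BorelSpace E] [(volume : Measure E).IsAddHaarMeasure] in
lemma stdMollifier_nonneg (n : ℕ) (p : E) : 0 ≤ stdMollifier E n p :=
  (shrinkingBump E n).nonneg_normed p

lemma integral_stdMollifier (n : ℕ) : ∫ p, stdMollifier E n p = 1 :=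
  (shrinkingBump E n).integral_normed

lemma tsupport_stdMollifier_sub_subset (n : ℕ) (p : E) :
    tsupport (fun q => stdMollifier E n (p - q)) ⊆ Metric.closedBall p (1 / ((n : ℝ) + 1)) := by
  refine closure_minimal (fun q hq => ?_) Metric.isClosed_closedBall
  have hmem : p - q ∈ tsupport (stdMollifier E n) := subset_tsupport _ hq
  rw [stdMollifier, ContDiffBump.tsupport_normed_eq] at hmem
  rw [Metric.mem_closedBall, dist_comm, dist_eq_norm]
  exact mem_closedBall_zero_iff.1 hmem

lemma integrable_stdMollifier (n : ℕ) : Integrable (stdMollifier E n) :=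
  (contDiff_stdMollifier n).continuous.integrable_of_hasCompactSupport
    (hasCompactSupport_stdMollifier n)

lemma integrable_mollify (n : ℕ) (hf : Integrable f) :
    Integrable (mollify (stdMollifier E n) f) :=
  (integrable_stdMollifier n).integrable_convolution _ hf

lemma integral_abs_mollify_le (n : ℕ) (hf : Integrable f) :
    ∫ p, |mollify (stdMollifier E n) f p| ≤ ∫ p, |f p| := by
  have hmass : ∫ p, mollify (stdMollifier E n) (fun q => |f q|) p = ∫ p, |f p| := by
    have hprod := integral_convolution (ContinuousLinearMap.lsmul ℝ ℝ)
      (integrable_stdMollifier (E := E) n) hf.abs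
    rwa [integral_stdMollifier, ContinuousLinearMap.lsmul_apply, one_smul] at hprod
  rw [← hmass]
  refine integral_mono (integrable_mollify n hf).abs (integrable_mollify n hf.abs) fun p => ?_
  simp only [mollify_apply]
  refine abs_integral_le_integral_abs.trans_eq
    (integral_congr_ae (Eventually.of_forall fun q => ?_))
  simp only [abs_mul, abs_of_nonneg (stdMollifier_nonneg n _)]

lemma ae_tendsto_mollify (hf : Integrable f) :
    ∀ᵐ p, Tendsto (fun n => mollify (stdMollifier E n) f p) atTop (𝓝 (f p)) := by
  refine ContDiffBump.ae_convolution_tendsto_right_of_locallyIntegrable (φ := shrinkingBump E)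
    (K := 2) tendsto_one_div_add_atTop_nhds_zero_nat ?_ hf.locallyIntegrable
  refine Eventually.of_forall fun n => le_of_eq ?_
  have hn : (n : ℝ) + 1 ≠ 0 := by positivity
  simp only [shrinkingBump]
  field_simp

lemma tendsto_integral_abs_mollify_sub (hf : Integrable f) :
    Tendsto (fun n => ∫ p, |mollify (stdMollifier E n) f p - f p|) atTop (𝓝 0) :=
  tendsto_integral_abs_sub hf (fun n => integrable_mollify n hf)
    (fun n => integral_abs_mollify_le n hf) (ae_tendsto_mollify hf)

end Mollify

/-! ### Kato's inequality for the heat operator -/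

section Kato

variable {N : ℕ} {φ ρ u F : SpaceTime N → ℝ} {U : Set (SpaceTime N)}

lemma hasLineDerivAt_const_sub {E : Type*} [NormedAddCommGroup E] [NormedSpace ℝ E] {f : E → ℝ}
    {a : ℝ} {x v : E} (y : E) (hf : HasLineDerivAt ℝ f a (y - x) v) :
    HasLineDerivAt ℝ (fun z => f (y - z)) (-a) x v := by
  have hf₀ : HasDerivAt (fun t : ℝ => f (y - x + t • v)) a (-0) := by rw [neg_zero]; exact hf
  have hcomp := hf₀.comp (0 : ℝ) (hasDerivAt_neg (0 : ℝ))
  rw [mul_neg_one] at hcomp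
  refine HasDerivAt.congr_of_eventuallyEq hcomp (Eventually.of_forall fun t => ?_)
  simp only [Function.comp_apply, neg_smul]
  congr 1
  abel

namespace HeatJet

/-- A jet of the reflected function `q ↦ φ (p - q)`. -/
def reflect (h : HeatJet φ) (p : SpaceTime N) : HeatJet (fun q => φ (p - q)) where
  dt q := -h.dt (p - q)
  d1 i q := -h.d1 i (p - q)
  d2 i q := h.d2 i (p - q)
  cont := h.cont.comp (by fun_prop)
  cont_dt := (h.cont_dt.comp (by fun_prop)).neg
  cont_d1 i := ((h.cont_d1 i).comp (by fun_prop)).neg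
  cont_d2 i := (h.cont_d2 i).comp (by fun_prop)
  line_dt q := hasLineDerivAt_const_sub p (h.line_dt (p - q))
  line_d1 i q := hasLineDerivAt_const_sub p (h.line_d1 i (p - q))
  line_d2 i q := by
    rw [← neg_neg (h.d2 i (p - q))]
    exact HasDerivAt.neg (hasLineDerivAt_const_sub p (h.line_d2 i (p - q)) : HasDerivAt _ _ _)

/-- The jet of a mollified function, obtained by differentiating the mollifier. -/
def ofMollify (hρ : ContDiff ℝ ∞ ρ) (hρc : HasCompactSupport ρ) (hu : Integrable u) :
    HeatJet (mollify ρ u) where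
  dt := mollify (fun q => fderiv ℝ ρ q (timeDir N)) u
  d1 i := mollify (fun q => fderiv ℝ ρ q (spaceDir i)) u
  d2 i := mollify (fun q => fderiv ℝ (fun q => fderiv ℝ ρ q (spaceDir i)) q (spaceDir i)) u
  cont := (contDiff_mollify hρ hρc hu).continuous
  cont_dt := (contDiff_mollify (contDiff_fderiv_apply hρ _) (hρc.fderiv_apply ℝ _) hu).continuous
  cont_d1 _ := (contDiff_mollify (contDiff_fderiv_apply hρ _) (hρc.fderiv_apply ℝ _) hu).continuous
  cont_d2 _ := (contDiff_mollify (contDiff_fderiv_apply (contDiff_fderiv_apply hρ _) _)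
    ((hρc.fderiv_apply ℝ _).fderiv_apply ℝ _) hu).continuous
  line_dt p := hasLineDerivAt_mollify hρ hρc hu p _
  line_d1 _ p := hasLineDerivAt_mollify hρ hρc hu p _
  line_d2 _ p := hasLineDerivAt_mollify (contDiff_fderiv_apply hρ _) (hρc.fderiv_apply ℝ _) hu p _

lemma dt_sub_laplacian_ofMollify (hρ : ContDiff ℝ ∞ ρ) (hρc : HasCompactSupport ρ)
    (hu : Integrable u) (p : SpaceTime N) :
    (ofMollify hρ hρc hu).dt p - (ofMollify hρ hρc hu).laplacian p =
      -∫ q, u q * ((ofContDiff hρ).reflect p).adjHeat q := by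
  have hint (i : Fin N) := integrable_comp_sub_mul
    (contDiff_fderiv_apply (contDiff_fderiv_apply hρ (spaceDir i)) (spaceDir i)).continuous
    ((hρc.fderiv_apply ℝ _).fderiv_apply ℝ _) hu p
  simp only [laplacian, ofMollify, mollify_apply]
  rw [← integral_finsetSum _ fun i _ => hint i, ← integral_sub
    (integrable_comp_sub_mul (contDiff_fderiv_apply hρ _).continuous (hρc.fderiv_apply ℝ _) hu p)
    (integrable_finsetSum _ fun i _ => hint i), ← integral_neg]
  refine integral_congr_ae (Eventually.of_forall fun q => ?_)
  simp only [adjHeat, laplacian, reflect, ofContDiff, ← Finset.sum_mul]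
  ring

lemma dt_sub_laplacian_comp_le (h : HeatJet φ) {j j' j'' : ℝ → ℝ}
    (hj : ∀ s, HasDerivAt j (j' s) s) (hj' : ∀ s, HasDerivAt j' (j'' s) s)
    (hj'' : Continuous j'') (hconvex : ∀ s, 0 ≤ j'' s) (p : SpaceTime N) :
    (h.comp hj hj' hj'').dt p - (h.comp hj hj' hj'').laplacian p ≤
      j' (φ p) * (h.dt p - h.laplacian p) := by
  have hgrad : 0 ≤ ∑ i, (j'' (φ p) * h.d1 i p) * h.d1 i p := Finset.sum_nonneg fun i _ => by
    rw [mul_assoc]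
    exact mul_nonneg (hconvex _) (mul_self_nonneg _)
  simp only [laplacian, comp, Finset.sum_add_distrib, ← Finset.mul_sum, mul_sub]
  linarith

end HeatJet

/-- `∂_t u - Δu ≤ F` on the open set `U` of space-time, in the sense of distributions. -/
def HeatLEOn (U : Set (SpaceTime N)) (u F : SpaceTime N → ℝ) : Prop :=
  ∀ (φ : SpaceTime N → ℝ) (h : ContDiff ℝ ∞ φ), HasCompactSupport φ → (∀ p, 0 ≤ φ p) →
    tsupport φ ⊆ U → -(∫ p, u p * (HeatJet.ofContDiff h).adjHeat p) ≤ ∫ p, φ p * F p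

lemma HeatLEOn.dt_sub_laplacian_mollify_le (hle : HeatLEOn U u F) (hu : Integrable u) {n : ℕ}
    {p : SpaceTime N} (hp : Metric.closedBall p (1 / ((n : ℝ) + 1)) ⊆ U) :
    let k := HeatJet.ofMollify (contDiff_stdMollifier n) (hasCompactSupport_stdMollifier n) hu
    k.dt p - k.laplacian p ≤ mollify (stdMollifier (SpaceTime N) n) F p := by
  have hψ : ContDiff ℝ ∞ fun q : SpaceTime N => stdMollifier (SpaceTime N) n (p - q) :=
    (contDiff_stdMollifier n).comp (contDiff_const.sub contDiff_id)
  intro k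
  rw [show k.dt p - k.laplacian p = _ from HeatJet.dt_sub_laplacian_ofMollify _ _ hu p,
    HeatJet.adjHeat_unique _ (.ofContDiff hψ), mollify_apply]
  exact hle _ hψ (.of_support_subset_isCompact (isCompact_closedBall p _)
    ((subset_tsupport _).trans (tsupport_stdMollifier_sub_subset n p)))
    (fun q => stdMollifier_nonneg n _) ((tsupport_stdMollifier_sub_subset n p).trans hp)

section Convex

variable {j j' j'' : ℝ → ℝ} (hj : ∀ s, HasDerivAt j (j' s) s)
  (hj' : ∀ s, HasDerivAt j' (j'' s) s) (hj'' : Continuous j'') (hconvex : ∀ s, 0 ≤ j'' s)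
  (hmono : ∀ s, 0 ≤ j' s)

include hj hj' hj'' hconvex hmono in
lemma HeatLEOn.kato_mollify (hle : HeatLEOn U u F) (hu : Integrable u) (hF : Integrable F)
    (h : HeatJet φ) (hφ : HasCompactSupport φ) (hφ₀ : ∀ p, 0 ≤ φ p) {n : ℕ}
    (hn : Metric.cthickening (1 / ((n : ℝ) + 1)) (tsupport φ) ⊆ U) :
    -(∫ p, j (mollify (stdMollifier _ n) u p) * h.adjHeat p) ≤
      ∫ p, φ p * (j' (mollify (stdMollifier _ n) u p) * mollify (stdMollifier _ n) F p) := by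
  set k : HeatJet (mollify (stdMollifier _ n) u) :=
    .ofMollify (contDiff_stdMollifier n) (hasCompactSupport_stdMollifier n) hu
  set J := k.comp hj hj' hj''
  have hj'_cont : Continuous j' := continuous_iff_continuousAt.2 fun s => (hj' s).continuousAt
  have hF_cont : Continuous (mollify (stdMollifier _ n) F) :=
    (contDiff_mollify (contDiff_stdMollifier n) (hasCompactSupport_stdMollifier n) hF).continuous
  rw [h.integral_mul_adjHeat hφ J, ← integral_neg]
  refine integral_mono ((h.cont.mul (J.continuous_laplacian.sub J.cont_dt)
      ).integrable_of_hasCompactSupport hφ.mul_right).neg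
    ((h.cont.mul ((hj'_cont.comp k.cont).mul hF_cont)).integrable_of_hasCompactSupport
      hφ.mul_right) fun p => ?_
  by_cases hp : p ∈ tsupport φ
  · have hpU : Metric.closedBall p (1 / ((n : ℝ) + 1)) ⊆ U :=
      (Metric.closedBall_subset_cthickening hp _).trans hn
    have hJ : J.dt p - J.laplacian p ≤
        j' (mollify (stdMollifier _ n) u p) * mollify (stdMollifier _ n) F p :=
      (k.dt_sub_laplacian_comp_le hj hj' hj'' hconvex p).trans
        (mul_le_mul_of_nonneg_left (hle.dt_sub_laplacian_mollify_le hu hpU) (hmono _))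
    linarith [mul_le_mul_of_nonneg_left hJ (hφ₀ p)]
  · simp [image_eq_zero_of_notMem_tsupport hp]

lemma tendsto_integral_mul_comp_mollify (hj_lip : ∀ s r, |j s - j r| ≤ |s - r|) (hj₀ : j 0 = 0)
    (hu : Integrable u) {ψ : SpaceTime N → ℝ} (hψ : Continuous ψ) (hψc : HasCompactSupport ψ) :
    Tendsto (fun n => ∫ p, ψ p * j (mollify (stdMollifier _ n) u p)) atTop
      (𝓝 (∫ p, ψ p * j (u p))) := by
  have hj_cont : Continuous j := (LipschitzWith.of_dist_le' (K := 1) fun s r => by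
    simpa [Real.dist_eq] using hj_lip s r).continuous
  have hj_int {v : SpaceTime N → ℝ} (hv : Integrable v) : Integrable fun p => j (v p) :=
    hv.mono (hj_cont.comp_aestronglyMeasurable hv.aestronglyMeasurable)
      (Eventually.of_forall fun p => by simpa [hj₀] using hj_lip (v p) 0)
  obtain ⟨C, hC⟩ := hψc.exists_bound_of_continuous hψ
  refine tendsto_integral_mul_of_tendsto_integral_abs_sub (hj_int hu)
    (fun n => hj_int (integrable_mollify n hu)) ?_
    (fun _ => hψ.aestronglyMeasurable) (fun _ => hC) (by simp)
  exact squeeze_zero (fun n => integral_nonneg fun _ => abs_nonneg _) (fun n =>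
    integral_mono ((hj_int (integrable_mollify n hu)).sub (hj_int hu)).abs
      ((integrable_mollify n hu).sub hu).abs fun p => hj_lip _ _)
    (tendsto_integral_abs_mollify_sub hu)

include hj hj' hj'' hconvex hmono in
lemma HeatLEOn.kato_of_convex (hj₀ : j 0 = 0) (hle_one : ∀ s, j' s ≤ 1) (hU : IsOpen U)
    (hle : HeatLEOn U u F) (hu : Integrable u) (hF : Integrable F)
    (h : HeatJet φ) (hφ : HasCompactSupport φ) (hφ₀ : ∀ p, 0 ≤ φ p) (hφU : tsupport φ ⊆ U) :
    -(∫ p, j (u p) * h.adjHeat p) ≤ ∫ p, φ p * (j' (u p) * F p) := by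
  have hj'_cont : Continuous j' := continuous_iff_continuousAt.2 fun s => (hj' s).continuousAt
  have hj_lip (s r) : |j s - j r| ≤ |s - r| := by
    simpa using convex_univ.norm_image_sub_le_of_norm_hasDerivWithin_le (f := j) (C := 1)
      (fun x _ => (hj x).hasDerivWithinAt) (fun x _ => by
        rw [Real.norm_of_nonneg (hmono x)]; exact hle_one x) (mem_univ r) (mem_univ s)
  obtain ⟨C, hC⟩ := hφ.exists_bound_of_continuous h.cont
  have hlhs := tendsto_integral_mul_comp_mollify hj_lip hj₀ hu h.continuous_adjHeat
    (h.hasCompactSupport_adjHeat hφ)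
  have hrhs : Tendsto (fun n => ∫ p, (φ p * j' (mollify (stdMollifier _ n) u p)) *
      mollify (stdMollifier _ n) F p) atTop (𝓝 (∫ p, (φ p * j' (u p)) * F p)) := by
    refine tendsto_integral_mul_of_tendsto_integral_abs_sub hF (fun n => integrable_mollify n hF)
      (tendsto_integral_abs_mollify_sub hF) (C := C) (fun n => h.cont.aestronglyMeasurable.mul
        (hj'_cont.comp_aestronglyMeasurable (integrable_mollify n hu).aestronglyMeasurable))
      (fun n p => ?_) ?_
    · rw [abs_mul, abs_of_nonneg (hmono _)]
      exact (mul_le_of_le_one_right (abs_nonneg _) (hle_one _)).trans (hC p)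
    · filter_upwards [ae_tendsto_mollify hu] with p hp
      exact ((hj'_cont.tendsto _).comp hp).const_mul (φ p)
  obtain ⟨ε, hε, hεU⟩ := hφ.isCompact.exists_cthickening_subset_open hU hφU
  simp only [mul_comm (h.adjHeat _), mul_assoc] at hlhs hrhs
  refine le_of_tendsto_of_tendsto hlhs.neg hrhs ?_
  filter_upwards [(tendsto_one_div_add_atTop_nhds_zero_nat (𝕜 := ℝ)).eventually (gt_mem_nhds hε)]
    with n hn
  exact hle.kato_mollify hj hj' hj'' hconvex hmono hu hF h hφ hφ₀
    ((Metric.cthickening_mono hn.le _).trans hεU)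

end Convex

end Kato

section SmoothPos

/-- The smooth convex approximation `(s + √(s² + δ²) - δ) / 2` of the positive part of `s`. -/
def smoothPos (δ s : ℝ) : ℝ := (s + √(s ^ 2 + δ ^ 2) - δ) / 2

/-- The derivative of `smoothPos δ`. -/
def smoothPosDeriv (δ s : ℝ) : ℝ := (1 + s / √(s ^ 2 + δ ^ 2)) / 2

/-- The second derivative of `smoothPos δ`. -/
def smoothPosDeriv2 (δ s : ℝ) : ℝ := δ ^ 2 / (2 * √(s ^ 2 + δ ^ 2) ^ 3)

/-- The Heaviside function with the value `1 / 2` at the origin, which is the pointwise limit of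
`smoothPosDeriv δ` as `δ → 0`. -/
def halfHeaviside (s : ℝ) : ℝ := if 0 < s then 1 else if s = 0 then 1 / 2 else 0

section Positive

variable {δ : ℝ} (hδ : 0 < δ) (s : ℝ)
include hδ

lemma sqrt_sq_add_sq_pos : 0 < √(s ^ 2 + δ ^ 2) := Real.sqrt_pos.2 (by positivity)

lemma hasDerivAt_sqrt_sq_add_sq :
    HasDerivAt (fun s => √(s ^ 2 + δ ^ 2)) (s / √(s ^ 2 + δ ^ 2)) s := by
  convert ((hasDerivAt_pow 2 s).add_const (δ ^ 2)).sqrt (by positivity) using 1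
  rw [Nat.cast_ofNat, Nat.add_one_sub_one, pow_one, mul_div_mul_left _ _ two_ne_zero]

lemma hasDerivAt_smoothPos : HasDerivAt (smoothPos δ) (smoothPosDeriv δ s) s :=
  (((hasDerivAt_id s).add (hasDerivAt_sqrt_sq_add_sq hδ s)).sub_const δ).div_const 2

lemma hasDerivAt_smoothPosDeriv : HasDerivAt (smoothPosDeriv δ) (smoothPosDeriv2 δ s) s := by
  have hpos := sqrt_sq_add_sq_pos hδ s
  have hsq : √(s ^ 2 + δ ^ 2) ^ 2 = s ^ 2 + δ ^ 2 := Real.sq_sqrt (by positivity)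
  refine ((((hasDerivAt_id s).div (hasDerivAt_sqrt_sq_add_sq hδ s) hpos.ne').const_add 1
    ).div_const 2).congr_deriv ?_
  rw [smoothPosDeriv2, id]
  field_simp
  rw [hsq]
  ring

lemma smoothPosDeriv2_nonneg : 0 ≤ smoothPosDeriv2 δ s := by
  rw [smoothPosDeriv2]
  positivity

omit s in
lemma continuous_smoothPosDeriv2 : Continuous (smoothPosDeriv2 δ) := by
  refine Continuous.div continuous_const (by fun_prop) fun s => ?_
  exact (mul_pos two_pos (pow_pos (sqrt_sq_add_sq_pos hδ s) 3)).ne'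

lemma smoothPosDeriv_mem_Icc : smoothPosDeriv δ s ∈ Icc (0 : ℝ) 1 := by
  have hpos := sqrt_sq_add_sq_pos hδ s
  have habs := abs_le.1 (Real.abs_le_sqrt (by nlinarith : s ^ 2 ≤ s ^ 2 + δ ^ 2))
  have hle : s / √(s ^ 2 + δ ^ 2) ≤ 1 := (div_le_one hpos).2 habs.2
  have hge : -1 ≤ s / √(s ^ 2 + δ ^ 2) := (le_div_iff₀ hpos).2 (by linarith [habs.1])
  rw [smoothPosDeriv]
  constructor <;> linarith

omit s in
lemma smoothPos_zero : smoothPos δ 0 = 0 := by simp [smoothPos, Real.sqrt_sq hδ.le]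

lemma abs_smoothPos_le : |smoothPos δ s| ≤ |s| := by
  simpa [smoothPos_zero hδ] using convex_univ.norm_image_sub_le_of_norm_hasDerivWithin_le
    (C := 1) (fun x _ => (hasDerivAt_smoothPos hδ x).hasDerivWithinAt) (fun x _ => by
      rw [Real.norm_of_nonneg (smoothPosDeriv_mem_Icc hδ x).1]
      exact (smoothPosDeriv_mem_Icc hδ x).2) (mem_univ 0) (mem_univ s)

end Positive

lemma tendsto_smoothPos (s : ℝ) :
    Tendsto (fun n : ℕ => smoothPos (1 / ((n : ℝ) + 1)) s) atTop (𝓝 (max s 0)) := by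
  have hcont : Continuous fun δ : ℝ => smoothPos δ s := by
    unfold smoothPos
    fun_prop
  have hlim : smoothPos 0 s = max s 0 := by
    rw [smoothPos, zero_pow two_ne_zero, add_zero, sub_zero, Real.sqrt_sq_eq_abs]
    rcases le_total 0 s with hs | hs
    · rw [abs_of_nonneg hs, max_eq_left hs, add_self_div_two]
    · rw [abs_of_nonpos hs, max_eq_right hs, add_neg_cancel, zero_div]
  rw [← hlim]
  exact (hcont.tendsto 0).comp tendsto_one_div_add_atTop_nhds_zero_nat

lemma tendsto_smoothPosDeriv (s : ℝ) :
    Tendsto (fun n : ℕ => smoothPosDeriv (1 / ((n : ℝ) + 1)) s) atTop (𝓝 (halfHeaviside s)) := by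
  have hsqrt : √(s ^ 2 + 0 ^ 2) = |s| := by
    rw [zero_pow two_ne_zero, add_zero, Real.sqrt_sq_eq_abs]
  rcases eq_or_ne s 0 with rfl | hs
  · simp [smoothPosDeriv, halfHeaviside]
  have hcont : ContinuousAt (fun δ : ℝ => smoothPosDeriv δ s) 0 := by
    refine ContinuousAt.div_const (ContinuousAt.add continuousAt_const
      (ContinuousAt.div continuousAt_const (by fun_prop) ?_)) 2
    rw [hsqrt]
    exact abs_ne_zero.2 hs
  have hlim : smoothPosDeriv 0 s = halfHeaviside s := by
    rw [smoothPosDeriv, halfHeaviside, hsqrt]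
    rcases lt_or_gt_of_ne hs with hs' | hs'
    · rw [abs_of_neg hs', if_neg hs'.not_gt, if_neg hs, div_neg, div_self hs]
      norm_num
    · rw [abs_of_pos hs', if_pos hs', div_self hs]
      norm_num
  rw [← hlim]
  exact hcont.tendsto.comp tendsto_one_div_add_atTop_nhds_zero_nat

end SmoothPos

section Comparison

variable {N : ℕ} {φ u F : SpaceTime N → ℝ} {U : Set (SpaceTime N)}

theorem HeatLEOn.kato (hle : HeatLEOn U u F) (hU : IsOpen U) (hu : Integrable u)
    (hF : Integrable F) (h : HeatJet φ) (hφ : HasCompactSupport φ) (hφ₀ : ∀ p, 0 ≤ φ p)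
    (hφU : tsupport φ ⊆ U) :
    -(∫ p, max (u p) 0 * h.adjHeat p) ≤ ∫ p, φ p * (halfHeaviside (u p) * F p) := by
  have hδ (n : ℕ) : (0 : ℝ) < 1 / ((n : ℝ) + 1) := by positivity
  obtain ⟨C, hC⟩ := (h.hasCompactSupport_adjHeat hφ).exists_bound_of_continuous
    h.continuous_adjHeat
  obtain ⟨C', hC'⟩ := hφ.exists_bound_of_continuous h.cont
  have hlhs : Tendsto (fun n : ℕ => ∫ p, smoothPos (1 / ((n : ℝ) + 1)) (u p) * h.adjHeat p) atTop
      (𝓝 (∫ p, max (u p) 0 * h.adjHeat p)) := by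
    refine tendsto_integral_of_dominated_convergence (fun p => |u p| * C) (fun n => ?_)
      (hu.abs.mul_const C) (fun n => Eventually.of_forall fun p => ?_)
      (Eventually.of_forall fun p => (tendsto_smoothPos _).mul_const _)
    · exact (Continuous.comp_aestronglyMeasurable (continuous_iff_continuousAt.2 fun s =>
        (hasDerivAt_smoothPos (hδ n) s).continuousAt) hu.aestronglyMeasurable).mul
        h.continuous_adjHeat.aestronglyMeasurable
    · rw [Real.norm_eq_abs, abs_mul]
      exact mul_le_mul (abs_smoothPos_le (hδ n) _) (hC p) (abs_nonneg _) (abs_nonneg _)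
  have hrhs : Tendsto
      (fun n : ℕ => ∫ p, φ p * (smoothPosDeriv (1 / ((n : ℝ) + 1)) (u p) * F p)) atTop
      (𝓝 (∫ p, φ p * (halfHeaviside (u p) * F p))) := by
    refine tendsto_integral_of_dominated_convergence (fun p => C' * |F p|) (fun n => ?_)
      (hF.abs.const_mul C') (fun n => Eventually.of_forall fun p => ?_)
      (Eventually.of_forall fun p => ((tendsto_smoothPosDeriv _).mul_const _).const_mul _)
    · exact h.cont.aestronglyMeasurable.mul ((Continuous.comp_aestronglyMeasurable
        (continuous_iff_continuousAt.2 fun s => (hasDerivAt_smoothPosDeriv (hδ n) s).continuousAt)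
        hu.aestronglyMeasurable).mul hF.aestronglyMeasurable)
    · have hmem := smoothPosDeriv_mem_Icc (hδ n) (u p)
      rw [Real.norm_eq_abs, abs_mul, abs_mul, abs_of_nonneg hmem.1]
      exact mul_le_mul (hC' p) (mul_le_of_le_one_left (abs_nonneg _) hmem.2)
        (mul_nonneg hmem.1 (abs_nonneg _)) ((norm_nonneg _).trans (hC' p))
  exact le_of_tendsto_of_tendsto' hlhs.neg hrhs fun n =>
    hle.kato_of_convex (hasDerivAt_smoothPos (hδ n)) (hasDerivAt_smoothPosDeriv (hδ n))
      (continuous_smoothPosDeriv2 (hδ n)) (smoothPosDeriv2_nonneg (hδ n))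
      (fun s => (smoothPosDeriv_mem_Icc (hδ n) s).1) (smoothPos_zero (hδ n))
      (fun s => (smoothPosDeriv_mem_Icc (hδ n) s).2) hU hu hF h hφ hφ₀ hφU

lemma tsupport_tensor_subset (χ : Euc N → ℝ) (θ : ℝ → ℝ) :
    tsupport (fun p : SpaceTime N => χ p.1 * θ p.2) ⊆ tsupport χ ×ˢ tsupport θ :=
  closure_minimal (fun _ hp => ⟨subset_tsupport χ (left_ne_zero_of_mul hp),
    subset_tsupport θ (right_ne_zero_of_mul hp)⟩) ((isClosed_tsupport χ).prod (isClosed_tsupport θ))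

lemma hasCompactSupport_tensor {χ : Euc N → ℝ} {θ : ℝ → ℝ} (hχ : HasCompactSupport χ)
    (hθ : HasCompactSupport θ) : HasCompactSupport fun p : SpaceTime N => χ p.1 * θ p.2 :=
  (hχ.isCompact.prod hθ.isCompact).of_isClosed_subset (isClosed_tsupport _)
    (tsupport_tensor_subset χ θ)

lemma continuous_lap {χ : Euc N → ℝ} (hχ : ContDiff ℝ ∞ χ) : Continuous (lap χ) :=
  continuous_finsetSum _ fun _ _ => continuous_fderiv_apply (contDiff_fderiv_apply hχ _) _

lemma lap_eq_zero_of_eventuallyEq_const {χ : Euc N → ℝ} {x : Euc N} {c : ℝ}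
    (hχ : χ =ᶠ[𝓝 x] fun _ => c) : lap χ x = 0 := by
  refine Finset.sum_eq_zero fun i _ => ?_
  have hderiv : (fun y => fderiv ℝ χ y (EuclideanSpace.single i 1)) =ᶠ[𝓝 x] fun _ => (0 : ℝ) := by
    filter_upwards [hχ.eventuallyEq_nhds] with y hy
    simp [hy.fderiv_eq]
  simp [hderiv.fderiv_eq]

lemma hasCompactSupport_lap {χ : Euc N → ℝ} (hχ : HasCompactSupport χ) :
    HasCompactSupport (lap χ) :=
  HasCompactSupport.intro hχ fun _ hx =>
    lap_eq_zero_of_eventuallyEq_const (notMem_tsupport_iff_eventuallyEq.1 hx)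

lemma lap_comp_smul {χ : Euc N → ℝ} (hχ : ContDiff ℝ ∞ χ) (c : ℝ) (x : Euc N) :
    lap (fun y => χ (c • y)) x = c ^ 2 * lap χ (c • x) := by
  simp only [lap, Finset.mul_sum]
  refine Finset.sum_congr rfl fun i _ => ?_
  set v : Euc N := EuclideanSpace.single i 1
  have hfderiv : (fun y => fderiv ℝ (fun y => χ (c • y)) y v) =
      fun y => c • (fun z => fderiv ℝ χ z v) (c • y) := by
    funext y
    rw [fderiv_comp_smul, smul_apply]
  have hdiff : DifferentiableAt ℝ (fun y => (fun z => fderiv ℝ χ z v) (c • y)) x :=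
    ((contDiff_fderiv_apply hχ v).comp (contDiff_const_smul c)).differentiable (by simp) x
  rw [hfderiv, fderiv_fun_const_smul hdiff, fderiv_comp_smul (f := fun z => fderiv ℝ χ z v),
    smul_apply, smul_apply, smul_smul, sq, smul_eq_mul]

/-- Smooth cutoffs `χ (x / (n + 1))` exhausting the whole space. -/
def spaceCutoff (N n : ℕ) (x : Euc N) : ℝ :=
  (⟨1, 2, one_pos, one_lt_two⟩ : ContDiffBump (0 : Euc N)) ((1 / ((n : ℝ) + 1)) • x)

lemma contDiff_spaceCutoff (n : ℕ) : ContDiff ℝ ∞ (spaceCutoff N n) :=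
  (ContDiffBump.contDiff _).comp (contDiff_const_smul _)

lemma hasCompactSupport_spaceCutoff (n : ℕ) : HasCompactSupport (spaceCutoff N n) :=
  (ContDiffBump.hasCompactSupport _).comp_smul (by positivity)

lemma spaceCutoff_mem_Icc (n : ℕ) (x : Euc N) : spaceCutoff N n x ∈ Icc (0 : ℝ) 1 :=
  ⟨ContDiffBump.nonneg _, ContDiffBump.le_one _⟩

lemma eventually_spaceCutoff_eventuallyEq_one (x : Euc N) :
    ∀ᶠ n in atTop, spaceCutoff N n =ᶠ[𝓝 x] fun _ => 1 := by
  have hlim : Tendsto (fun n : ℕ => ‖(1 / ((n : ℝ) + 1)) • x‖) atTop (𝓝 0) := by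
    simpa using ((tendsto_one_div_add_atTop_nhds_zero_nat (𝕜 := ℝ)).smul_const x).norm
  filter_upwards [hlim.eventually (gt_mem_nhds one_pos)] with n hn
  have hcont : Continuous fun y : Euc N => ‖(1 / ((n : ℝ) + 1)) • y‖ := by fun_prop
  filter_upwards [hcont.continuousAt.eventually (gt_mem_nhds hn)] with y hy
  exact ContDiffBump.one_of_mem_closedBall _ (mem_closedBall_zero_iff.2 hy.le)

lemma exists_abs_lap_spaceCutoff_le (N : ℕ) : ∃ C, ∀ n x, |lap (spaceCutoff N n) x| ≤ C := by
  set b : ContDiffBump (0 : Euc N) := ⟨1, 2, one_pos, one_lt_two⟩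
  obtain ⟨C, hC⟩ := (hasCompactSupport_lap b.hasCompactSupport).exists_bound_of_continuous
    (continuous_lap b.contDiff)
  refine ⟨C, fun n x => ?_⟩
  have hscale : (1 / ((n : ℝ) + 1)) ^ 2 ≤ 1 :=
    pow_le_one₀ (by positivity) ((div_le_one (by positivity)).2 (by simp))
  rw [show lap (spaceCutoff N n) x = _ from lap_comp_smul b.contDiff _ x, abs_mul,
    abs_of_nonneg (by positivity)]
  exact (mul_le_of_le_one_left (abs_nonneg _) hscale).trans (hC _)

/-- A smooth function of time equal to `1` for `t ≥ -1` and to `0` for `t ≤ -2`. -/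
def pastCutoff (t : ℝ) : ℝ := Real.smoothTransition (t + 2)

lemma contDiff_pastCutoff : ContDiff ℝ ∞ pastCutoff :=
  Real.smoothTransition.contDiff.comp (contDiff_id.add contDiff_const)

lemma pastCutoff_eq_one {t : ℝ} (ht : -1 ≤ t) : pastCutoff t = 1 :=
  Real.smoothTransition.one_of_one_le (by linarith)

lemma hasDerivAt_pastCutoff {t : ℝ} (ht : 0 < t) : HasDerivAt pastCutoff 0 t :=
  (hasDerivAt_const t (1 : ℝ)).congr_of_eventuallyEq <| by
    filter_upwards [lt_mem_nhds ht] with s hs using pastCutoff_eq_one (by linarith)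

lemma pastCutoff_eq_zero {t : ℝ} (ht : t ≤ -2) : pastCutoff t = 0 :=
  Real.smoothTransition.zero_of_nonpos (by linarith)

lemma pastCutoff_nonneg (t : ℝ) : 0 ≤ pastCutoff t := Real.smoothTransition.nonneg _

lemma pastCutoff_le_one (t : ℝ) : pastCutoff t ≤ 1 := Real.smoothTransition.le_one _

/-- A nonnegative smooth function of time supported in `[-2, T]` and strictly decreasing on
`(0, T)`. -/
def expCutoff (T t : ℝ) : ℝ := expNegInvGlue (T - t) * Real.exp (-t) * pastCutoff t

lemma contDiff_expCutoff (T : ℝ) : ContDiff ℝ ∞ (expCutoff T) :=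
  ((expNegInvGlue.contDiff.comp (contDiff_const.sub contDiff_id)).mul
    (Real.contDiff_exp.comp contDiff_neg)).mul contDiff_pastCutoff

lemma expCutoff_nonneg (T t : ℝ) : 0 ≤ expCutoff T t :=
  mul_nonneg (mul_nonneg (expNegInvGlue.nonneg _) (Real.exp_nonneg _)) (pastCutoff_nonneg _)

lemma tsupport_expCutoff_subset (T : ℝ) : tsupport (expCutoff T) ⊆ Icc (-2) T := by
  refine closure_minimal (fun t ht => ?_) isClosed_Icc
  contrapose! ht
  rw [Function.notMem_support, expCutoff]
  rcases lt_or_ge t (-2) with htlt | htge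
  · rw [pastCutoff_eq_zero htlt.le, mul_zero]
  · have hT : T < t := lt_of_not_ge fun hle => ht ⟨htge, hle⟩
    rw [expNegInvGlue.zero_of_nonpos (by linarith), zero_mul, zero_mul]

lemma deriv_expCutoff_le (T : ℝ) {t : ℝ} (ht : 0 < t) :
    deriv (expCutoff T) t ≤ -(expNegInvGlue (T - t) * Real.exp (-t)) := by
  have hexp : HasDerivAt (fun s => Real.exp (-s)) (-Real.exp (-t)) t := by
    simpa using (hasDerivAt_neg t).exp
  have hglue_smooth : ContDiff ℝ ∞ fun s => expNegInvGlue (T - s) :=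
    expNegInvGlue.contDiff.comp (contDiff_const.sub contDiff_id)
  have hglue := (hglue_smooth.differentiable (by simp) t).hasDerivAt
  have hglue_anti : Antitone fun s => expNegInvGlue (T - s) := fun _ _ h =>
    expNegInvGlue.monotone (by linarith)
  rw [show deriv (expCutoff T) t = _ from ((hglue.mul hexp).mul (hasDerivAt_pastCutoff ht)).deriv,
    pastCutoff_eq_one (by linarith)]
  simp only [Pi.mul_apply]
  nlinarith [Real.exp_pos (-t), hglue_anti.deriv_nonpos (x := t)]

/-! ### The comparison principle -/

section Strip

variable {T : ℝ} (hle : HeatLEOn {p : SpaceTime N | p.2 < T} u F) (hu : Integrable u)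
  (hF : Integrable F) (hsign : ∀ p, halfHeaviside (u p) * F p ≤ 0)
include hle hu hF hsign

lemma HeatLEOn.integral_posPart_mul_deriv_nonneg {θ : ℝ → ℝ} (hθ : ContDiff ℝ ∞ θ)
    (hθc : HasCompactSupport θ) (hθ₀ : ∀ t, 0 ≤ θ t) (hθT : tsupport θ ⊆ Iio T) :
    0 ≤ ∫ p, max (u p) 0 * deriv θ p.2 := by
  have hu_pos : Integrable fun p => max (u p) 0 := hu.pos_part
  have hθ' : Continuous (deriv θ) := hθ.continuous_deriv (by simp)
  obtain ⟨A, hA⟩ := hθc.exists_bound_of_continuous hθ.continuous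
  obtain ⟨B, hB⟩ := hθc.deriv.exists_bound_of_continuous hθ'
  obtain ⟨C, hC⟩ := exists_abs_lap_spaceCutoff_le N
  have hcut (n : ℕ) : 0 ≤ ∫ p : SpaceTime N, max (u p) 0 *
      (spaceCutoff N n p.1 * deriv θ p.2 + lap (spaceCutoff N n) p.1 * θ p.2) := by
    have hφ₀ (p : SpaceTime N) : 0 ≤ spaceCutoff N n p.1 * θ p.2 :=
      mul_nonneg (spaceCutoff_mem_Icc n _).1 (hθ₀ _)
    have hkato := hle.kato (isOpen_lt continuous_snd continuous_const) hu hF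
      (.tensor (contDiff_spaceCutoff n) hθ)
      (hasCompactSupport_tensor (hasCompactSupport_spaceCutoff n) hθc) hφ₀
      fun p hp => hθT (tsupport_tensor_subset _ _ hp).2
    simp only [HeatJet.adjHeat_tensor] at hkato
    have hrhs :
        ∫ p : SpaceTime N, (spaceCutoff N n p.1 * θ p.2) * (halfHeaviside (u p) * F p) ≤ 0 :=
      integral_nonpos fun p => mul_nonpos_of_nonneg_of_nonpos (hφ₀ p) (hsign p)
    linarith
  refine ge_of_tendsto' (tendsto_integral_of_dominated_convergence
    (fun p => max (u p) 0 * (B + C * A)) (fun n => ?_) (hu_pos.mul_const _)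
    (fun n => Eventually.of_forall fun p => ?_) (Eventually.of_forall fun p => ?_)) hcut
  · exact hu_pos.aestronglyMeasurable.mul (Continuous.aestronglyMeasurable
      ((((contDiff_spaceCutoff n).continuous.comp continuous_fst).mul (hθ'.comp continuous_snd)).add
      (((continuous_lap (contDiff_spaceCutoff n)).comp continuous_fst).mul
        (hθ.continuous.comp continuous_snd))))
  · rw [norm_mul, Real.norm_of_nonneg (le_max_right _ _)]
    refine mul_le_mul_of_nonneg_left ((norm_add_le _ _).trans (add_le_add ?_ ?_)) (le_max_right _ _)
    · rw [norm_mul, Real.norm_of_nonneg (spaceCutoff_mem_Icc n _).1]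
      exact (mul_le_of_le_one_left (norm_nonneg _) (spaceCutoff_mem_Icc n _).2).trans (hB _)
    · rw [norm_mul]
      exact mul_le_mul (hC n _) (hA _) (norm_nonneg _) ((abs_nonneg _).trans (hC n p.1))
  · refine tendsto_const_nhds.congr' ?_
    filter_upwards [eventually_spaceCutoff_eventuallyEq_one p.1] with n hn
    rw [hn.eq_of_nhds, lap_eq_zero_of_eventuallyEq_const hn, one_mul, zero_mul, add_zero]

variable (hu₀ : ∀ p : SpaceTime N, ¬(0 < p.2 ∧ p.2 < T) → u p = 0)
include hu₀

lemma HeatLEOn.ae_nonpos_of_lt {T' : ℝ} (hT' : T' < T) :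
    ∀ᵐ p : SpaceTime N, p.2 < T' → u p ≤ 0 := by
  have hsupp := tsupport_expCutoff_subset T'
  have hθc : HasCompactSupport (expCutoff T') :=
    isCompact_Icc.of_isClosed_subset (isClosed_tsupport _) hsupp
  have hθ' : Continuous (deriv (expCutoff T')) := (contDiff_expCutoff T').continuous_deriv (by simp)
  have hnonneg := hle.integral_posPart_mul_deriv_nonneg hu hF hsign (contDiff_expCutoff T') hθc
    (expCutoff_nonneg T') fun t ht => (hsupp ht).2.trans_lt hT'
  have hnonpos (p : SpaceTime N) : max (u p) 0 * deriv (expCutoff T') p.2 ≤ 0 := by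
    by_cases hp : 0 < p.2 ∧ p.2 < T
    · refine mul_nonpos_of_nonneg_of_nonpos (le_max_right _ _)
        ((deriv_expCutoff_le T' hp.1).trans (neg_nonpos.2 ?_))
      exact mul_nonneg (expNegInvGlue.nonneg _) (Real.exp_nonneg _)
    · simp [hu₀ p hp]
  obtain ⟨B, hB⟩ := hθc.deriv.exists_bound_of_continuous hθ'
  have hint : Integrable fun p : SpaceTime N => max (u p) 0 * deriv (expCutoff T') p.2 :=
    hu.pos_part.mul_bdd (c := B) (hθ'.comp continuous_snd).aestronglyMeasurable
      (Eventually.of_forall fun p => hB _)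
  have hzero : ∫ p : SpaceTime N, -(max (u p) 0 * deriv (expCutoff T') p.2) = 0 := by
    rw [integral_neg, le_antisymm (integral_nonpos hnonpos) hnonneg, neg_zero]
  filter_upwards [(integral_eq_zero_iff_of_nonneg (fun p => neg_nonneg.2 (hnonpos p)) hint.neg).1
    hzero] with p hp hpT'
  by_contra! hpos
  have hpT : 0 < p.2 ∧ p.2 < T := by
    by_contra hpT
    exact hpos.ne' (hu₀ p hpT)
  have hp₀ : max (u p) 0 * deriv (expCutoff T') p.2 = 0 := neg_eq_zero.1 hp
  have hderiv : deriv (expCutoff T') p.2 < 0 :=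
    (deriv_expCutoff_le T' hpT.1).trans_lt (neg_lt_zero.2 (mul_pos
      (expNegInvGlue.pos_of_pos (by linarith)) (Real.exp_pos _)))
  rw [max_eq_left hpos.le] at hp₀
  exact (mul_neg_of_pos_of_neg hpos hderiv).ne hp₀

theorem HeatLEOn.ae_nonpos : ∀ᵐ p, u p ≤ 0 := by
  have hstep (k : ℕ) := hle.ae_nonpos_of_lt hu hF hsign hu₀
    (sub_lt_self T (Nat.one_div_pos_of_nat (α := ℝ) (n := k)))
  filter_upwards [ae_all_iff.2 hstep] with p hp
  by_cases hpT : p.2 < T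
  · obtain ⟨k, hk⟩ := exists_nat_one_div_lt (sub_pos.2 hpT)
    exact hp k (by linarith)
  · rw [hu₀ p fun h => hpT h.2]

end Strip

section AbsorptionSol

variable {T : ℝ} {κ : Measure (Euc N)} {v f k : SpaceTime N → ℝ}

lemma IsAbsorptionSol.heatLEOn_sub (hu : IsAbsorptionSol T κ u f) (hv : IsAbsorptionSol T κ v k) :
    HeatLEOn {p : SpaceTime N | p.2 < T} (fun p => u p - v p) (fun p => k p - f p) := by
  intro φ h hφ _ hφT
  have hu_weak := hu.weak φ (.ofContDiff h) hφ hφT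
  have hv_weak := hv.weak φ (.ofContDiff h) hφ hφT
  have hcont := (HeatJet.ofContDiff h).continuous_adjHeat
  have hsupp := (HeatJet.ofContDiff h).hasCompactSupport_adjHeat hφ
  have hk := integrable_mul_of_hasCompactSupport h.continuous hφ hv.integrable_absorption
  have hf := integrable_mul_of_hasCompactSupport h.continuous hφ hu.integrable_absorption
  simp only [mul_comm (φ _)] at hu_weak hv_weak ⊢
  simp only [sub_mul]
  rw [integral_sub (integrable_mul_of_hasCompactSupport hcont hsupp hu.integrable)
    (integrable_mul_of_hasCompactSupport hcont hsupp hv.integrable), integral_sub hk hf]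
  linarith

theorem IsAbsorptionSol.ae_le (hu : IsAbsorptionSol T κ u f) (hv : IsAbsorptionSol T κ v k)
    (hsign : ∀ p, halfHeaviside (u p - v p) * (k p - f p) ≤ 0) : ∀ᵐ p, u p ≤ v p := by
  have hcomparison := (hu.heatLEOn_sub hv).ae_nonpos (hu.integrable.sub hv.integrable)
    (hv.integrable_absorption.sub hu.integrable_absorption) hsign fun p hp => by
      rw [hu.eq_zero p hp, hv.eq_zero p hp, sub_zero]
  filter_upwards [hcomparison] with p hp using sub_nonpos.1 hp

end AbsorptionSol

end Comparison

/-! ### Penalised approximations -/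

section LipApprox

/-- The largest `n`-Lipschitz minorant of `g`, obtained as an infimal convolution. -/
def lipApprox (g : ℝ → ℝ) (n : ℕ) (s : ℝ) : ℝ := ⨅ r : ℝ, (g r + n * |s - r|)

lemma GoodG.nonneg {g : ℝ → ℝ} (hg : GoodG g) (s : ℝ) : 0 ≤ g s :=
  (hg.2.2 _ (min_le_right s 0)).symm.le.trans (hg.2.1 (min_le_left s 0))

variable {g : ℝ → ℝ} (hg₀ : ∀ s, 0 ≤ g s) (n : ℕ)
include hg₀

lemma lipApprox_le_add (s r : ℝ) : lipApprox g n s ≤ g r + n * |s - r| :=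
  ciInf_le ⟨0, forall_mem_range.2 fun r => add_nonneg (hg₀ r) (by positivity)⟩ r

lemma lipApprox_nonneg (s : ℝ) : 0 ≤ lipApprox g n s :=
  le_ciInf fun r => add_nonneg (hg₀ r) (by positivity)

lemma lipApprox_le (s : ℝ) : lipApprox g n s ≤ g s := by
  simpa using lipApprox_le_add hg₀ n s s

lemma lipApprox_eq_zero {s : ℝ} (hs : g s = 0) : lipApprox g n s = 0 :=
  le_antisymm ((lipApprox_le hg₀ n s).trans_eq hs) (lipApprox_nonneg hg₀ n s)

lemma lipApprox_monotone (hmono : Monotone g) : Monotone (lipApprox g n) := by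
  intro s s' h
  refine le_ciInf fun r => ?_
  have hshift := lipApprox_le_add hg₀ n s (r - (s' - s))
  rw [show s - (r - (s' - s)) = s' - r by ring] at hshift
  have hr : g (r - (s' - s)) ≤ g r := hmono (by linarith)
  linarith

lemma lipschitzWith_lipApprox : LipschitzWith n (lipApprox g n) := by
  refine LipschitzWith.of_le_add_mul _ fun s s' => ?_
  rw [← sub_le_iff_le_add]
  refine le_ciInf fun r => ?_
  have htri := mul_le_mul_of_nonneg_left (abs_sub_le s s' r) n.cast_nonneg
  have hr := lipApprox_le_add hg₀ n s r
  rw [Real.dist_eq, NNReal.coe_natCast]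
  linarith

lemma lipApprox_le_succ (s : ℝ) : lipApprox g n s ≤ lipApprox g (n + 1) s := by
  refine le_ciInf fun r => (lipApprox_le_add hg₀ n s r).trans ?_
  gcongr
  simp

omit n in
lemma tendsto_lipApprox (hmono : Monotone g) {s : ℝ} (hcont : ContinuousAt g s) :
    Tendsto (fun n => lipApprox g n s) atTop (𝓝 (g s)) := by
  rw [tendsto_order]
  refine ⟨fun a ha => ?_, fun a ha =>
    Eventually.of_forall fun n => (lipApprox_le hg₀ n s).trans_lt ha⟩
  obtain ⟨δ, hδ, hball⟩ := Metric.eventually_nhds_iff.1 (hcont.eventually (lt_mem_nhds ha))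
  have hleft : a < g (s - δ / 2) := hball (by
    rw [Real.dist_eq, sub_sub_cancel_left, abs_neg, abs_of_pos (half_pos hδ)]
    exact half_lt_self hδ)
  obtain ⟨m, hm⟩ := exists_nat_ge (g s / (δ / 2))
  filter_upwards [eventually_ge_atTop m] with n hn
  refine (lt_min ha hleft).trans_le (le_ciInf fun r => ?_)
  rcases le_total (s - δ / 2) r with hr | hr
  · exact (min_le_right _ _).trans ((hmono hr).trans (le_add_of_nonneg_right (by positivity)))
  · have hgap : δ / 2 ≤ |s - r| := le_trans (by linarith) (le_abs_self _)
    calc min (g s) (g (s - δ / 2)) ≤ m * (δ / 2) :=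
          (min_le_left _ _).trans ((div_le_iff₀ (half_pos hδ)).1 hm)
      _ ≤ n * |s - r| := by gcongr
      _ ≤ g r + n * |s - r| := le_add_of_nonneg_left (hg₀ r)

end LipApprox

section Penalized

variable {N : ℕ}

open Classical in
/-- The absorption `lipApprox g n` inside `Ω`, and outside `Ω` a linear absorption of strength `n`,
which forces the solutions to vanish there as `n → ∞`. -/
def penalizedAbsorption (Ω : Set (Euc N)) (g : ℝ → ℝ) (n : ℕ) (p : SpaceTime N) (s : ℝ) : ℝ :=
  if p.1 ∈ Ω then lipApprox g n s else n * max s 0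

variable {g : ℝ → ℝ} (hg : GoodG g) (Ω : Set (Euc N)) (n : ℕ) (p : SpaceTime N)

lemma penalizedAbsorption_of_mem {Ω : Set (Euc N)} {p : SpaceTime N} (hp : p.1 ∈ Ω) :
    penalizedAbsorption Ω g n p = lipApprox g n := by
  ext s
  rw [penalizedAbsorption, if_pos hp]

lemma penalizedAbsorption_of_notMem {Ω : Set (Euc N)} {p : SpaceTime N} (hp : p.1 ∉ Ω) :
    penalizedAbsorption Ω g n p = fun s : ℝ => (n : ℝ) * max s 0 := by
  ext s
  rw [penalizedAbsorption, if_neg hp]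

include hg

lemma penalizedAbsorption_monotone : Monotone (penalizedAbsorption Ω g n p) := by
  by_cases hp : p.1 ∈ Ω
  · rw [penalizedAbsorption_of_mem n hp]
    exact lipApprox_monotone hg.nonneg n hg.2.1
  · rw [penalizedAbsorption_of_notMem n hp]
    intro s s' h
    dsimp only
    gcongr

lemma penalizedAbsorption_le_succ (s : ℝ) :
    penalizedAbsorption Ω g n p s ≤ penalizedAbsorption Ω g (n + 1) p s := by
  by_cases hp : p.1 ∈ Ω
  · simpa only [penalizedAbsorption_of_mem _ hp] using lipApprox_le_succ hg.nonneg n s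
  · simp only [penalizedAbsorption_of_notMem _ hp]
    gcongr
    simp

lemma lipschitzWith_penalizedAbsorption : LipschitzWith n (penalizedAbsorption Ω g n p) := by
  by_cases hp : p.1 ∈ Ω
  · rw [penalizedAbsorption_of_mem n hp]
    exact lipschitzWith_lipApprox hg.nonneg n
  · rw [penalizedAbsorption_of_notMem n hp]
    refine LipschitzWith.of_dist_le_mul fun s s' => ?_
    rw [Real.dist_eq, Real.dist_eq, ← mul_sub, abs_mul, Nat.abs_cast, NNReal.coe_natCast]
    exact mul_le_mul_of_nonneg_left (abs_max_sub_max_le_abs s s' 0) n.cast_nonneg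

lemma measurable_penalizedAbsorption (hΩ : IsOpen Ω) :
    Measurable (Function.uncurry (penalizedAbsorption Ω g n)) := by
  have huncurry : Function.uncurry (penalizedAbsorption Ω g n) =
      fun z : SpaceTime N × ℝ => penalizedAbsorption Ω g n z.1 z.2 := rfl
  rw [huncurry]
  unfold penalizedAbsorption
  exact Measurable.ite (measurable_fst.comp measurable_fst hΩ.measurableSet)
    ((lipschitzWith_lipApprox hg.nonneg n).continuous.measurable.comp measurable_snd)
    ((measurable_snd.max measurable_const).const_mul _)

lemma isAbsorption_penalizedAbsorption (hΩ : IsOpen Ω) :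
    IsAbsorption n (penalizedAbsorption Ω g n) where
  measurable := measurable_penalizedAbsorption hg Ω n hΩ
  nonneg p s := by
    by_cases hp : p.1 ∈ Ω
    · rw [penalizedAbsorption_of_mem n hp]
      exact lipApprox_nonneg hg.nonneg n s
    · rw [penalizedAbsorption_of_notMem n hp]
      positivity
  map_zero p := by
    by_cases hp : p.1 ∈ Ω
    · rw [penalizedAbsorption_of_mem n hp, lipApprox_eq_zero hg.nonneg n (hg.2.2 0 le_rfl)]
    · simp [penalizedAbsorption_of_notMem n hp]
  continuous p := (lipschitzWith_penalizedAbsorption hg Ω n p).continuous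
  monotone_sub p s s' h := by
    have hlip := (lipschitzWith_penalizedAbsorption hg Ω n p).dist_le_mul s' s
    rw [Real.dist_eq, Real.dist_eq, abs_of_nonneg (sub_nonneg.2 h), NNReal.coe_natCast] at hlip
    linarith [le_abs_self (penalizedAbsorption Ω g n p s' - penalizedAbsorption Ω g n p s)]

end Penalized

lemma halfHeaviside_mem_Icc (s : ℝ) : halfHeaviside s ∈ Icc (0 : ℝ) 1 := by
  rw [halfHeaviside]
  split_ifs <;> norm_num

lemma halfHeaviside_mul_nonpos {s a : ℝ} (h : 0 ≤ s → a ≤ 0) : halfHeaviside s * a ≤ 0 := by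
  rcases lt_or_ge s 0 with hs | hs
  · rw [halfHeaviside, if_neg hs.not_gt, if_neg hs.ne, zero_mul]
  · exact mul_nonpos_of_nonneg_of_nonpos (halfHeaviside_mem_Icc s).1 (h hs)

lemma halfHeaviside_mul_le_self {s a : ℝ} (h : a < 0 → 0 < s) : halfHeaviside s * a ≤ a := by
  rcases le_or_gt 0 a with ha | ha
  · exact mul_le_of_le_one_left ha (halfHeaviside_mem_Icc s).2
  · rw [halfHeaviside, if_pos (h ha), one_mul]

lemma measurable_halfHeaviside : Measurable halfHeaviside :=
  .ite measurableSet_Ioi measurable_const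
    (.ite (measurableSet_singleton 0) measurable_const measurable_const)

section PenalizedSol

variable {N : ℕ}

/-- `v` solves on `ℝ^N × (0, T)` the problem with the absorption `penalizedAbsorption Ω g n` and
initial measure `κ`. -/
abbrev IsPenalizedSol (Ω : Set (Euc N)) (T : ℝ) (g : ℝ → ℝ) (κ : Measure (Euc N)) (n : ℕ)
    (v : SpaceTime N → ℝ) : Prop :=
  IsAbsorptionSol T κ v fun p => penalizedAbsorption Ω g n p (v p)

variable {Ω : Set (Euc N)} {T : ℝ} {g : ℝ → ℝ} {κ : Measure (Euc N)} {n : ℕ}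
  {v w : SpaceTime N → ℝ}

lemma IsPenalizedSol.ae_succ_le (hg : GoodG g)
    (hw : IsPenalizedSol Ω T g κ (n + 1) w) (hv : IsPenalizedSol Ω T g κ n v) :
    ∀ᵐ p, w p ≤ v p :=
  hw.ae_le hv fun p => halfHeaviside_mul_nonpos fun hle => sub_nonpos.2
    ((penalizedAbsorption_monotone hg Ω n p (sub_nonneg.1 hle)).trans
      (penalizedAbsorption_le_succ hg Ω n p (w p)))

lemma IsPenalizedSol.ae_le_freeSol (hΩ : IsOpen Ω) (hg : GoodG g) [IsFiniteMeasure κ]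
    (hv : IsPenalizedSol Ω T g κ n v) : ∀ᵐ p, v p ≤ freeSol T κ p :=
  hv.ae_le (isAbsorptionSol_freeSol T κ) fun p => halfHeaviside_mul_nonpos fun _ =>
    sub_nonpos.2 ((isAbsorption_penalizedAbsorption hg Ω n hΩ).nonneg p _)

end PenalizedSol

/-! ### The small-time estimate -/

section DistanceToComplement

variable {N : ℕ} {Ω : Set (Euc N)}

lemma continuous_rho (Ω : Set (Euc N)) : Continuous (rho Ω) := Metric.continuous_infDist_pt _

lemma rho_pos_iff (hΩ : IsOpen Ω) (hne : Ωᶜ.Nonempty) (x : Euc N) : 0 < rho Ω x ↔ x ∈ Ω := by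
  rw [rho, ← hΩ.isClosed_compl.notMem_iff_infDist_pos hne, notMem_compl_iff]

lemma exists_pos_forall_lt_rho (hΩ : IsOpen Ω) (hne : Ωᶜ.Nonempty) {K : Set (Euc N)}
    (hK : IsCompact K) (hKΩ : K ⊆ Ω) : ∃ c > 0, ∀ x ∈ K, c < rho Ω x := by
  rcases K.eq_empty_or_nonempty with rfl | hK_ne
  · exact ⟨1, one_pos, by simp⟩
  obtain ⟨x, hx, hmin⟩ := hK.exists_isMinOn hK_ne (continuous_rho Ω).continuousOn
  obtain ⟨c, hc, hcx⟩ := exists_between ((rho_pos_iff hΩ hne x).2 (hKΩ hx))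
  exact ⟨c, hc, fun y hy => hcx.trans_le (hmin hy)⟩

lemma measurableSet_QT (hΩ : IsOpen Ω) (T : ℝ) : MeasurableSet (QT Ω T) :=
  hΩ.measurableSet.prod measurableSet_Ioo

/-- The part of the cylinder `QT Ω T` at distance more than `c` from the lateral boundary, on which
the weight `ρ` is harmless. -/
def innerCylinder (Ω : Set (Euc N)) (T c : ℝ) : Set (SpaceTime N) :=
  {p | c < rho Ω p.1 ∧ 0 < p.2 ∧ p.2 < T}

lemma measurableSet_innerCylinder (Ω : Set (Euc N)) (T c : ℝ) :
    MeasurableSet (innerCylinder Ω T c) :=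
  ((isOpen_lt continuous_const ((continuous_rho Ω).comp continuous_fst)).inter
    ((isOpen_lt continuous_const continuous_snd).inter
      (isOpen_lt continuous_snd continuous_const))).measurableSet

lemma innerCylinder_subset_QT (hΩ : IsOpen Ω) (hne : Ωᶜ.Nonempty) (T : ℝ) {c : ℝ} (hc : 0 < c) :
    innerCylinder Ω T c ⊆ QT Ω T :=
  fun _ hp => ⟨(rho_pos_iff hΩ hne _).1 (hc.trans hp.1), hp.2⟩

end DistanceToComplement

lemma testZero_of_tsupport_subset {N : ℕ} {Ω : Set (Euc N)} (hΩ : IsOpen Ω) {T : ℝ}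
    {φ : SpaceTime N → ℝ} (h : ContDiff ℝ ∞ φ) (hφ : tsupport φ ⊆ {p | p.1 ∈ Ω ∧ p.2 < T}) :
    TestZero Ω T fun x t => φ (x, t) := by
  refine ⟨c21_of_contDiff h, fun x hx t _ => ?_, fun x _ => ?_⟩ <;>
    refine image_eq_zero_of_notMem_tsupport fun hp => ?_
  · exact (hΩ.frontier_eq ▸ hx).2 (hφ hp).1
  · exact lt_irrefl _ (hφ hp).2

section WeakSol

variable {N : ℕ} {Ω : Set (Euc N)} {T c : ℝ} {g : ℝ → ℝ} {lam : Measure (Euc N)}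
  {u : SpaceTime N → ℝ} (hΩ : IsOpen Ω) (hne : Ωᶜ.Nonempty) (hg : GoodG g)
  (hw : WeakSol Ω T g lam u) (hc : 0 < c)
include hΩ hw

lemma WeakSol.integrable_indicator : Integrable ((QT Ω T).indicator u) :=
  (integrable_indicator_iff (measurableSet_QT hΩ T)).2 hw.1

include hne hg hc

lemma WeakSol.integrable_absorption :
    Integrable ((innerCylinder Ω T c).indicator fun p => g (u p)) := by
  have hsub := innerCylinder_subset_QT hΩ hne T hc
  have hmeas := measurableSet_innerCylinder Ω T c
  rw [integrable_indicator_iff hmeas]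
  refine Integrable.mono' ((hw.2.1.mono_set hsub).const_mul c⁻¹)
    (hg.1.comp_aestronglyMeasurable (hw.1.mono_set hsub).aestronglyMeasurable)
    ((ae_restrict_iff' hmeas).2 (Eventually.of_forall fun p hp => ?_))
  rw [Real.norm_of_nonneg (hg.nonneg _), ← div_eq_inv_mul, le_div_iff₀ hc]
  exact mul_le_mul_of_nonneg_left hp.1.le (hg.nonneg _)

lemma WeakSol.integral_of_tsupport_subset {φ : SpaceTime N → ℝ} (h : ContDiff ℝ ∞ φ)
    (hφ : HasCompactSupport φ) (hφT : tsupport φ ⊆ {p | c < rho Ω p.1 ∧ p.2 < T}) :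
    -(∫ p, (QT Ω T).indicator u p * (HeatJet.ofContDiff h).adjHeat p) +
      (∫ p, φ p * (innerCylinder Ω T c).indicator (fun p => g (u p)) p) =
      ∫ x, φ (x, 0) ∂lam := by
  have htest := testZero_of_tsupport_subset hΩ h fun p hp =>
    ⟨(rho_pos_iff hΩ hne _).1 (hc.trans (hφT hp).1), (hφT hp).2⟩
  have hadj (p : SpaceTime N) : (HeatJet.ofContDiff h).adjHeat p =
      deriv (fun t => φ (p.1, t)) p.2 + lap (fun y => φ (y, p.2)) p.1 :=
    congrFun (HeatJet.adjHeat_unique _ (.ofC21 htest.1)) p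
  have hrhs (p : SpaceTime N) : φ p * (innerCylinder Ω T c).indicator (fun p => g (u p)) p =
      φ p * (QT Ω T).indicator (fun p => g (u p)) p := by
    by_cases hp : p ∈ tsupport φ
    · by_cases hq : p ∈ QT Ω T
      · have hp' : p ∈ innerCylinder Ω T c := ⟨(hφT hp).1, hq.2⟩
        rw [indicator_of_mem hq, indicator_of_mem hp']
      · rw [indicator_of_notMem hq,
          indicator_of_notMem fun hp => hq (innerCylinder_subset_QT hΩ hne T hc hp)]
    · rw [image_eq_zero_of_notMem_tsupport hp, zero_mul, zero_mul]
  have hu_adj := integrable_mul_of_hasCompactSupport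
    (HeatJet.ofContDiff h).continuous_adjHeat ((HeatJet.ofContDiff h).hasCompactSupport_adjHeat hφ)
    (hw.integrable_indicator hΩ)
  have hgu := integrable_mul_of_hasCompactSupport h.continuous hφ
    (hw.integrable_absorption hΩ hne hg hc)
  rw [← integral_neg, ← integral_add hu_adj.fun_neg (by simpa only [mul_comm] using hgu),
    ← hw.2.2 _ htest, ← integral_indicator (measurableSet_QT hΩ T)]
  refine integral_congr_ae (Eventually.of_forall fun p => ?_)
  simp only [hrhs, hadj]
  by_cases hq : p ∈ QT Ω T
  · simp only [indicator_of_mem hq]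
    ring
  · simp only [indicator_of_notMem hq, zero_mul, mul_zero, neg_zero, add_zero]

end WeakSol

lemma integral_mono_of_measure_le {N : ℕ} {Ω : Set (Euc N)} {lam κ : Measure (Euc N)}
    (hlam : ∀ K ⊆ Ω, IsCompact K → lam K < ⊤) (hle : κ ≤ lam) {f : Euc N → ℝ} (hf : Continuous f)
    (hfc : HasCompactSupport f) (hfΩ : tsupport f ⊆ Ω) (hf₀ : ∀ x, 0 ≤ f x) :
    ∫ x, f x ∂κ ≤ ∫ x, f x ∂lam := by
  refine integral_mono_measure hle (Eventually.of_forall hf₀) ?_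
  have : IsFiniteMeasure (lam.restrict (tsupport f)) :=
    ⟨by simpa only [Measure.restrict_apply_univ] using hlam _ hfΩ hfc⟩
  obtain ⟨C, hC⟩ := hfc.exists_bound_of_continuous hf
  exact (integrableOn_iff_integrable_of_support_subset (subset_tsupport f)).1
    (Integrable.of_bound hf.aestronglyMeasurable C (Eventually.of_forall hC))

/-- A smooth function of time with values in `[0, 1]`, supported in `[-2, 2τ]`, equal to `1` on
`[0, τ]` and nonincreasing for `t > 0`. -/
def initialCutoff (τ t : ℝ) : ℝ := Real.smoothTransition (2 - t / τ) * pastCutoff t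

lemma contDiff_initialCutoff (τ : ℝ) : ContDiff ℝ ∞ (initialCutoff τ) :=
  (Real.smoothTransition.contDiff.comp (by fun_prop)).mul contDiff_pastCutoff

lemma initialCutoff_mem_Icc (τ t : ℝ) : initialCutoff τ t ∈ Icc (0 : ℝ) 1 :=
  ⟨mul_nonneg (Real.smoothTransition.nonneg _) (pastCutoff_nonneg _),
    mul_le_one₀ (Real.smoothTransition.le_one _) (pastCutoff_nonneg _) (pastCutoff_le_one _)⟩

section InitialCutoff

variable {τ t : ℝ} (hτ : 0 < τ)
include hτ

lemma initialCutoff_eq_one (ht₀ : 0 ≤ t) (ht : t ≤ τ) : initialCutoff τ t = 1 := by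
  have hle : t / τ ≤ 1 := (div_le_one hτ).2 ht
  rw [initialCutoff, pastCutoff_eq_one (by linarith),
    Real.smoothTransition.one_of_one_le (by linarith), one_mul]

lemma initialCutoff_eq_zero (ht : 2 * τ ≤ t) : initialCutoff τ t = 0 := by
  have hle : 2 ≤ t / τ := (le_div_iff₀ hτ).2 ht
  rw [initialCutoff, Real.smoothTransition.zero_of_nonpos (by linarith), zero_mul]

lemma tsupport_initialCutoff_subset : tsupport (initialCutoff τ) ⊆ Icc (-2) (2 * τ) := by
  refine closure_minimal (fun t ht => ⟨?_, ?_⟩) isClosed_Icc <;> by_contra! hlt <;> apply ht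
  · rw [initialCutoff, pastCutoff_eq_zero hlt.le, mul_zero]
  · exact initialCutoff_eq_zero hτ hlt.le

lemma hasCompactSupport_initialCutoff : HasCompactSupport (initialCutoff τ) :=
  isCompact_Icc.of_isClosed_subset (isClosed_tsupport _) (tsupport_initialCutoff_subset hτ)

lemma deriv_initialCutoff_nonpos (ht : 0 < t) : deriv (initialCutoff τ) t ≤ 0 := by
  have heq : initialCutoff τ =ᶠ[𝓝 t] fun t => Real.smoothTransition (2 - t / τ) := by
    filter_upwards [lt_mem_nhds ht] with s hs
    rw [initialCutoff, pastCutoff_eq_one (by linarith), mul_one]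
  have hanti : Antitone fun t => Real.smoothTransition (2 - t / τ) := fun _ _ h =>
    Real.smoothTransition.monotone (by gcongr)
  rw [heq.deriv_eq]
  exact hanti.deriv_nonpos

end InitialCutoff

lemma HeatLEOn.kato_of_neg_imp_pos {N : ℕ} {U : Set (SpaceTime N)} {φ u F : SpaceTime N → ℝ}
    (hle : HeatLEOn U u F) (hU : IsOpen U) (hu : Integrable u) (hF : Integrable F)
    (hsign : ∀ p, F p < 0 → 0 < u p) (h : HeatJet φ) (hφ : HasCompactSupport φ)
    (hφ₀ : ∀ p, 0 ≤ φ p) (hφU : tsupport φ ⊆ U) :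
    -(∫ p, max (u p) 0 * h.adjHeat p) ≤ ∫ p, φ p * F p := by
  have hφF : Integrable fun p => φ p * F p := by
    simpa only [mul_comm] using integrable_mul_of_hasCompactSupport h.cont hφ hF
  have hφHF : Integrable fun p => φ p * (halfHeaviside (u p) * F p) := by
    simp only [mul_left_comm (φ _)]
    exact hφF.bdd_mul (c := 1) (measurable_halfHeaviside.comp_aemeasurable
      hu.aemeasurable).aestronglyMeasurable (Eventually.of_forall fun p => by
        rw [Real.norm_of_nonneg (halfHeaviside_mem_Icc _).1]
        exact (halfHeaviside_mem_Icc _).2)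
  exact (hle.kato hU hu hF h hφ hφ₀ hφU).trans (integral_mono hφHF hφF fun p =>
    mul_le_mul_of_nonneg_left (halfHeaviside_mul_le_self (hsign p)) (hφ₀ p))

section SmallTime

variable {N : ℕ} {Ω : Set (Euc N)} {T c : ℝ} {g : ℝ → ℝ} {lam κ : Measure (Euc N)} {n : ℕ}
  {u v : SpaceTime N → ℝ}

lemma IsPenalizedSol.penalizedAbsorption_eq_indicator (hΩ : IsOpen Ω) (hne : Ωᶜ.Nonempty)
    (hg : GoodG g) (hc : 0 < c) (hv : IsPenalizedSol Ω T g κ n v) {p : SpaceTime N}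
    (hp : c < rho Ω p.1) : penalizedAbsorption Ω g n p (v p) =
      (innerCylinder Ω T c).indicator (fun p => lipApprox g n (v p)) p := by
  by_cases ht : 0 < p.2 ∧ p.2 < T
  · rw [indicator_of_mem (show p ∈ innerCylinder Ω T c from ⟨hp, ht⟩),
      penalizedAbsorption_of_mem n ((rho_pos_iff hΩ hne _).1 (hc.trans hp))]
  · rw [indicator_of_notMem fun h => ht h.2, hv.eq_zero p ht,
      (isAbsorption_penalizedAbsorption hg Ω n hΩ).map_zero]

lemma IsPenalizedSol.integrable_lipApprox (hΩ : IsOpen Ω) (hne : Ωᶜ.Nonempty) (hg : GoodG g)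
    (hc : 0 < c) (hv : IsPenalizedSol Ω T g κ n v) :
    Integrable ((innerCylinder Ω T c).indicator fun p => lipApprox g n (v p)) := by
  refine (hv.integrable_absorption.indicator (measurableSet_innerCylinder Ω T c)).congr
    (Eventually.of_forall fun p => ?_)
  by_cases hp : p ∈ innerCylinder Ω T c
  · rw [indicator_of_mem hp, hv.penalizedAbsorption_eq_indicator hΩ hne hg hc hp.1]
  · rw [indicator_of_notMem hp, indicator_of_notMem hp]

lemma exists_small_time_integral_lt {H : SpaceTime N → ℝ} (hH : Integrable H) (hT : 0 < T) {ε : ℝ}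
    (hε : 0 < ε) :
    ∃ τ > 0, 2 * τ < T ∧ ∫ p in {p : SpaceTime N | 0 < p.2 ∧ p.2 < 2 * τ}, H p < ε := by
  have hmeas (s : ℝ) : MeasurableSet {p : SpaceTime N | 0 < p.2 ∧ p.2 < s} :=
    measurable_snd measurableSet_Ioo
  have hlim₀ : Tendsto (fun m : ℕ => 2 * (1 / ((m : ℝ) + 1))) atTop (𝓝 0) := by
    simpa using (tendsto_one_div_add_atTop_nhds_zero_nat (𝕜 := ℝ)).const_mul 2
  have hlim : Tendsto
      (fun m : ℕ => ∫ p in {p : SpaceTime N | 0 < p.2 ∧ p.2 < 2 * (1 / ((m : ℝ) + 1))}, H p)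
      atTop (𝓝 (∫ _ : SpaceTime N, (0 : ℝ))) := by
    simp only [← integral_indicator (hmeas _)]
    refine tendsto_integral_of_dominated_convergence (fun p => ‖H p‖)
      (fun m => (hH.indicator (hmeas _)).aestronglyMeasurable) hH.norm
      (fun m => Eventually.of_forall fun p => norm_indicator_le_norm_self _ _)
      (Eventually.of_forall fun p => tendsto_const_nhds.congr' ?_)
    rcases lt_or_ge 0 p.2 with hp | hp
    · filter_upwards [hlim₀.eventually (gt_mem_nhds hp)] with m hm
      rw [indicator_of_notMem fun h => lt_asymm hm h.2]
    · exact Eventually.of_forall fun m => (indicator_of_notMem (fun h => hp.not_gt h.1) H).symm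
  rw [integral_zero] at hlim
  obtain ⟨m, hm, hHm⟩ :=
    ((hlim₀.eventually (gt_mem_nhds hT)).and (hlim.eventually (gt_mem_nhds hε))).exists
  exact ⟨1 / ((m : ℝ) + 1), by positivity, hm, hHm⟩

variable (hΩ : IsOpen Ω) (hne : Ωᶜ.Nonempty) (hg : GoodG g)
  (hlam : ∀ K ⊆ Ω, IsCompact K → lam K < ⊤) (hle : κ ≤ lam) (hw : WeakSol Ω T g lam u) (hc : 0 < c)
  (hv : IsPenalizedSol Ω T g κ n v)
include hΩ hne hg hlam hle hw hc hv

lemma IsPenalizedSol.heatLEOn_sub_weakSol :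
    HeatLEOn {p | c < rho Ω p.1 ∧ p.2 < T} (fun p => v p - (QT Ω T).indicator u p) fun p =>
      (innerCylinder Ω T c).indicator (fun p => g (u p)) p -
        (innerCylinder Ω T c).indicator (fun p => lipApprox g n (v p)) p := by
  intro φ h hφ hφ₀ hφU
  have hcont := (HeatJet.ofContDiff h).continuous_adjHeat
  have hsupp := (HeatJet.ofContDiff h).hasCompactSupport_adjHeat hφ
  have hφΩ : tsupport (fun x : Euc N => φ (x, 0)) ⊆ Ω := fun x hx =>
    (rho_pos_iff hΩ hne x).1 (hc.trans (hφU (tsupport_comp_subset_preimage φ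
      (f := fun x : Euc N => ((x, 0) : SpaceTime N)) (by fun_prop) hx)).1)
  have hu_weak := hw.integral_of_tsupport_subset hΩ hne hg hc h hφ hφU
  have hv_weak := hv.weak φ (.ofContDiff h) hφ fun p hp => (hφU hp).2
  have hinit := integral_mono_of_measure_le hlam hle
    (h.continuous.comp (by fun_prop : Continuous fun x : Euc N => ((x, 0) : SpaceTime N)))
    (hasCompactSupport_slice hφ 0) hφΩ fun x => hφ₀ _
  have hpen (p : SpaceTime N) : φ p * penalizedAbsorption Ω g n p (v p) =
      φ p * (innerCylinder Ω T c).indicator (fun p => lipApprox g n (v p)) p := by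
    by_cases hp : p ∈ tsupport φ
    · rw [hv.penalizedAbsorption_eq_indicator hΩ hne hg hc (hφU hp).1]
    · rw [image_eq_zero_of_notMem_tsupport hp, zero_mul, zero_mul]
  have hgu := integrable_mul_of_hasCompactSupport h.continuous hφ
    (hw.integrable_absorption hΩ hne hg hc)
  have hgv := integrable_mul_of_hasCompactSupport h.continuous hφ
    (hv.integrable_lipApprox hΩ hne hg hc)
  simp only [hpen] at hv_weak
  simp only [mul_comm (φ _), sub_mul] at hu_weak hv_weak ⊢
  rw [integral_sub (integrable_mul_of_hasCompactSupport hcont hsupp hv.integrable)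
    (integrable_mul_of_hasCompactSupport hcont hsupp (hw.integrable_indicator hΩ)),
    integral_sub hgu hgv]
  simp only [Function.comp_apply] at hinit
  linarith

lemma IsPenalizedSol.integral_lipApprox_le {φ : SpaceTime N → ℝ} (h : HeatJet φ)
    (hφ : HasCompactSupport φ) (hφ₀ : ∀ p, 0 ≤ φ p)
    (hφU : tsupport φ ⊆ {p | c < rho Ω p.1 ∧ p.2 < T}) :
    ∫ p, φ p * (innerCylinder Ω T c).indicator (fun p => lipApprox g n (v p)) p ≤
      ∫ p, (max (v p - (QT Ω T).indicator u p) 0 * h.adjHeat p +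
        φ p * (innerCylinder Ω T c).indicator (fun p => g (u p)) p) := by
  have hd : Integrable fun p => v p - (QT Ω T).indicator u p :=
    hv.integrable.sub (hw.integrable_indicator hΩ)
  have hG := hw.integrable_absorption hΩ hne hg hc
  have hGₙ := hv.integrable_lipApprox hΩ hne hg hc
  have hsign (p : SpaceTime N) (hneg : (innerCylinder Ω T c).indicator (fun p => g (u p)) p -
      (innerCylinder Ω T c).indicator (fun p => lipApprox g n (v p)) p < 0) :
      0 < v p - (QT Ω T).indicator u p := by
    by_cases hp : p ∈ innerCylinder Ω T c
    · simp only [indicator_of_mem hp,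
        indicator_of_mem (innerCylinder_subset_QT hΩ hne T hc hp)] at hneg ⊢
      by_contra! hvu
      linarith [lipApprox_monotone hg.nonneg n hg.2.1 (sub_nonpos.1 hvu),
        lipApprox_le hg.nonneg n (u p)]
    · simp [indicator_of_notMem hp] at hneg
  have hkato := (hv.heatLEOn_sub_weakSol hΩ hne hg hlam hle hw hc).kato_of_neg_imp_pos
    ((isOpen_lt continuous_const ((continuous_rho Ω).comp continuous_fst)).inter
      (isOpen_lt continuous_snd continuous_const)) hd (hG.sub hGₙ) hsign h hφ hφ₀ hφU
  have hφG := integrable_mul_of_hasCompactSupport h.cont hφ hG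
  have hφGₙ := integrable_mul_of_hasCompactSupport h.cont hφ hGₙ
  simp only [mul_comm _ (φ _)] at hφG hφGₙ
  rw [integral_add (integrable_mul_of_hasCompactSupport h.continuous_adjHeat
    (h.hasCompactSupport_adjHeat hφ) hd.pos_part) hφG]
  simp only [mul_sub] at hkato
  rw [integral_sub hφG hφGₙ] at hkato
  linarith

omit hΩ hne hlam hle hw hc in
lemma IsPenalizedSol.posPart_mul_adjHeat_add_le {τ C : ℝ} (hτ : 0 < τ) {η : Euc N → ℝ}
    (hη : ContDiff ℝ ∞ η) (hη₀₁ : ∀ x, η x ∈ Icc (0 : ℝ) 1) (hC : ∀ x, |lap η x| ≤ C)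
    {p : SpaceTime N} (hp : v p ≤ freeSol T κ p) :
    max (v p - (QT Ω T).indicator u p) 0 *
        (HeatJet.tensor hη (contDiff_initialCutoff τ)).adjHeat p +
        η p.1 * initialCutoff τ p.2 * (innerCylinder Ω T c).indicator (fun p => g (u p)) p ≤
      {p : SpaceTime N | 0 < p.2 ∧ p.2 < 2 * τ}.indicator (fun p =>
        (innerCylinder Ω T c).indicator (fun p => g (u p)) p +
          C * (freeSol T κ p + |(QT Ω T).indicator u p|)) p := by
  rw [HeatJet.adjHeat_tensor]
  have hC₀ : 0 ≤ C := (abs_nonneg _).trans (hC p.1)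
  have hcut := initialCutoff_mem_Icc τ p.2
  have hd₀ : 0 ≤ max (v p - (QT Ω T).indicator u p) 0 := le_max_right _ _
  rcases le_or_gt p.2 0 with hp₀ | hp₀
  · have hnot (Z : Set (SpaceTime N)) (hZ : Z ⊆ {p | 0 < p.2}) : p ∉ Z := fun h =>
      hp₀.not_gt (hZ h)
    rw [hv.eq_zero p fun h => hp₀.not_gt h.1, indicator_of_notMem (hnot _ fun _ h => h.2.1),
      indicator_of_notMem (hnot _ fun _ h => h.2.1), indicator_of_notMem (hnot _ fun _ h => h.1)]
    simp
  have hderiv : η p.1 * deriv (initialCutoff τ) p.2 ≤ 0 :=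
    mul_nonpos_of_nonneg_of_nonpos (hη₀₁ _).1 (deriv_initialCutoff_nonpos hτ hp₀)
  rcases lt_or_ge p.2 (2 * τ) with hpτ | hpτ
  · rw [indicator_of_mem (show p ∈ {p : SpaceTime N | 0 < p.2 ∧ p.2 < 2 * τ} from ⟨hp₀, hpτ⟩)]
    have hd : max (v p - (QT Ω T).indicator u p) 0 ≤
        freeSol T κ p + |(QT Ω T).indicator u p| := by
      have hneg := neg_abs_le ((QT Ω T).indicator u p)
      exact max_le (by linarith) (add_nonneg ((hv.nonneg p).trans hp) (abs_nonneg _))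
    have hlap : lap η p.1 * initialCutoff τ p.2 ≤ C :=
      (mul_le_mul_of_nonneg_right ((le_abs_self _).trans (hC _)) hcut.1).trans
        (mul_le_of_le_one_right hC₀ hcut.2)
    have hG : 0 ≤ (innerCylinder Ω T c).indicator (fun p => g (u p)) p :=
      indicator_nonneg (fun p _ => hg.nonneg _) p
    have hφG := mul_le_of_le_one_left hG (mul_le_one₀ (hη₀₁ p.1).2 hcut.1 hcut.2)
    nlinarith [mul_le_mul_of_nonneg_left hd hC₀,
      mul_le_mul_of_nonneg_left (add_le_add hderiv hlap) hd₀]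
  · rw [indicator_of_notMem (show p ∉ {p : SpaceTime N | 0 < p.2 ∧ p.2 < 2 * τ} from
      fun h => hpτ.not_gt h.2), initialCutoff_eq_zero hτ hpτ]
    simp only [mul_zero, zero_mul, add_zero]
    exact mul_nonpos_of_nonneg_of_nonpos hd₀ hderiv

omit hΩ hne hlam hle hw hc hv in
lemma mul_indicator_QT_le_mul_initialCutoff {τ : ℝ} (hτ : 0 < τ) (hτT : τ < T) {η : Euc N → ℝ}
    (hη₀ : ∀ x, 0 ≤ η x) (hηρ : ∀ x ∈ tsupport η, c < rho Ω x) (p : SpaceTime N) :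
    η p.1 * (QT Ω τ).indicator (fun p => lipApprox g n (v p)) p ≤
      η p.1 * initialCutoff τ p.2 *
        (innerCylinder Ω T c).indicator (fun p => lipApprox g n (v p)) p := by
  have hrhs : 0 ≤ η p.1 * initialCutoff τ p.2 *
      (innerCylinder Ω T c).indicator (fun p => lipApprox g n (v p)) p :=
    mul_nonneg (mul_nonneg (hη₀ _) (initialCutoff_mem_Icc _ _).1)
      (indicator_nonneg (fun _ _ => lipApprox_nonneg hg.nonneg _ _) _)
  by_cases hp : p ∈ QT Ω τ ∧ η p.1 ≠ 0
  · rw [indicator_of_mem hp.1, indicator_of_mem (show p ∈ innerCylinder Ω T c from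
      ⟨hηρ _ (subset_tsupport _ hp.2), hp.1.2.1, hp.1.2.2.trans hτT⟩),
      initialCutoff_eq_one hτ hp.1.2.1.le hp.1.2.2.le, mul_one]
  · rw [not_and_or, not_not] at hp
    rcases hp with hp | hp
    · rwa [indicator_of_notMem hp, mul_zero]
    · simpa only [hp, zero_mul] using hrhs

end SmallTime

theorem exists_integral_lipApprox_le {N : ℕ} {Ω : Set (Euc N)} {T : ℝ} {g : ℝ → ℝ}
    {lam κ : Measure (Euc N)} [IsFiniteMeasure κ] {u : SpaceTime N → ℝ} (hΩ : IsOpen Ω)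
    (hne : Ωᶜ.Nonempty) (hg : GoodG g) (hT : 0 < T) (hlam : ∀ K ⊆ Ω, IsCompact K → lam K < ⊤)
    (hle : κ ≤ lam) (hw : WeakSol Ω T g lam u) {η : Euc N → ℝ} (hη : ContDiff ℝ ∞ η)
    (hηc : HasCompactSupport η) (hηΩ : tsupport η ⊆ Ω) (hη₀₁ : ∀ x, η x ∈ Icc (0 : ℝ) 1) {ε : ℝ}
    (hε : 0 < ε) :
    ∃ τ > 0, τ < T ∧ ∀ (n : ℕ) (v : SpaceTime N → ℝ), IsPenalizedSol Ω T g κ n v →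
      ∫ p, η p.1 * (QT Ω τ).indicator (fun p => lipApprox g n (v p)) p ≤ ε := by
  obtain ⟨c, hc, hηρ⟩ := exists_pos_forall_lt_rho hΩ hne hηc.isCompact hηΩ
  obtain ⟨C, hC⟩ := (hasCompactSupport_lap hηc).exists_bound_of_continuous (continuous_lap hη)
  have hG := hw.integrable_absorption hΩ hne hg hc
  have hH := hG.add (((isAbsorptionSol_freeSol T κ).integrable.add
    (hw.integrable_indicator hΩ).abs).const_mul C)
  obtain ⟨τ, hτ, hτT, hsmall⟩ := exists_small_time_integral_lt hH hT hε
  refine ⟨τ, hτ, by linarith, fun n v hv => ?_⟩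
  have hmeas : MeasurableSet {p : SpaceTime N | 0 < p.2 ∧ p.2 < 2 * τ} :=
    measurable_snd measurableSet_Ioo
  set h := HeatJet.tensor hη (contDiff_initialCutoff τ)
  have hφ : HasCompactSupport fun p : SpaceTime N => η p.1 * initialCutoff τ p.2 :=
    hasCompactSupport_tensor hηc (hasCompactSupport_initialCutoff hτ)
  have hφ₀ (p : SpaceTime N) : 0 ≤ η p.1 * initialCutoff τ p.2 :=
    mul_nonneg (hη₀₁ _).1 (initialCutoff_mem_Icc _ _).1
  have hφU : tsupport (fun p : SpaceTime N => η p.1 * initialCutoff τ p.2) ⊆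
      {p | c < rho Ω p.1 ∧ p.2 < T} := fun p hp => by
    obtain ⟨hp₁, hp₂⟩ := tsupport_tensor_subset _ _ hp
    exact ⟨hηρ _ hp₁, (tsupport_initialCutoff_subset hτ hp₂).2.trans_lt hτT⟩
  have hφv := integrable_mul_of_hasCompactSupport h.cont hφ (hv.integrable_lipApprox hΩ hne hg hc)
  have hφG := integrable_mul_of_hasCompactSupport h.cont hφ hG
  have hdadj := integrable_mul_of_hasCompactSupport h.continuous_adjHeat
    (h.hasCompactSupport_adjHeat hφ) (hv.integrable.sub (hw.integrable_indicator hΩ)).pos_part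
  simp only [mul_comm _ (η _ * _)] at hφv hφG
  calc ∫ p, η p.1 * (QT Ω τ).indicator (fun p => lipApprox g n (v p)) p
      ≤ ∫ p, η p.1 * initialCutoff τ p.2 *
          (innerCylinder Ω T c).indicator (fun p => lipApprox g n (v p)) p := by
        exact integral_mono_of_nonneg (Eventually.of_forall fun p => mul_nonneg (hη₀₁ _).1
          (indicator_nonneg (fun p _ => lipApprox_nonneg hg.nonneg _ _) _)) hφv
          (Eventually.of_forall fun p => mul_indicator_QT_le_mul_initialCutoff hg hτ
            (by linarith) (fun x => (hη₀₁ x).1) hηρ p)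
    _ ≤ _ := hv.integral_lipApprox_le hΩ hne hg hlam hle hw hc h hφ hφ₀ hφU
    _ ≤ _ := integral_mono_ae (hdadj.add hφG) (hH.indicator hmeas) <| by
        filter_upwards [hv.ae_le_freeSol hΩ hg] with p hp
        exact hv.posPart_mul_adjHeat_add_le hg hτ hη hη₀₁ hC hp
    _ ≤ ε := by
        rw [integral_indicator hmeas]
        exact hsmall.le

/-! ### Bounds on the heat potential -/

section HeatBounds

variable {N : ℕ} {t : ℝ}

lemma rpow_mul_exp_neg_le {a x : ℝ} (ha : 0 ≤ a) (hx : 0 ≤ x) :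
    x ^ a * Real.exp (-x) ≤ (a + 1) ^ a := by
  have hxa : x ≤ (a + 1) * Real.exp (x / (a + 1)) :=
    (div_le_iff₀' (by positivity)).1 (by linarith [Real.add_one_le_exp (x / (a + 1))])
  have hexp : x / (a + 1) * a ≤ x := by
    rw [div_mul_eq_mul_div, div_le_iff₀ (by positivity)]
    nlinarith
  calc x ^ a * Real.exp (-x)
      ≤ ((a + 1) * Real.exp (x / (a + 1))) ^ a * Real.exp (-x) := by gcongr
    _ = (a + 1) ^ a * Real.exp (x / (a + 1) * a - x) := by
        rw [Real.mul_rpow (by positivity) (by positivity), ← Real.exp_mul, mul_assoc,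
          ← Real.exp_add, sub_eq_add_neg]
    _ ≤ (a + 1) ^ a := mul_le_of_le_one_right (by positivity)
        (Real.exp_le_one_iff.2 (sub_nonpos.2 hexp))

lemma heatKernel_le_of_le_norm {δ : ℝ} (hδ : 0 < δ) {z : Euc N} (hz : δ ≤ ‖z‖) (ht : 0 < t) :
    heatKernel z t ≤ (N / 2 + 1) ^ ((N : ℝ) / 2) * (Real.pi * δ ^ 2) ^ (-(N : ℝ) / 2) := by
  have hx : 0 < δ ^ 2 / (4 * t) := by positivity
  have hbase : 4 * Real.pi * t = (δ ^ 2 / (4 * t))⁻¹ * (Real.pi * δ ^ 2) := by field_simp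
  have hpow : (4 * Real.pi * t) ^ (-(N : ℝ) / 2) =
      (δ ^ 2 / (4 * t)) ^ ((N : ℝ) / 2) * (Real.pi * δ ^ 2) ^ (-(N : ℝ) / 2) := by
    rw [hbase, Real.mul_rpow (by positivity) (by positivity), neg_div,
      Real.rpow_neg (by positivity), Real.inv_rpow hx.le, inv_inv]
  have hexp : -(1 / (4 * t)) * ‖z‖ ^ 2 ≤ -(δ ^ 2 / (4 * t)) := by
    rw [neg_mul, one_div_mul_eq_div, neg_le_neg_iff]
    gcongr
  calc heatKernel z t
      ≤ (4 * Real.pi * t) ^ (-(N : ℝ) / 2) * Real.exp (-(δ ^ 2 / (4 * t))) := by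
        unfold heatKernel
        gcongr
    _ = (δ ^ 2 / (4 * t)) ^ ((N : ℝ) / 2) * Real.exp (-(δ ^ 2 / (4 * t))) *
          (Real.pi * δ ^ 2) ^ (-(N : ℝ) / 2) := by rw [hpow, mul_right_comm]
    _ ≤ _ := by
        gcongr
        exact rpow_mul_exp_neg_le (by positivity) hx.le

lemma heatKernel_le_of_le_time {τ : ℝ} (hτ : 0 < τ) (z : Euc N) (ht : τ ≤ t) :
    heatKernel z t ≤ (4 * Real.pi * τ) ^ (-(N : ℝ) / 2) := by
  have ht₀ : 0 < t := hτ.trans_le ht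
  have hexp : Real.exp (-(1 / (4 * t)) * ‖z‖ ^ 2) ≤ 1 :=
    Real.exp_le_one_iff.2 (mul_nonpos_of_nonpos_of_nonneg (by simpa using ht₀.le) (by positivity))
  refine (mul_le_of_le_one_right (by positivity) hexp).trans ?_
  exact Real.rpow_le_rpow_of_nonpos (by positivity) (by gcongr)
    (div_nonpos_of_nonpos_of_nonneg (by simp) zero_le_two)

variable {T : ℝ} {κ : Measure (Euc N)} [IsFiniteMeasure κ] {C : Set (Euc N)}

lemma freeSol_le (hC : κ Cᶜ = 0) {B : ℝ} (hB : 0 ≤ B) {p : SpaceTime N}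
    (hp : 0 < p.2 → ∀ y ∈ C, heatKernel (p.1 - y) p.2 ≤ B) :
    freeSol T κ p ≤ B * κ.real univ := by
  have hkernel : ∀ᵐ y ∂κ, ENNReal.ofReal (dampedKernel 0 T (p - (y, 0))) ≤ ENNReal.ofReal B := by
    filter_upwards [show ∀ᵐ y ∂κ, y ∈ C from hC] with y hy
    refine ENNReal.ofReal_le_ofReal ?_
    unfold dampedKernel
    split_ifs with hpt
    · simp only [Prod.snd_sub, sub_zero] at hpt
      simpa using hp hpt.1 y hy
    · exact hB
  have hmeas : Measurable fun q : SpaceTime N => ENNReal.ofReal (dampedKernel 0 T (p - q)) :=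
    ((measurable_dampedKernel 0 T).comp (measurable_const.sub measurable_id)).ennreal_ofReal
  have hle : {p : SpaceTime N | p.2 < T}.indicator (dampedPotential 0 T (initialLift κ)) p ≤
      ENNReal.ofReal B * κ univ := by
    refine (indicator_le_self _ _ _).trans ?_
    rw [dampedPotential, initialLift, lintegral_map hmeas measurable_prodMk_zero,
      ← lintegral_const]
    exact lintegral_mono_ae hkernel
  rw [← ENNReal.toReal_ofReal hB, measureReal_def, ← ENNReal.toReal_mul]
  exact ENNReal.toReal_mono (ENNReal.mul_ne_top ENNReal.ofReal_ne_top (measure_ne_top κ univ)) hle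

lemma exists_bound_freeSol (T : ℝ) (hC : κ Cᶜ = 0) {δ τ : ℝ} (hδ : 0 < δ) (hτ : 0 < τ) :
    ∃ B, ∀ p, p ∉ Metric.cthickening δ C ×ˢ Ioo 0 τ → freeSol T κ p ≤ B := by
  set B := max ((N / 2 + 1) ^ ((N : ℝ) / 2) * (Real.pi * δ ^ 2) ^ (-(N : ℝ) / 2))
    ((4 * Real.pi * τ) ^ (-(N : ℝ) / 2))
  refine ⟨B * κ.real univ, fun p hp => freeSol_le hC (by positivity) fun ht y hy => ?_⟩
  rcases lt_or_ge p.2 τ with hlt | hge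
  · refine (heatKernel_le_of_le_norm hδ (not_lt.1 fun hlt' => hp ⟨?_, ht, hlt⟩) ht).trans
      (le_max_left _ _)
    exact Metric.mem_cthickening_of_dist_le _ y _ _ hy (by simpa only [dist_eq_norm] using hlt'.le)
  · exact (heatKernel_le_of_le_time hτ _ hge).trans (le_max_right _ _)

end HeatBounds

/-! ### Limits of the penalised problems -/

section L1Limit

variable {X : Type*} [MeasurableSpace X] {m : Measure X} {f : ℕ → X → ℝ} {F : X → ℝ}

lemma integrable_of_tendsto_of_integral_le {M : ℝ} (hf : ∀ n, Integrable (f n) m)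
    (hf₀ : ∀ n x, 0 ≤ f n x) (hlim : ∀ᵐ x ∂m, Tendsto (fun n => f n x) atTop (𝓝 (F x)))
    (hM : ∀ n, ∫ x, f n x ∂m ≤ M) : Integrable F m := by
  have hF := aestronglyMeasurable_of_tendsto_ae atTop (fun n => (hf n).aestronglyMeasurable) hlim
  have hnorm (n : ℕ) : eLpNorm (f n) 1 m ≤ ENNReal.ofReal M := by
    rw [eLpNorm_one_eq_lintegral_enorm, ← ofReal_integral_norm_eq_lintegral_enorm (hf n)]
    simp only [Real.norm_of_nonneg (hf₀ n _)]
    exact ENNReal.ofReal_le_ofReal (hM n)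
  refine memLp_one_iff_integrable.1 ⟨hF, (Lp.eLpNorm_lim_le_liminf_eLpNorm
    (fun n => (hf n).aestronglyMeasurable) F hlim).trans_lt ?_⟩
  exact (liminf_le_of_le (by isBoundedDefault) fun b hb =>
    hb.exists.elim fun n hn => hn.trans (hnorm n)).trans_lt ENNReal.ofReal_lt_top

lemma tendsto_integral_max_sub_indicator {A : Set X} {D : X → ℝ} (hA : MeasurableSet A)
    (hf : ∀ n, Integrable (f n) m) (hf₀ : ∀ n x, 0 ≤ f n x) (hF : Integrable F m)
    (hF₀ : ∀ᵐ x ∂m, 0 ≤ F x) (hlim : ∀ᵐ x ∂m, Tendsto (fun n => f n x) atTop (𝓝 (F x)))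
    (hD : Integrable D m) (hfD : ∀ n, ∀ᵐ x ∂m, x ∉ A → f n x ≤ D x) :
    Tendsto (fun n => ∫ x, max (|f n x - F x| - A.indicator (f n) x) 0 ∂m) atTop (𝓝 0) := by
  rw [show (𝓝 (0 : ℝ)) = 𝓝 (∫ _, (0 : ℝ) ∂m) by rw [integral_zero]]
  refine tendsto_integral_of_dominated_convergence (fun x => |D x| + F x)
    (fun n => ((((hf n).sub hF).abs.sub ((hf n).indicator hA)).pos_part).aestronglyMeasurable)
    (hD.abs.add hF) (fun n => ?_) ?_
  · filter_upwards [hF₀, hfD n] with x hFx hDx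
    have hdiff : |f n x - F x| ≤ f n x + F x := abs_le.2 ⟨by linarith [hf₀ n x], by linarith⟩
    rw [Real.norm_of_nonneg (le_max_right _ _)]
    refine max_le ?_ (by positivity)
    by_cases hx : x ∈ A
    · rw [indicator_of_mem hx]
      linarith [abs_nonneg (D x)]
    · rw [indicator_of_notMem hx]
      linarith [hDx hx, le_abs_self (D x)]
  · filter_upwards [hlim] with x hx
    refine squeeze_zero (fun n => le_max_right _ _) (fun n => max_le (sub_le_self _
      (indicator_nonneg (fun x _ => hf₀ n x) x)) (abs_nonneg _)) ?_
    simpa using (hx.sub_const (F x)).abs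

/-- Vitali-type convergence for nonnegative functions: it is enough that they be dominated off sets
which carry little mass of each of them. -/
lemma tendsto_integral_abs_sub_of_dominated_off (hf : ∀ n, Integrable (f n) m)
    (hf₀ : ∀ n x, 0 ≤ f n x) (hlim : ∀ᵐ x ∂m, Tendsto (fun n => f n x) atTop (𝓝 (F x)))
    (hdom : ∀ ε > 0, ∃ (A : Set X) (D : X → ℝ), MeasurableSet A ∧ Integrable D m ∧
      (∀ n, ∫ x in A, f n x ∂m ≤ ε) ∧ ∀ n, ∀ᵐ x ∂m, x ∉ A → f n x ≤ D x) :
    Integrable F m ∧ Tendsto (fun n => ∫ x, |f n x - F x| ∂m) atTop (𝓝 0) := by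
  have hF : Integrable F m := by
    obtain ⟨A, D, hA, hD, hfA, hfD⟩ := hdom 1 one_pos
    refine integrable_of_tendsto_of_integral_le (M := 1 + ∫ x, |D x| ∂m) hf hf₀ hlim fun n => ?_
    refine le_trans ?_ (add_le_add_left (hfA n) _)
    rw [← integral_indicator hA, ← integral_add ((hf n).indicator hA) hD.abs]
    refine integral_mono_ae (hf n) (((hf n).indicator hA).add hD.abs) ?_
    filter_upwards [hfD n] with x hx
    by_cases hxA : x ∈ A
    · simp [indicator_of_mem hxA]
    · simpa [indicator_of_notMem hxA] using (hx hxA).trans (le_abs_self _)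
  have hF₀ : ∀ᵐ x ∂m, 0 ≤ F x := hlim.mono fun x hx => ge_of_tendsto' hx fun n => hf₀ n x
  refine ⟨hF, Metric.tendsto_atTop'.2 fun ε hε => ?_⟩
  obtain ⟨A, D, hA, hD, hfA, hfD⟩ := hdom (ε / 2) (half_pos hε)
  obtain ⟨n₀, hn₀⟩ := eventually_atTop.1 ((tendsto_integral_max_sub_indicator hA hf hf₀ hF hF₀ hlim
    hD hfD).eventually (gt_mem_nhds (half_pos hε)))
  refine ⟨n₀, fun n hn => ?_⟩
  have hfA_int := (hf n).indicator hA
  have hrem : Integrable (fun x => max (|f n x - F x| - A.indicator (f n) x) 0) m :=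
    (((hf n).sub hF).abs.sub hfA_int).pos_part
  rw [Real.dist_0_eq_abs, abs_of_nonneg (integral_nonneg fun x => abs_nonneg _)]
  calc ∫ x, |f n x - F x| ∂m
      ≤ ∫ x, A.indicator (f n) x + max (|f n x - F x| - A.indicator (f n) x) 0 ∂m :=
        integral_mono ((hf n).sub hF).abs (hfA_int.add hrem)
          fun x => sub_le_iff_le_add'.1 (le_max_left _ _)
    _ = (∫ x in A, f n x ∂m) + ∫ x, max (|f n x - F x| - A.indicator (f n) x) 0 ∂m := by
        rw [integral_add hfA_int hrem, integral_indicator hA]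
    _ < ε := by linarith [hfA n, hn₀ n hn.le]

end L1Limit

lemma exists_contDiff_cutoff {E : Type*} [NormedAddCommGroup E] [NormedSpace ℝ E]
    [FiniteDimensional ℝ E] {K U : Set E} (hK : IsCompact K) (hU : IsOpen U) (hKU : K ⊆ U) :
    ∃ δ > 0, ∃ η : E → ℝ, ContDiff ℝ ∞ η ∧ HasCompactSupport η ∧ tsupport η ⊆ U ∧
      (∀ x, η x ∈ Icc (0 : ℝ) 1) ∧ ∀ x ∈ Metric.cthickening δ K, η x = 1 := by
  obtain ⟨δ, hδ, hδU⟩ := hK.exists_cthickening_subset_open hU hKU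
  obtain ⟨η, hη, hη₀₁, hη_supp, hη_one⟩ := exists_contMDiff_support_eq_eq_one_iff (n := ⊤)
    (modelWithCornersSelf ℝ E) (Metric.isOpen_thickening (δ := δ) (E := K))
    (Metric.isClosed_cthickening (δ := δ / 2))
    (Metric.cthickening_subset_thickening' hδ (half_lt_self hδ) K)
  have hη_tsupport : tsupport η ⊆ Metric.cthickening δ K := by
    rw [tsupport, hη_supp]
    exact Metric.closure_thickening_subset_cthickening δ K
  exact ⟨δ / 2, half_pos hδ, η, contMDiff_iff_contDiff.1 hη,
    hK.cthickening.of_isClosed_subset (isClosed_tsupport η) hη_tsupport, hη_tsupport.trans hδU,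
    fun x => hη₀₁ ⟨x, rfl⟩, fun x hx => (hη_one x).1 hx⟩

lemma tendsto_lipApprox_of_tendsto {g : ℝ → ℝ} (hg : GoodG g) {σ : ℕ → ℝ} {s : ℝ}
    (hle : ∀ n, s ≤ σ n) (hσ : Tendsto σ atTop (𝓝 s)) :
    Tendsto (fun n => lipApprox g n (σ n)) atTop (𝓝 (g s)) :=
  tendsto_of_tendsto_of_tendsto_of_le_of_le
    (tendsto_lipApprox hg.nonneg hg.2.1 hg.1.continuousAt) ((hg.1.tendsto s).comp hσ)
    (fun n => lipApprox_monotone hg.nonneg n hg.2.1 (hle n))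
    (fun n => lipApprox_le hg.nonneg n (σ n))

section PenalizedLimit

variable {N : ℕ}

/-- The penalised solutions `u n` converge to `w` from above, and so do the absorption terms inside
`Ω`, in both cases in `L¹`. -/
structure IsPenalizedLimit (Ω : Set (Euc N)) (T : ℝ) (g : ℝ → ℝ) (κ : Measure (Euc N))
    (u : ℕ → SpaceTime N → ℝ) (w : SpaceTime N → ℝ) : Prop where
  sol : ∀ n, IsPenalizedSol Ω T g κ n (u n)
  nonneg : ∀ p, 0 ≤ w p
  le : ∀ n p, w p ≤ u n p
  integrable : Integrable w
  tendsto : Tendsto (fun n => ∫ p, |u n p - w p|) atTop (𝓝 0)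
  integrable_absorption : Integrable ((QT Ω T).indicator fun p => g (w p))
  tendsto_absorption : Tendsto (fun n => ∫ p,
    |(QT Ω T).indicator (fun p => lipApprox g n (u n p)) p -
      (QT Ω T).indicator (fun p => g (w p)) p|) atTop (𝓝 0)

variable {Ω : Set (Euc N)} {T : ℝ} {g : ℝ → ℝ} {lam κ : Measure (Euc N)} {n : ℕ}
  {u : ℕ → SpaceTime N → ℝ} {v w : SpaceTime N → ℝ}

lemma IsPenalizedLimit.eq_zero (hw : IsPenalizedLimit Ω T g κ u w) {p : SpaceTime N}
    (hp : ¬(0 < p.2 ∧ p.2 < T)) : w p = 0 :=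
  le_antisymm ((hw.le 0 p).trans_eq ((hw.sol 0).eq_zero p hp)) (hw.nonneg p)

lemma exists_isPenalizedSol (hΩ : IsOpen Ω) (hg : GoodG g) (hT : 0 < T) (κ : Measure (Euc N))
    [IsFiniteMeasure κ] (n : ℕ) : ∃ v, IsPenalizedSol Ω T g κ n v :=
  (isAbsorption_penalizedAbsorption hg Ω n hΩ).exists_isAbsorptionSol n.cast_nonneg hT κ

lemma IsPenalizedSol.integrable_indicator_lipApprox (hΩ : IsOpen Ω)
    (hv : IsPenalizedSol Ω T g κ n v) :
    Integrable ((QT Ω T).indicator fun p => lipApprox g n (v p)) := by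
  rw [← indicator_congr fun p (hp : p ∈ QT Ω T) =>
    congrFun (penalizedAbsorption_of_mem (g := g) n hp.1) (v p)]
  exact hv.integrable_absorption.indicator (measurableSet_QT hΩ T)

lemma setIntegral_lipApprox_le_of_subset (hΩ : IsOpen Ω) (hg : GoodG g) {A : Set (SpaceTime N)}
    (hv : IsPenalizedSol Ω T g κ n v) {τ : ℝ} (hτT : τ ≤ T) {η : Euc N → ℝ} (hη : Continuous η)
    (hη₀₁ : ∀ x, η x ∈ Icc (0 : ℝ) 1) (hA : MeasurableSet A) (hAτ : A ⊆ QT Ω τ)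
    (hηA : ∀ p ∈ A, η p.1 = 1) :
    ∫ p in A, (QT Ω T).indicator (fun p => lipApprox g n (v p)) p ≤
      ∫ p, η p.1 * (QT Ω τ).indicator (fun p => lipApprox g n (v p)) p := by
  have hsub : QT Ω τ ⊆ QT Ω T := prod_mono le_rfl (Ioo_subset_Ioo le_rfl hτT)
  have hint := hv.integrable_indicator_lipApprox hΩ
  have hintτ : Integrable ((QT Ω τ).indicator fun p => lipApprox g n (v p)) := by
    have := hint.indicator (measurableSet_QT hΩ τ)
    rwa [indicator_indicator, inter_eq_left.2 hsub] at this
  rw [← integral_indicator hA]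
  refine integral_mono (hint.indicator hA) (hintτ.bdd_mul (c := 1)
    (hη.comp continuous_fst).aestronglyMeasurable (Eventually.of_forall fun p => ?_)) fun p => ?_
  · rw [Real.norm_of_nonneg (hη₀₁ _).1]
    exact (hη₀₁ _).2
  · by_cases hp : p ∈ A
    · rw [indicator_of_mem hp, indicator_of_mem (hAτ hp), indicator_of_mem (hsub (hAτ hp)),
        hηA p hp, one_mul]
    · rw [indicator_of_notMem hp]
      exact mul_nonneg (hη₀₁ _).1 (indicator_nonneg (fun p _ => lipApprox_nonneg hg.nonneg _ _) _)

lemma ae_tendsto_iInf_of_isPenalizedSol (hg : GoodG g)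
    (hu : ∀ n, IsPenalizedSol Ω T g κ n (u n)) :
    ∀ᵐ p, Tendsto (fun n => u n p) atTop (𝓝 (⨅ n, u n p)) := by
  filter_upwards [ae_all_iff.2 fun n => (hu (n + 1)).ae_succ_le hg (hu n)] with p hp
  exact tendsto_atTop_ciInf (antitone_nat_of_succ_le hp)
    ⟨0, forall_mem_range.2 fun n => (hu n).nonneg p⟩

variable [IsFiniteMeasure κ]

lemma exists_lipApprox_dominated_off (hΩ : IsOpen Ω) (hne : Ωᶜ.Nonempty)
    (hb : Bornology.IsBounded Ω) (hg : GoodG g) (hT : 0 < T)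
    (hlam : ∀ K ⊆ Ω, IsCompact K → lam K < ⊤) (hle : κ ≤ lam) (hv : WeakSol Ω T g lam v)
    {C : Set (Euc N)} (hC : IsCompact C) (hCΩ : C ⊆ Ω) (hκC : κ Cᶜ = 0)
    (hu : ∀ n, IsPenalizedSol Ω T g κ n (u n)) {ε : ℝ} (hε : 0 < ε) :
    ∃ (A : Set (SpaceTime N)) (D : SpaceTime N → ℝ), MeasurableSet A ∧ Integrable D ∧
      (∀ n, ∫ p in A, (QT Ω T).indicator (fun p => lipApprox g n (u n p)) p ≤ ε) ∧
      ∀ n, ∀ᵐ p, p ∉ A → (QT Ω T).indicator (fun p => lipApprox g n (u n p)) p ≤ D p := by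
  obtain ⟨δ, hδ, η, hη, hηc, hηΩ, hη₀₁, hη_one⟩ := exists_contDiff_cutoff hC hΩ hCΩ
  obtain ⟨τ, hτ, hτT, hsmall⟩ :=
    exists_integral_lipApprox_le (κ := κ) hΩ hne hg hT hlam hle hv hη hηc hηΩ hη₀₁ hε
  obtain ⟨B, hB⟩ := exists_bound_freeSol T hκC hδ hτ
  have hvol : volume (QT Ω T) ≠ ⊤ := (hb.prod (Metric.isBounded_Ioo 0 T)).measure_lt_top.ne
  have hmeas : MeasurableSet (Metric.cthickening δ C ×ˢ Ioo 0 τ) :=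
    Metric.isClosed_cthickening.measurableSet.prod measurableSet_Ioo
  refine ⟨QT Ω τ ∩ Metric.cthickening δ C ×ˢ Ioo 0 τ, (QT Ω T).indicator fun _ => g B,
    (measurableSet_QT hΩ τ).inter hmeas,
    (integrable_indicator_iff (measurableSet_QT hΩ T)).2 (integrableOn_const hvol),
    fun n => (setIntegral_lipApprox_le_of_subset hΩ hg (hu n) hτT.le hη.continuous hη₀₁
      ((measurableSet_QT hΩ τ).inter hmeas) inter_subset_left fun p hp => hη_one _ hp.2.1).trans
      (hsmall n (u n) (hu n)), fun n => ?_⟩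
  filter_upwards [(hu n).ae_le_freeSol hΩ hg] with p hp hpA
  by_cases hpΩ : p ∈ QT Ω T
  · rw [indicator_of_mem hpΩ, indicator_of_mem hpΩ]
    exact (lipApprox_le hg.nonneg n _).trans (hg.2.1 (hp.trans (hB p fun hpC =>
      hpA ⟨⟨hpΩ.1, hpC.2⟩, hpC⟩)))
  · rw [indicator_of_notMem hpΩ, indicator_of_notMem hpΩ]

theorem exists_isPenalizedLimit (hΩ : IsOpen Ω) (hne : Ωᶜ.Nonempty) (hb : Bornology.IsBounded Ω)
    (hg : GoodG g) (hT : 0 < T) (hlam : ∀ K ⊆ Ω, IsCompact K → lam K < ⊤) (hle : κ ≤ lam)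
    (hv : WeakSol Ω T g lam v) {C : Set (Euc N)} (hC : IsCompact C) (hCΩ : C ⊆ Ω)
    (hκC : κ Cᶜ = 0) : ∃ u w, IsPenalizedLimit Ω T g κ u w := by
  choose u hu using exists_isPenalizedSol hΩ hg hT κ
  have hwu (n : ℕ) (p : SpaceTime N) : ⨅ n, u n p ≤ u n p :=
    ciInf_le ⟨0, forall_mem_range.2 fun n => (hu n).nonneg p⟩ n
  have hlim := ae_tendsto_iInf_of_isPenalizedSol hg hu
  have hsol := tendsto_integral_abs_sub_of_dominated_off (fun n => (hu n).integrable)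
    (fun n => (hu n).nonneg) hlim fun ε hε => ⟨∅, freeSol T κ, MeasurableSet.empty,
      (isAbsorptionSol_freeSol T κ).integrable, fun n => by simpa using hε.le,
      fun n => ((hu n).ae_le_freeSol hΩ hg).mono fun p hp _ => hp⟩
  have habs := tendsto_integral_abs_sub_of_dominated_off
    (F := (QT Ω T).indicator fun p => g (⨅ n, u n p))
    (fun n => (hu n).integrable_indicator_lipApprox hΩ)
    (fun n => indicator_nonneg fun p _ => lipApprox_nonneg hg.nonneg n _)
    (hlim.mono fun p hp => by
      by_cases hpΩ : p ∈ QT Ω T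
      · simpa only [indicator_of_mem hpΩ] using
          tendsto_lipApprox_of_tendsto hg (fun n => hwu n p) hp
      · simpa only [indicator_of_notMem hpΩ] using tendsto_const_nhds)
    fun ε hε => exists_lipApprox_dominated_off hΩ hne hb hg hT hlam hle hv hC hCΩ hκC hu hε
  exact ⟨u, fun p => ⨅ n, u n p, hu, fun p => le_ciInf fun n => (hu n).nonneg p, hwu, hsol.1,
    hsol.2, habs.1, habs.2⟩

end PenalizedLimit

/-! ### Vanishing outside the domain -/

section FinalCutoff

lemma exists_bound_deriv_smoothTransition : ∃ D, 0 ≤ D ∧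
    ∀ s, |deriv Real.smoothTransition s| ≤ D ∧ (1 < s → deriv Real.smoothTransition s = 0) := by
  have hcont : Continuous (deriv Real.smoothTransition) :=
    (Real.smoothTransition.contDiff (n := 1)).continuous_deriv le_rfl
  have hzero (s : ℝ) (hs : s ∉ Icc (0 : ℝ) 1) : deriv Real.smoothTransition s = 0 := by
    rcases lt_or_ge s 0 with hneg | hnonneg
    · exact ((hasDerivAt_const s (0 : ℝ)).congr_of_eventuallyEq <| by
        filter_upwards [gt_mem_nhds hneg] with r hr
        exact Real.smoothTransition.zero_of_nonpos hr.le).deriv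
    · have hs' : 1 < s := lt_of_not_ge fun hle => hs ⟨hnonneg, hle⟩
      exact ((hasDerivAt_const s (1 : ℝ)).congr_of_eventuallyEq <| by
        filter_upwards [lt_mem_nhds hs'] with r hr
        exact Real.smoothTransition.one_of_one_le hr.le).deriv
  obtain ⟨D, hD⟩ := (HasCompactSupport.intro isCompact_Icc hzero).exists_bound_of_continuous hcont
  exact ⟨D, (norm_nonneg _).trans (hD 0), fun s => ⟨hD s, fun hs => hzero s fun h => h.2.not_gt hs⟩⟩

/-- A smooth function of time with values in `[0, 1]` supported in `[-2, T - 1 / (m + 1)]` and equal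
to `1` on `[0, T - 2 / (m + 1)]`. -/
def finalCutoff (T : ℝ) (m : ℕ) (t : ℝ) : ℝ :=
  Real.smoothTransition ((m + 1) * (T - t) - 1) * pastCutoff t

variable {T t : ℝ} {m : ℕ}

lemma contDiff_finalCutoff (T : ℝ) (m : ℕ) : ContDiff ℝ ∞ (finalCutoff T m) :=
  (Real.smoothTransition.contDiff.comp (by fun_prop)).mul contDiff_pastCutoff

lemma finalCutoff_nonneg (T : ℝ) (m : ℕ) (t : ℝ) : 0 ≤ finalCutoff T m t :=
  mul_nonneg (Real.smoothTransition.nonneg _) (pastCutoff_nonneg _)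

lemma finalCutoff_le_one (T : ℝ) (m : ℕ) (t : ℝ) : finalCutoff T m t ≤ 1 :=
  mul_le_one₀ (Real.smoothTransition.le_one _) (pastCutoff_nonneg _) (pastCutoff_le_one _)

lemma finalCutoff_eq_one (ht : 0 ≤ t) (hm : 2 ≤ (m + 1) * (T - t)) : finalCutoff T m t = 1 := by
  rw [finalCutoff, pastCutoff_eq_one (by linarith), mul_one,
    Real.smoothTransition.one_of_one_le (by linarith)]

lemma tsupport_finalCutoff_subset (T : ℝ) (m : ℕ) :
    tsupport (finalCutoff T m) ⊆ Icc (-2) (T - 1 / (m + 1)) := by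
  refine closure_minimal (fun t ht => ?_) isClosed_Icc
  contrapose! ht
  rw [Function.notMem_support, finalCutoff]
  rcases lt_or_ge t (-2) with hlt | hge
  · rw [pastCutoff_eq_zero hlt.le, mul_zero]
  · have hT : T - t < 1 / ((m : ℝ) + 1) := by linarith [lt_of_not_ge fun hle => ht ⟨hge, hle⟩]
    rw [lt_div_iff₀' (by positivity)] at hT
    rw [Real.smoothTransition.zero_of_nonpos (by linarith), zero_mul]

lemma hasCompactSupport_finalCutoff (T : ℝ) (m : ℕ) : HasCompactSupport (finalCutoff T m) :=
  isCompact_Icc.of_isClosed_subset (isClosed_tsupport _) (tsupport_finalCutoff_subset T m)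

lemma lt_of_mem_tsupport_finalCutoff (ht : t ∈ tsupport (finalCutoff T m)) : t < T :=
  (tsupport_finalCutoff_subset T m ht).2.trans_lt (sub_lt_self _ (by positivity))

lemma eventually_two_lt_mul_sub (ht : t < T) :
    ∀ᶠ m : ℕ in atTop, 2 < ((m : ℝ) + 1) * (T - t) :=
  ((tendsto_natCast_atTop_atTop.atTop_add tendsto_const_nhds).atTop_mul_const
    (sub_pos.2 ht)).eventually_gt_atTop 2

lemma deriv_finalCutoff (ht : 0 < t) : deriv (finalCutoff T m) t =
    -((m + 1) * deriv Real.smoothTransition ((m + 1) * (T - t) - 1)) := by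
  have haffine : HasDerivAt (fun t => ((m : ℝ) + 1) * (T - t) - 1) ((m + 1) * -1) t :=
    (((hasDerivAt_id t).const_sub T).const_mul _).sub_const 1
  have hstep : HasDerivAt Real.smoothTransition
      (deriv Real.smoothTransition ((m + 1) * (T - t) - 1)) ((m + 1) * (T - t) - 1) :=
    ((Real.smoothTransition.contDiff (n := 1)).differentiable one_ne_zero _).hasDerivAt
  refine ((HasDerivAt.comp (h₂ := Real.smoothTransition) t hstep haffine).mul
    (hasDerivAt_pastCutoff ht)).deriv.trans ?_
  rw [pastCutoff_eq_one (by linarith)]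
  ring

lemma exists_bound_deriv_finalCutoff (T : ℝ) : ∃ D, 0 ≤ D ∧ ∀ (m : ℕ) (t : ℝ), 0 < t →
    (T - t) * |deriv (finalCutoff T m) t| ≤ D ∧
      (2 < (m + 1) * (T - t) → deriv (finalCutoff T m) t = 0) := by
  obtain ⟨D, hD₀, hD⟩ := exists_bound_deriv_smoothTransition
  refine ⟨2 * D, by positivity, fun m t ht => ?_⟩
  have hzero : 2 < (m + 1) * (T - t) → deriv (finalCutoff T m) t = 0 := fun hm => by
    rw [deriv_finalCutoff ht, (hD _).2 (by linarith), mul_zero, neg_zero]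
  refine ⟨?_, hzero⟩
  rcases lt_or_ge 2 ((m + 1) * (T - t)) with hm | hm
  · rw [hzero hm, abs_zero, mul_zero]
    positivity
  · rw [deriv_finalCutoff ht, abs_neg, abs_mul, abs_of_pos (by positivity), ← mul_assoc,
      mul_comm (T - t)]
    exact mul_le_mul hm (hD _).1 (abs_nonneg _) zero_le_two

end FinalCutoff

section Vanishing

variable {N : ℕ} {Ω : Set (Euc N)} {T : ℝ} {g : ℝ → ℝ} {κ : Measure (Euc N)} [IsFiniteMeasure κ]
  {u : ℕ → SpaceTime N → ℝ} {w φ : SpaceTime N → ℝ}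

lemma exists_forall_integral_mul_absorption_le (h : HeatJet φ) (hφ : HasCompactSupport φ)
    (hφT : ∀ p ∈ tsupport φ, p.2 < T) : ∃ M, ∀ v f, IsAbsorptionSol T κ v f →
      (∀ᵐ p, v p ≤ freeSol T κ p) → ∫ p, φ p * f p ≤ M := by
  obtain ⟨C, hC⟩ := (h.hasCompactSupport_adjHeat hφ).exists_bound_of_continuous
    h.continuous_adjHeat
  refine ⟨∫ x, φ (x, 0) ∂κ + ∫ p, freeSol T κ p * C, fun v f hv hle => ?_⟩
  rw [← hv.weak φ h hφ hφT, add_assoc, add_left_comm, le_add_iff_nonneg_right, neg_add_eq_sub,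
    sub_nonneg]
  refine integral_mono_ae (integrable_mul_of_hasCompactSupport h.continuous_adjHeat
    (h.hasCompactSupport_adjHeat hφ) hv.integrable)
    ((isAbsorptionSol_freeSol T κ).integrable.mul_const C) ?_
  filter_upwards [hle] with p hp
  have hCp := (le_abs_self _).trans (hC p)
  exact (mul_le_mul_of_nonneg_left hCp (hv.nonneg p)).trans
    (mul_le_mul_of_nonneg_right hp ((norm_nonneg _).trans (hC p)))

lemma IsPenalizedLimit.ae_mul_eq_zero (hΩ : IsOpen Ω) (hg : GoodG g)
    (hw : IsPenalizedLimit Ω T g κ u w) (h : HeatJet φ) (hφ : HasCompactSupport φ)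
    (hφT : ∀ p ∈ tsupport φ, p.2 < T) (hφ₀ : ∀ p, 0 ≤ φ p) :
    ∀ᵐ p, p.1 ∉ Ω → w p * φ p = 0 := by
  obtain ⟨M, hM⟩ := exists_forall_integral_mul_absorption_le (κ := κ) h hφ hφT
  set S : Set (SpaceTime N) := {p | p.1 ∉ Ω}
  have hS : MeasurableSet S := (hΩ.preimage continuous_fst).measurableSet.compl
  have hint : Integrable (S.indicator fun p => w p * φ p) :=
    (integrable_mul_of_hasCompactSupport h.cont hφ hw.integrable).indicator hS
  have hnonneg : ∀ p, 0 ≤ S.indicator (fun p => w p * φ p) p :=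
    indicator_nonneg fun p _ => mul_nonneg (hw.nonneg p) (hφ₀ p)
  have hbound (n : ℕ) : n * ∫ p, S.indicator (fun p => w p * φ p) p ≤ M := by
    refine le_trans ?_ (hM _ _ (hw.sol n) ((hw.sol n).ae_le_freeSol hΩ hg))
    have habs := integrable_mul_of_hasCompactSupport h.cont hφ (hw.sol n).integrable_absorption
    simp only [mul_comm _ (φ _)] at habs
    rw [← integral_const_mul]
    refine integral_mono (hint.const_mul _) habs fun p => ?_
    by_cases hp : p.1 ∈ Ω
    · rw [indicator_of_notMem (not_not.2 hp), mul_zero]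
      exact mul_nonneg (hφ₀ p) ((isAbsorption_penalizedAbsorption hg Ω n hΩ).nonneg p _)
    · rw [indicator_of_mem (show p ∈ S from hp), penalizedAbsorption_of_notMem n hp]
      dsimp only
      rw [max_eq_left ((hw.sol n).nonneg p), mul_comm (φ p), mul_assoc]
      gcongr
      exacts [hφ₀ p, hw.le n p]
  have hzero : ∫ p, S.indicator (fun p => w p * φ p) p = 0 := by
    refine (integral_nonneg hnonneg).antisymm' (not_lt.1 fun hpos => ?_)
    obtain ⟨n, hn⟩ := exists_nat_gt (M / ∫ p, S.indicator (fun p => w p * φ p) p)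
    exact ((div_lt_iff₀ hpos).1 hn).not_ge (hbound n)
  filter_upwards [(integral_eq_zero_iff_of_nonneg hnonneg hint).1 hzero] with p hp hpΩ
  rwa [indicator_of_mem (show p ∈ S from hpΩ)] at hp

lemma IsPenalizedLimit.ae_eq_zero_of_notMem (hΩ : IsOpen Ω) (hg : GoodG g)
    (hw : IsPenalizedLimit Ω T g κ u w) : ∀ᵐ p, p ∉ QT Ω T → w p = 0 := by
  have hcutoff (n m : ℕ) :
      ∀ᵐ p : SpaceTime N, p.1 ∉ Ω → w p * (spaceCutoff N n p.1 * finalCutoff T m p.2) = 0 :=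
    hw.ae_mul_eq_zero hΩ hg (HeatJet.tensor (contDiff_spaceCutoff n) (contDiff_finalCutoff T m))
      (hasCompactSupport_tensor (hasCompactSupport_spaceCutoff n)
        (hasCompactSupport_finalCutoff T m))
      (fun p hp => lt_of_mem_tsupport_finalCutoff (tsupport_tensor_subset _ _ hp).2)
      fun p => mul_nonneg (spaceCutoff_mem_Icc n _).1 (finalCutoff_nonneg T m _)
  filter_upwards [ae_all_iff.2 fun n => ae_all_iff.2 (hcutoff n)] with p hp hpΩ
  by_cases ht : 0 < p.2 ∧ p.2 < T
  · obtain ⟨n, hn⟩ := (eventually_spaceCutoff_eventuallyEq_one p.1).exists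
    obtain ⟨m, hm⟩ := (eventually_two_lt_mul_sub ht.2).exists
    simpa only [hn.eq_of_nhds, finalCutoff_eq_one ht.1.le hm.le, mul_one] using
      hp n m fun hΩp => hpΩ ⟨hΩp, ht⟩
  · exact hw.eq_zero ht

end Vanishing

/-! ### The weak equation for the limit -/

lemma HeatJet.adjHeat_mul_ofSpace {N : ℕ} {φ : SpaceTime N → ℝ} (h : HeatJet φ) {χ : Euc N → ℝ}
    (hχ : ContDiff ℝ ∞ χ) (p : SpaceTime N) : (h.mul (ofSpace hχ)).adjHeat p =
      h.adjHeat p * χ p.1 + 2 * ∑ i, h.d1 i p * fderiv ℝ χ p.1 (EuclideanSpace.single i 1) +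
        φ p * lap χ p.1 := by
  simp only [adjHeat, laplacian, mul, ofSpace, lap, mul_zero, add_zero, Finset.sum_add_distrib,
    ← Finset.sum_mul, ← Finset.mul_sum]
  ring

lemma HeatJet.adjHeat_mul_ofSpace_of_eventuallyEq_one {N : ℕ} {φ : SpaceTime N → ℝ} (h : HeatJet φ)
    {χ : Euc N → ℝ} (hχ : ContDiff ℝ ∞ χ) {p : SpaceTime N} (hp : χ =ᶠ[𝓝 p.1] fun _ => 1) :
    (h.mul (ofSpace hχ)).adjHeat p = h.adjHeat p := by
  rw [adjHeat_mul_ofSpace, hp.eq_of_nhds, lap_eq_zero_of_eventuallyEq_const hp, hp.fderiv_eq]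
  simp

lemma tendsto_integral_mul_of_hasCompactSupport {X : Type*} [TopologicalSpace X]
    [MeasurableSpace X] [OpensMeasurableSpace X] {μ : Measure X} {F : ℕ → X → ℝ} {f φ : X → ℝ}
    (hF : ∀ n, Integrable (F n) μ) (hf : Integrable f μ)
    (hlim : Tendsto (fun n => ∫ x, |F n x - f x| ∂μ) atTop (𝓝 0)) (hφc : Continuous φ)
    (hφ : HasCompactSupport φ) :
    Tendsto (fun n => ∫ x, φ x * F n x ∂μ) atTop (𝓝 (∫ x, φ x * f x ∂μ)) := by
  obtain ⟨C, hC⟩ := hφ.exists_bound_of_continuous hφc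
  exact tendsto_integral_mul_of_tendsto_integral_abs_sub hf hF hlim
    (fun _ => hφc.aestronglyMeasurable) (fun _ => hC) (Eventually.of_forall fun _ =>
      tendsto_const_nhds)

section PenalizationError

variable {N : ℕ} {Ω : Set (Euc N)} {T : ℝ} {g : ℝ → ℝ} {κ : Measure (Euc N)}
  {φ ψ : SpaceTime N → ℝ}

lemma IsPenalizedSol.abs_integral_mul_sub_le (hΩ : IsOpen Ω) (hg : GoodG g) {n : ℕ}
    {v : SpaceTime N → ℝ} (hv : IsPenalizedSol Ω T g κ n v) (hφc : Continuous φ)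
    (hφ : HasCompactSupport φ) (hψc : Continuous ψ) (hψ : HasCompactSupport ψ) (hψ₀ : ∀ p, 0 ≤ ψ p)
    (hφψ : ∀ p : SpaceTime N, p.1 ∉ Ω → p.2 ∈ Ioo 0 T → |φ p| ≤ ψ p) :
    |(∫ p, φ p * (QT Ω T).indicator (fun p => lipApprox g n (v p)) p) -
      ∫ p, φ p * penalizedAbsorption Ω g n p (v p)| ≤
      ∫ p, ψ p * penalizedAbsorption Ω g n p (v p) := by
  have hb := isAbsorption_penalizedAbsorption hg Ω n hΩ
  have hint {χ f : SpaceTime N → ℝ} (hχc : Continuous χ) (hχ : HasCompactSupport χ)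
      (hf : Integrable f) : Integrable fun p => χ p * f p := by
    simpa only [mul_comm] using integrable_mul_of_hasCompactSupport hχc hχ hf
  rw [← integral_sub (hint hφc hφ (hv.integrable_indicator_lipApprox hΩ))
    (hint hφc hφ hv.integrable_absorption)]
  rw [← Real.norm_eq_abs]
  refine norm_integral_le_of_norm_le (hint hψc hψ hv.integrable_absorption)
    (Eventually.of_forall fun p => ?_)
  rw [← mul_sub, norm_mul, Real.norm_eq_abs, Real.norm_eq_abs]
  have hb₀ := hb.nonneg p (v p)
  by_cases hp : p ∈ QT Ω T
  · rw [indicator_of_mem hp, penalizedAbsorption_of_mem n hp.1, sub_self, abs_zero, mul_zero,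
      ← penalizedAbsorption_of_mem n hp.1]
    exact mul_nonneg (hψ₀ p) hb₀
  · rw [indicator_of_notMem hp, zero_sub, abs_neg, abs_of_nonneg hb₀]
    by_cases ht : p.2 ∈ Ioo 0 T
    · exact mul_le_mul_of_nonneg_right (hφψ p (fun hx => hp ⟨hx, ht⟩) ht) hb₀
    · rw [hv.eq_zero p ht, hb.map_zero, mul_zero, mul_zero]

variable {u : ℕ → SpaceTime N → ℝ} {w : SpaceTime N → ℝ}

lemma IsPenalizedLimit.abs_weak_sub_le (hΩ : IsOpen Ω) (hw : IsPenalizedLimit Ω T g κ u w)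
    (h : HeatJet φ) (hφ : HasCompactSupport φ) (hφT : ∀ p ∈ tsupport φ, p.2 < T) {c : ℝ}
    (hc : ∀ n, |(∫ p, φ p * (QT Ω T).indicator (fun p => lipApprox g n (u n p)) p) -
      ∫ p, φ p * penalizedAbsorption Ω g n p (u n p)| ≤ c) :
    |-(∫ p, w p * h.adjHeat p) + (∫ p, φ p * (QT Ω T).indicator (fun p => g (w p)) p) -
      ∫ x, φ (x, 0) ∂κ| ≤ c := by
  have hheat := tendsto_integral_mul_of_hasCompactSupport (fun n => (hw.sol n).integrable)
    hw.integrable hw.tendsto h.continuous_adjHeat (h.hasCompactSupport_adjHeat hφ)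
  simp only [mul_comm (h.adjHeat _)] at hheat
  have habs := tendsto_integral_mul_of_hasCompactSupport
    (fun n => (hw.sol n).integrable_indicator_lipApprox hΩ) hw.integrable_absorption
    hw.tendsto_absorption h.cont hφ
  refine le_of_tendsto' ((hheat.neg.add habs).sub_const (∫ x, φ (x, 0) ∂κ)).abs fun n => ?_
  rw [← (hw.sol n).weak φ h hφ hφT, add_sub_add_left_eq_sub]
  exact hc n

lemma IsPenalizedLimit.exists_forall_abs_weak_sub_le [IsFiniteMeasure κ] (hΩ : IsOpen Ω)
    (hg : GoodG g) (hw : IsPenalizedLimit Ω T g κ u w) (k : HeatJet ψ) (hψ : HasCompactSupport ψ)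
    (hψT : ∀ p ∈ tsupport ψ, p.2 < T) (hψ₀ : ∀ p, 0 ≤ ψ p) :
    ∃ M, ∀ ε > 0, ∀ (φ : SpaceTime N → ℝ) (h : HeatJet φ), HasCompactSupport φ →
      (∀ p ∈ tsupport φ, p.2 < T) →
      (∀ p : SpaceTime N, p.1 ∉ Ω → p.2 ∈ Ioo 0 T → |φ p| ≤ ε * ψ p) →
      |-(∫ p, w p * h.adjHeat p) + (∫ p, φ p * (QT Ω T).indicator (fun p => g (w p)) p) -
        ∫ x, φ (x, 0) ∂κ| ≤ ε * M := by
  obtain ⟨M, hM⟩ := exists_forall_integral_mul_absorption_le (κ := κ) k hψ hψT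
  refine ⟨M, fun ε hε φ h hφ hφT hφψ => hw.abs_weak_sub_le hΩ h hφ hφT fun n => ?_⟩
  refine ((hw.sol n).abs_integral_mul_sub_le hΩ hg h.cont hφ (k.cont.const_mul ε) hψ.mul_left
    (fun p => mul_nonneg hε.le (hψ₀ p)) hφψ).trans ?_
  simp only [mul_assoc]
  rw [integral_const_mul]
  exact mul_le_mul_of_nonneg_left (hM _ _ (hw.sol n) ((hw.sol n).ae_le_freeSol hΩ hg)) hε.le

end PenalizationError

lemma eq_zero_of_forall_abs_le_mul {a M : ℝ} (h : ∀ ε > 0, |a| ≤ ε * M) : a = 0 := by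
  have hlim : Tendsto (fun ε => ε * M) (𝓝[>] (0 : ℝ)) (𝓝 0) :=
    (continuous_mul_const M).tendsto' 0 0 (zero_mul M) |>.mono_left nhdsWithin_le_nhds
  exact abs_nonpos_iff.1 (ge_of_tendsto hlim (eventually_mem_nhdsWithin.mono h))

section TimeCutoff

variable {N : ℕ} {Ω : Set (Euc N)} {T : ℝ} {ζ : Euc N → ℝ → ℝ}

lemma tsupport_mul_tensor_subset (ζ : Euc N → ℝ → ℝ) (θ : ℝ → ℝ) (χ : Euc N → ℝ) :
    tsupport (fun p : SpaceTime N => ζ p.1 p.2 * θ p.2 * χ p.1) ⊆ tsupport χ ×ˢ tsupport θ :=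
  closure_minimal (fun _ hp => ⟨subset_tsupport χ (right_ne_zero_of_mul hp),
    subset_tsupport θ (right_ne_zero_of_mul (left_ne_zero_of_mul hp))⟩)
    ((isClosed_tsupport χ).prod (isClosed_tsupport θ))

lemma isOpen_setOf_forall_mem_Icc_abs_lt (hζ : Continuous fun p : SpaceTime N => ζ p.1 p.2)
    (T ε : ℝ) : IsOpen {x | ∀ t ∈ Icc 0 T, |ζ x t| < ε} :=
  isOpen_iff_mem_nhds.2 fun x hx =>
    isCompact_Icc.eventually_forall_of_forall_eventually (P := fun x t => |ζ x t| < ε) fun t ht =>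
      (hζ.abs.continuousAt (x := (x, t))).eventually (gt_mem_nhds (hx t ht))

lemma TestZero.exists_cutoff (hΩ : IsOpen Ω) (hb : Bornology.IsBounded Ω)
    (hζ : TestZero Ω T ζ) {U : Set (Euc N)} (hU : IsOpen U) (hΩU : closure Ω ⊆ U) {ε : ℝ}
    (hε : 0 < ε) : ∃ χ : Euc N → ℝ, ContDiff ℝ ∞ χ ∧ HasCompactSupport χ ∧
      (∀ x, χ x ∈ Icc (0 : ℝ) 1) ∧ (∀ x ∈ Ω, χ =ᶠ[𝓝 x] fun _ => 1) ∧
      ∀ x ∈ tsupport χ, x ∈ U ∧ (x ∉ Ω → ∀ t ∈ Icc 0 T, |ζ x t| < ε) := by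
  set O : Set (Euc N) := {x | ∀ t ∈ Icc 0 T, |ζ x t| < ε}
  have hO : IsOpen O := isOpen_setOf_forall_mem_Icc_abs_lt hζ.1.1 T ε
  have hsub : closure Ω ⊆ U ∩ (Ω ∪ O) := fun x hx => by
    refine ⟨hΩU hx, or_iff_not_imp_left.2 fun hxΩ t ht => ?_⟩
    rw [hζ.2.1 x ⟨hx, by rwa [hΩ.interior_eq]⟩ t ht, abs_zero]
    exact hε
  obtain ⟨δ, hδ, χ, hχ, hχc, hχU, hχ₀₁, hχ_one⟩ :=
    exists_contDiff_cutoff hb.isCompact_closure (hU.inter (hΩ.union hO)) hsub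
  refine ⟨χ, hχ, hχc, hχ₀₁, fun x hx => ?_, fun x hx => ⟨(hχU hx).1, (hχU hx).2.resolve_left⟩⟩
  filter_upwards [Metric.isOpen_thickening.mem_nhds
    (Metric.self_subset_thickening hδ _ (subset_closure hx))] with y hy
    using hχ_one y (Metric.thickening_subset_cthickening _ _ hy)

variable {g : ℝ → ℝ} {κ : Measure (Euc N)} {u : ℕ → SpaceTime N → ℝ} {w : SpaceTime N → ℝ}
  {θ : ℝ → ℝ} {χ : Euc N → ℝ}

lemma integral_mul_adjHeat_eq_setIntegral (hΩ : IsOpen Ω) (hw : ∀ᵐ p, p ∉ QT Ω T → w p = 0)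
    (hζ : C21 ζ) (hθ : ContDiff ℝ ∞ θ) (hχ : ContDiff ℝ ∞ χ)
    (hχ_one : ∀ x ∈ Ω, χ =ᶠ[𝓝 x] fun _ => 1) :
    ∫ p, w p * (((HeatJet.ofC21 hζ).mul (HeatJet.ofTime hθ)).mul (HeatJet.ofSpace hχ)).adjHeat p =
      ∫ p in QT Ω T, w p * (heatAdj ζ p * θ p.2 + ζ p.1 p.2 * deriv θ p.2) := by
  rw [← integral_indicator (measurableSet_QT hΩ T)]
  refine integral_congr_ae ?_
  filter_upwards [hw] with p hp
  by_cases hpQ : p ∈ QT Ω T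
  · rw [indicator_of_mem hpQ, HeatJet.adjHeat_mul_ofSpace_of_eventuallyEq_one _ hχ
      (hχ_one _ hpQ.1), HeatJet.adjHeat_mul_ofTime, HeatJet.adjHeat_ofC21]
  · rw [indicator_of_notMem hpQ, hp hpQ, zero_mul]

lemma integral_mul_indicator_eq_setIntegral (hΩ : IsOpen Ω) (hχ : ∀ x ∈ Ω, χ x = 1)
    (f : SpaceTime N → ℝ) :
    ∫ p, ζ p.1 p.2 * θ p.2 * χ p.1 * (QT Ω T).indicator f p =
      ∫ p in QT Ω T, ζ p.1 p.2 * θ p.2 * f p := by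
  rw [← integral_indicator (measurableSet_QT hΩ T)]
  refine integral_congr_ae (Eventually.of_forall fun p => ?_)
  by_cases hp : p ∈ QT Ω T
  · simp only [indicator_of_mem hp, hχ _ hp.1, mul_one]
  · simp only [indicator_of_notMem hp, mul_zero]

/-- The space cutoff `χ` may be chosen so that `ζ` is at most `ε` on its support outside `Ω`, and
the penalisation charges that region by a bounded amount. -/
lemma IsPenalizedLimit.weak_of_testZero_mul [IsFiniteMeasure κ] (hΩ : IsOpen Ω)
    (hb : Bornology.IsBounded Ω) (hg : GoodG g) (hw : IsPenalizedLimit Ω T g κ u w)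
    (hκ : κ Ωᶜ = 0) (hζ : TestZero Ω T ζ) (hθ : ContDiff ℝ ∞ θ) (hθc : HasCompactSupport θ)
    (hθT : ∀ t ∈ tsupport θ, t < T) (hθ₀ : ∀ t, 0 ≤ θ t) :
    -(∫ p in QT Ω T, w p * (heatAdj ζ p * θ p.2 + ζ p.1 p.2 * deriv θ p.2)) +
      (∫ p in QT Ω T, ζ p.1 p.2 * θ p.2 * g (w p)) = ∫ x, ζ x 0 * θ 0 ∂κ := by
  obtain ⟨δ, hδ, X, hX, hXc, -, hX₀₁, hX_one⟩ :=
    exists_contDiff_cutoff hb.isCompact_closure isOpen_univ (subset_univ _)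
  obtain ⟨M, hM⟩ := hw.exists_forall_abs_weak_sub_le hΩ hg (HeatJet.tensor hX hθ)
    (hasCompactSupport_tensor hXc hθc) (fun p hp => hθT _ (tsupport_tensor_subset _ _ hp).2)
    fun p => mul_nonneg (hX₀₁ _).1 (hθ₀ _)
  refine sub_eq_zero.1 (eq_zero_of_forall_abs_le_mul (M := M) fun ε hε => ?_)
  obtain ⟨χ, hχ, hχc, hχ₀₁, hχ_one, hχ_supp⟩ := hζ.exists_cutoff hΩ hb
    Metric.isOpen_thickening (Metric.self_subset_thickening hδ _) hε
  have hχ_eq (x) (hx : x ∈ Ω) : χ x = 1 := (hχ_one x hx).eq_of_nhds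
  set φ : SpaceTime N → ℝ := fun p => ζ p.1 p.2 * θ p.2 * χ p.1
  have hφ_tsupport := tsupport_mul_tensor_subset ζ θ χ
  have hφX (p : SpaceTime N) (hp : p.1 ∉ Ω) (ht : p.2 ∈ Ioo 0 T) :
      |φ p| ≤ ε * (X p.1 * θ p.2) := by
    by_cases hχp : p.1 ∈ tsupport χ
    · obtain ⟨hpδ, hζε⟩ := hχ_supp _ hχp
      rw [hX_one _ (Metric.thickening_subset_cthickening _ _ hpδ), one_mul, abs_mul, abs_mul,
        abs_of_nonneg (hθ₀ _), abs_of_nonneg (hχ₀₁ _).1]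
      exact (mul_le_of_le_one_right (mul_nonneg (abs_nonneg _) (hθ₀ _)) (hχ₀₁ _).2).trans
        (mul_le_mul_of_nonneg_right (hζε hp _ (Ioo_subset_Icc_self ht)).le (hθ₀ _))
    · simp only [φ, image_eq_zero_of_notMem_tsupport hχp, mul_zero, abs_zero]
      exact mul_nonneg hε.le (mul_nonneg (hX₀₁ _).1 (hθ₀ _))
  have hinitial : ∫ x, φ (x, 0) ∂κ = ∫ x, ζ x 0 * θ 0 ∂κ := by
    refine integral_congr_ae ?_
    filter_upwards [mem_ae_iff.2 hκ] with x hx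
    simp only [φ, hχ_eq x hx, mul_one]
  have hφ := hM ε hε φ (((HeatJet.ofC21 hζ.1).mul (HeatJet.ofTime hθ)).mul (HeatJet.ofSpace hχ))
    ((hχc.isCompact.prod hθc.isCompact).of_isClosed_subset (isClosed_tsupport _) hφ_tsupport)
    (fun p hp => hθT _ (hφ_tsupport hp).2) hφX
  rwa [integral_mul_adjHeat_eq_setIntegral hΩ (hw.ae_eq_zero_of_notMem hΩ hg) hζ.1 hθ hχ hχ_one,
    integral_mul_indicator_eq_setIntegral hΩ hχ_eq, hinitial] at hφ

end TimeCutoff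

/-! ### Goodness of compactly concentrated minorants -/

section WeakSolution

variable {N : ℕ} {Ω : Set (Euc N)} {T : ℝ} {ζ : Euc N → ℝ → ℝ}

lemma exists_bound_on_QT (hb : Bornology.IsBounded Ω) (T : ℝ) {f : SpaceTime N → ℝ}
    (hf : Continuous f) : ∃ C, ∀ p ∈ QT Ω T, |f p| ≤ C := by
  obtain ⟨C, hC⟩ := (hb.isCompact_closure.prod (isCompact_Icc (a := 0) (b := T))
    ).exists_bound_of_continuousOn hf.continuousOn
  exact ⟨C, fun p hp => hC p ⟨subset_closure hp.1, Ioo_subset_Icc_self hp.2⟩⟩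

lemma integrableOn_QT_continuous_mul (hΩ : IsOpen Ω) (hb : Bornology.IsBounded Ω)
    {c f : SpaceTime N → ℝ} (hf : IntegrableOn f (QT Ω T)) (hc : Continuous c) :
    IntegrableOn (fun p => c p * f p) (QT Ω T) := by
  obtain ⟨C, hC⟩ := exists_bound_on_QT hb T hc
  exact hf.bdd_mul hc.aestronglyMeasurable (ae_restrict_of_forall_mem (measurableSet_QT hΩ T) hC)

lemma tendsto_setIntegral_mul_of_eventually_eq {X : Type*} [MeasurableSpace X] {μ : Measure X}
    {s : Set X} (hs : MeasurableSet s) {f c : X → ℝ} {c' : ℕ → X → ℝ} {C : ℝ}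
    (hf : IntegrableOn f s μ) (hc' : ∀ m, AEStronglyMeasurable (c' m) (μ.restrict s))
    (hC : ∀ m, ∀ x ∈ s, |c' m x| ≤ C) (hlim : ∀ x ∈ s, ∀ᶠ m in atTop, c' m x = c x) :
    Tendsto (fun m => ∫ x in s, c' m x * f x ∂μ) atTop (𝓝 (∫ x in s, c x * f x ∂μ)) := by
  refine tendsto_integral_of_dominated_convergence (fun x => C * |f x|)
    (fun m => (hc' m).mul hf.aestronglyMeasurable) (hf.abs.const_mul C)
    (fun m => ae_restrict_of_forall_mem hs fun x hx => ?_)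
    (ae_restrict_of_forall_mem hs fun x hx => tendsto_const_nhds.congr' ?_)
  · rw [norm_mul, Real.norm_eq_abs, Real.norm_eq_abs]
    exact mul_le_mul_of_nonneg_right (hC m x hx) (abs_nonneg _)
  · filter_upwards [hlim x hx] with m hm
    rw [hm]

lemma TestZero.exists_abs_le_mul_sub (hb : Bornology.IsBounded Ω) (hζ : TestZero Ω T ζ) :
    ∃ L, ∀ p ∈ QT Ω T, |ζ p.1 p.2| ≤ L * (T - p.2) := by
  obtain ⟨L, hL⟩ := (hb.isCompact_closure.prod (isCompact_Icc (a := 0) (b := T))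
    ).exists_bound_of_continuousOn hζ.1.2.2.1.continuousOn
  refine ⟨L, fun p hp => ?_⟩
  have hmean := (convex_Icc 0 T).norm_image_sub_le_of_norm_deriv_le (f := ζ p.1)
    (fun t _ => hζ.1.2.1 p.1 t) (fun t ht => hL (p.1, t) ⟨subset_closure hp.1, ht⟩)
    (right_mem_Icc.2 (hp.2.1.trans hp.2.2).le) (Ioo_subset_Icc_self hp.2)
  rwa [hζ.2.2 _ (subset_closure hp.1), sub_zero, Real.norm_eq_abs, Real.norm_eq_abs, abs_sub_comm,
    abs_of_pos (sub_pos.2 hp.2.2)] at hmean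

/-- The derivative of the cutoff is of order `1 / (T - t)`, which the vanishing of `ζ` at `t = T`
compensates. -/
lemma TestZero.exists_abs_mul_deriv_finalCutoff_le (hb : Bornology.IsBounded Ω)
    (hζ : TestZero Ω T ζ) :
    ∃ C, ∀ m, ∀ p ∈ QT Ω T, |ζ p.1 p.2 * deriv (finalCutoff T m) p.2| ≤ C := by
  obtain ⟨L, hL⟩ := hζ.exists_abs_le_mul_sub hb
  obtain ⟨D, -, hD⟩ := exists_bound_deriv_finalCutoff T
  refine ⟨|L| * D, fun m p hp => ?_⟩
  have hT : 0 ≤ T - p.2 := (sub_pos.2 hp.2.2).le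
  calc |ζ p.1 p.2 * deriv (finalCutoff T m) p.2|
      ≤ |L| * (T - p.2) * |deriv (finalCutoff T m) p.2| := by
        rw [abs_mul]
        exact mul_le_mul_of_nonneg_right ((hL p hp).trans
          (mul_le_mul_of_nonneg_right (le_abs_self L) hT)) (abs_nonneg _)
    _ = |L| * ((T - p.2) * |deriv (finalCutoff T m) p.2|) := mul_assoc _ _ _
    _ ≤ |L| * D := mul_le_mul_of_nonneg_left (hD m p.2 hp.2.1).1 (abs_nonneg L)

variable {f : SpaceTime N → ℝ} (hΩ : IsOpen Ω) (hb : Bornology.IsBounded Ω) (hζ : TestZero Ω T ζ)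
  (hf : IntegrableOn f (QT Ω T))
include hΩ hb hζ hf

lemma tendsto_setIntegral_mul_finalCutoff :
    Tendsto (fun m => ∫ p in QT Ω T, ζ p.1 p.2 * finalCutoff T m p.2 * f p) atTop
      (𝓝 (∫ p in QT Ω T, ζ p.1 p.2 * f p)) := by
  obtain ⟨C, hC⟩ := exists_bound_on_QT hb T hζ.1.1
  refine tendsto_setIntegral_mul_of_eventually_eq (C := C) (measurableSet_QT hΩ T) hf
    (fun m => (hζ.1.1.mul ((contDiff_finalCutoff T m).continuous.comp
      continuous_snd)).aestronglyMeasurable) (fun m p hp => ?_) fun p hp => ?_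
  · rw [abs_mul, abs_of_nonneg (finalCutoff_nonneg T m _)]
    exact (mul_le_of_le_one_right (abs_nonneg _) (finalCutoff_le_one T m _)).trans (hC p hp)
  · filter_upwards [eventually_two_lt_mul_sub hp.2.2] with m hm
    rw [finalCutoff_eq_one hp.2.1.le hm.le, mul_one]

lemma tendsto_setIntegral_heatAdj_mul_finalCutoff :
    Tendsto (fun m => ∫ p in QT Ω T, f p *
      (heatAdj ζ p * finalCutoff T m p.2 + ζ p.1 p.2 * deriv (finalCutoff T m) p.2)) atTop
      (𝓝 (∫ p in QT Ω T, f p * heatAdj ζ p)) := by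
  have hheat : Continuous (heatAdj ζ) := (HeatJet.ofC21 hζ.1).continuous_adjHeat
  obtain ⟨A, hA⟩ := exists_bound_on_QT hb T hheat
  obtain ⟨B, hB⟩ := hζ.exists_abs_mul_deriv_finalCutoff_le hb
  obtain ⟨D, -, hD⟩ := exists_bound_deriv_finalCutoff T
  simp only [mul_comm (f _)]
  refine tendsto_setIntegral_mul_of_eventually_eq (C := A + B) (measurableSet_QT hΩ T) hf
    (fun m => ?_) (fun m p hp => ?_) fun p hp => ?_
  · have hθ := contDiff_finalCutoff T m
    exact ((hheat.mul (hθ.continuous.comp continuous_snd)).add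
      (hζ.1.1.mul ((hθ.continuous_deriv (by simp)).comp continuous_snd))).aestronglyMeasurable
  · refine (abs_add_le _ _).trans (add_le_add ?_ (hB m p hp))
    rw [abs_mul, abs_of_nonneg (finalCutoff_nonneg T m _)]
    exact (mul_le_of_le_one_right (abs_nonneg _) (finalCutoff_le_one T m _)).trans (hA p hp)
  · filter_upwards [eventually_two_lt_mul_sub hp.2.2] with m hm
    rw [finalCutoff_eq_one hp.2.1.le hm.le, (hD m p.2 hp.2.1).2 hm, mul_one, mul_zero, add_zero]

end WeakSolution

section GoodMeasure

variable {N : ℕ} {Ω : Set (Euc N)} {T : ℝ} {g : ℝ → ℝ} {κ : Measure (Euc N)} [IsFiniteMeasure κ]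
  (hΩ : IsOpen Ω) (hb : Bornology.IsBounded Ω) (hg : GoodG g) (hT : 0 < T)
include hΩ hb hg hT

lemma IsPenalizedLimit.weakSol {u : ℕ → SpaceTime N → ℝ} {w : SpaceTime N → ℝ}
    (hw : IsPenalizedLimit Ω T g κ u w) (hκ : κ Ωᶜ = 0) : WeakSol Ω T g κ w := by
  have hwQ : IntegrableOn w (QT Ω T) := hw.integrable.integrableOn
  have hgw : IntegrableOn (fun p => g (w p)) (QT Ω T) :=
    (integrable_indicator_iff (measurableSet_QT hΩ T)).1 hw.integrable_absorption
  refine ⟨hwQ, ?_, fun ζ hζ => ?_⟩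
  · simp only [mul_comm (g _)]
    exact integrableOn_QT_continuous_mul hΩ hb hgw ((continuous_rho Ω).comp continuous_fst)
  have hcont : Continuous (heatAdj ζ) := (HeatJet.ofC21 hζ.1).continuous_adjHeat
  have hheat : IntegrableOn (fun p => w p * heatAdj ζ p) (QT Ω T) := by
    simpa only [mul_comm] using integrableOn_QT_continuous_mul hΩ hb hwQ hcont
  have hweak : -(∫ p in QT Ω T, w p * heatAdj ζ p) + (∫ p in QT Ω T, ζ p.1 p.2 * g (w p)) =
      ∫ x, ζ x 0 ∂κ := by
    refine tendsto_nhds_unique ((tendsto_setIntegral_heatAdj_mul_finalCutoff hΩ hb hζ hwQ).neg.add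
      (tendsto_setIntegral_mul_finalCutoff hΩ hb hζ hgw)) (tendsto_const_nhds.congr' ?_)
    filter_upwards [eventually_two_lt_mul_sub hT] with m hm
    rw [hw.weak_of_testZero_mul hΩ hb hg hκ hζ (contDiff_finalCutoff T m)
      (hasCompactSupport_finalCutoff T m) (fun _ => lt_of_mem_tsupport_finalCutoff)
      (finalCutoff_nonneg T m), finalCutoff_eq_one le_rfl hm.le]
    simp only [mul_one]
  rw [← hweak, ← integral_neg]
  refine Eq.trans ?_ (integral_add hheat.neg (integrableOn_QT_continuous_mul hΩ hb hgw hζ.1.1))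
  refine integral_congr_ae (Eventually.of_forall fun p => ?_)
  simp only [heatAdj]
  ring

theorem GoodMeasure.of_le_of_compl_eq_zero (hne : Ωᶜ.Nonempty) {lam : Measure (Euc N)}
    (hgood : GoodMeasure Ω T g lam) (hlam : ∀ K ⊆ Ω, IsCompact K → lam K < ⊤) (hle : κ ≤ lam)
    {C : Set (Euc N)} (hC : IsCompact C) (hCΩ : C ⊆ Ω) (hκC : κ Cᶜ = 0) :
    GoodMeasure Ω T g κ := by
  obtain ⟨v, hv⟩ := hgood
  obtain ⟨u, w, hw⟩ := exists_isPenalizedLimit hΩ hne hb hg hT hlam hle hv hC hCΩ hκC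
  exact ⟨w, hw.weakSol hΩ hb hg hT (measure_mono_null (compl_subset_compl.2 hCΩ) hκC)⟩

end GoodMeasure

/-! ### Reduced measures of restrictions -/

section ReducedMeasure

variable {N : ℕ} {Ω : Set (Euc N)} {T : ℝ} {g : ℝ → ℝ} {μ μstar ν : Measure (Euc N)}
  {E : Set (Euc N)}

/-- The points of `Ω` at distance at least `1 / (m + 1)` from its complement. -/
def innerSet (Ω : Set (Euc N)) (m : ℕ) : Set (Euc N) := {x | 1 / ((m : ℝ) + 1) ≤ rho Ω x}

lemma monotone_innerSet (Ω : Set (Euc N)) : Monotone (innerSet Ω) :=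
  fun _ n hmn x hx => show 1 / ((n : ℝ) + 1) ≤ rho Ω x from (Nat.one_div_le_one_div hmn).trans hx

lemma iUnion_innerSet (hΩ : IsOpen Ω) (hne : Ωᶜ.Nonempty) : ⋃ m, innerSet Ω m = Ω := by
  ext x
  rw [mem_iUnion, ← rho_pos_iff hΩ hne]
  exact ⟨fun ⟨m, hm⟩ => Nat.one_div_pos_of_nat.trans_le hm,
    fun hx => (exists_nat_one_div_lt hx).imp fun _ => le_of_lt⟩

lemma innerSet_subset (hΩ : IsOpen Ω) (hne : Ωᶜ.Nonempty) (m : ℕ) : innerSet Ω m ⊆ Ω :=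
  (subset_iUnion (innerSet Ω) m).trans_eq (iUnion_innerSet hΩ hne)

lemma isCompact_innerSet (hΩ : IsOpen Ω) (hne : Ωᶜ.Nonempty) (hb : Bornology.IsBounded Ω) (m : ℕ) :
    IsCompact (innerSet Ω m) :=
  Metric.isCompact_of_isClosed_isBounded (isClosed_le continuous_const (continuous_rho Ω))
    (hb.subset (innerSet_subset hΩ hne m))

lemma MemM1.mono (hμ : MemM1 Ω μ) (hle : ν ≤ μ) : MemM1 Ω ν :=
  ⟨nonpos_iff_eq_zero.1 ((hle _).trans_eq hμ.1), fun K hK hKc => (hle K).trans_lt (hμ.2.1 K hK hKc),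
    (lintegral_mono' hle le_rfl).trans_lt hμ.2.2⟩

lemma restrict_le_of_forall_restrict_inter_le {X : Type*} [MeasurableSpace X] {μ ν : Measure X}
    {E : Set X} {s : ℕ → Set X} (hs : Monotone s) (hEs : E ⊆ ⋃ m, s m)
    (hle : ∀ m, μ.restrict (E ∩ s m) ≤ ν) : μ.restrict E ≤ ν := by
  refine Measure.le_iff.2 fun A hA => ?_
  have hunion : A ∩ E = ⋃ m, A ∩ (E ∩ s m) := by
    rw [← inter_iUnion, ← inter_iUnion, inter_eq_left.2 hEs]
  rw [Measure.restrict_apply hA, hunion, Monotone.measure_iUnion fun _ _ hmn =>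
    inter_subset_inter_right _ (inter_subset_inter_right _ (hs hmn))]
  exact iSup_le fun m => by simpa only [Measure.restrict_apply hA] using hle m A

lemma IsReducedMeasure.le_restrict (hE : MeasurableSet E) (hμ : IsReducedMeasure Ω T g μ μstar)
    (hν : IsReducedMeasure Ω T g (μ.restrict E) ν) : ν ≤ μstar.restrict E := by
  have hνE : ν Eᶜ = 0 := nonpos_iff_eq_zero.1 <| (hν.2.1 Eᶜ).trans_eq <| by
    rw [Measure.restrict_apply hE.compl, compl_inter_self, measure_empty]
  rw [← Measure.restrict_eq_self_of_ae_mem (mem_ae_iff.2 hνE)]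
  exact Measure.restrict_mono le_rfl
    (hμ.2.2.2 ν hν.1 hν.2.2.1 (hν.2.1.trans Measure.restrict_le_self))

lemma IsReducedMeasure.restrict_le (hΩ : IsOpen Ω) (hne : Ωᶜ.Nonempty)
    (hb : Bornology.IsBounded Ω) (hT : 0 < T) (hg : GoodG g) (hEΩ : E ⊆ Ω)
    (hμ : IsReducedMeasure Ω T g μ μstar) (hν : IsReducedMeasure Ω T g (μ.restrict E) ν) :
    μstar.restrict E ≤ ν := by
  refine restrict_le_of_forall_restrict_inter_le (monotone_innerSet Ω)
    (hEΩ.trans_eq (iUnion_innerSet hΩ hne).symm) fun m => ?_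
  have hC := isCompact_innerSet hΩ hne hb m
  have hle : μstar.restrict (E ∩ innerSet Ω m) ≤ μstar := Measure.restrict_le_self
  have : IsFiniteMeasure (μstar.restrict (E ∩ innerSet Ω m)) := isFiniteMeasure_restrict.2
    ((measure_mono inter_subset_right).trans_lt (hμ.1.2.1 _ (innerSet_subset hΩ hne m) hC)).ne
  refine hν.2.2.2 _ (hμ.1.mono hle) ?_ (Measure.restrict_mono inter_subset_left hμ.2.1)
  refine hμ.2.2.1.of_le_of_compl_eq_zero hΩ hb hg hT hne hμ.1.2.1 hle hC
    (innerSet_subset hΩ hne m) ?_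
  rw [Measure.restrict_apply hC.measurableSet.compl, disjoint_iff_inter_eq_empty.1
    (disjoint_compl_left.mono_right inter_subset_right), measure_empty]

end ReducedMeasure

lemma nonempty_compl_of_isBounded {E : Type*} [NormedAddCommGroup E] [NormedSpace ℝ E]
    [Nontrivial E] {s : Set E} (hs : Bornology.IsBounded s) : sᶜ.Nonempty := by
  rw [nonempty_compl]
  rintro rfl
  exact NormedSpace.unbounded_univ ℝ E hs

theorem stmt_14_general {N : ℕ} (hN : 1 ≤ N) (Ω : Set (Euc N)) (hΩo : IsOpen Ω)
    (hΩb : Bornology.IsBounded Ω) (T : ℝ) (hT : 0 < T) (g : ℝ → ℝ) (hg : GoodG g)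
    (μ μstar ν : Measure (Euc N)) (E : Set (Euc N)) (hE : MeasurableSet E) (hEΩ : E ⊆ Ω)
    (hred : IsReducedMeasure Ω T g μ μstar)
    (hredE : IsReducedMeasure Ω T g (μ.restrict E) ν) :
    ν = μstar.restrict E := by
  have : Nonempty (Fin N) := ⟨⟨0, hN⟩⟩
  exact (hred.le_restrict hE hredE).antisymm
    (hred.restrict_le hΩo (nonempty_compl_of_isBounded hΩb) hΩb hT hg hEΩ hredE)

/-- **Corollary 2.19 (2).** The reduced measure of the restriction `μ⌞E` is the
restriction of the reduced measure: `(μ⌞E)* = μ*⌞E`. -/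
theorem stmt_14 {N : ℕ} (hN : 1 ≤ N) (Ω : Set (Euc N)) (hΩo : IsOpen Ω)
    (hΩc : IsConnected Ω) (hΩb : Bornology.IsBounded Ω) (T : ℝ) (hT : 0 < T)
    (g : ℝ → ℝ) (hg : GoodG g) (μ μstar ν : Measure (Euc N)) (hμ : MemM1 Ω μ)
    (E : Set (Euc N)) (hE : MeasurableSet E) (hEΩ : E ⊆ Ω)
    (hred : IsReducedMeasure Ω T g μ μstar)
    (hredE : IsReducedMeasure Ω T g (μ.restrict E) ν) :
    ν = μstar.restrict E :=
  stmt_14_general hN Ω hΩo hΩb T hT g hg μ μstar ν E hE hEΩ hred hredE
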